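/- arXiv:2512.07759 — 5 statements merged into one kernel-verified Lean document; each statement's English description precedes it below -/
import Mathlib

section
/- Let n ≥ 3 with n ≠ 4, and let f ∈ Aut(F_n). Assume: (1) there exist distinct 1 ≤ i, j ≤ n with the conjugation automorphism C_{x_i x_j} ∈ N(f); (2) there exist distinct 1 ≤ k, r ≤ n with e_{k,r}⁴ ∈ ρ(N(f)); (3) there exists Φ ∈ ρ(N(f)) with Φ ≢ I (mod 2). Then N(f) = SAut(F_n) if det(f̄) = 1, and N(f) = Aut(F_n) if det(f̄) = −1. -/
open Matrix

namespace NormalClosurePaper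

/-- The automorphism group of the free group on `n` generators. -/
abbrev FrAut (n : ℕ) := MulAut (FreeGroup (Fin n))

/-- Exponent sum of the generator `x_i` in a word of the free group. -/
def expSum {n : ℕ} (i : Fin n) : FreeGroup (Fin n) →* Multiplicative ℤ :=
  FreeGroup.lift fun j => Multiplicative.ofAdd (if j = i then (1 : ℤ) else 0)

/-- The abelianized matrix of an automorphism of the free group:
the `(i, j)` entry is the exponent sum of `x_i` in `f x_j`. -/
def mat {n : ℕ} (f : FrAut n) : Matrix (Fin n) (Fin n) ℤ :=
  Matrix.of fun i j => (expSum i (f (FreeGroup.of j))).toAdd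

lemma expSum_apply {n : ℕ} (f : FrAut n) (i : Fin n) (w : FreeGroup (Fin n)) :
    (expSum i (f w)).toAdd = ∑ k, mat f i k * (expSum k w).toAdd := by
  induction w using FreeGroup.induction_on with
  | C1 => simp
  | of j =>
      have h : (expSum i (f (FreeGroup.of j))).toAdd = mat f i j := rfl
      rw [h]
      simp [expSum, mul_ite, Finset.sum_ite_eq]
  | inv_of j ih =>
      simp only [_root_.map_inv, toAdd_inv, mul_neg, Finset.sum_neg_distrib, ih]
  | mul x y ihx ihy =>
      simp only [_root_.map_mul, toAdd_mul, mul_add, Finset.sum_add_distrib, ihx, ihy]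

lemma mat_one {n : ℕ} : mat (1 : FrAut n) = 1 := by
  ext i j
  simp [mat, expSum, Matrix.one_apply, eq_comm]

lemma mat_mul {n : ℕ} (f g : FrAut n) : mat (f * g) = mat f * mat g := by
  ext i j
  rw [Matrix.mul_apply]
  show (expSum i ((f * g) (FreeGroup.of j))).toAdd = _
  rw [show (f * g) (FreeGroup.of j) = f (g (FreeGroup.of j)) from rfl, expSum_apply]
  rfl

/-- The matrix of the induced map on the abelianization, as a monoid homomorphism. -/
def matHom (n : ℕ) : FrAut n →* Matrix (Fin n) (Fin n) ℤ where
  toFun := mat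
  map_one' := mat_one
  map_mul' := mat_mul

/-- The homomorphism `Aut(F_n) → GL_n(ℤ)` induced by abelianization. -/
def ρ (n : ℕ) : FrAut n →* GL (Fin n) ℤ := (matHom n).toHomUnits

/-- The composition of `ρ` with the determinant. -/
def detρ (n : ℕ) : FrAut n →* ℤˣ := (Matrix.GeneralLinearGroup.det).comp (ρ n)

/-- The special automorphism group `SAut(F_n)`: automorphisms whose induced matrix
has determinant `1`. -/
def SAut (n : ℕ) : Subgroup (FrAut n) := (detρ n).ker

/-- The Torelli subgroup `IA_n`, the kernel of `ρ`. -/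
def IA (n : ℕ) : Subgroup (FrAut n) := (ρ n).ker

/-- The group of inner automorphisms of the free group. -/
def Inn (n : ℕ) : Subgroup (FrAut n) := (MulAut.conj (G := FreeGroup (Fin n))).range

instance Inn_normal (n : ℕ) : (Inn n).Normal := by
  constructor
  rintro - ⟨a, rfl⟩ g
  refine ⟨g a, ?_⟩
  ext y
  simp [MulAut.conj_apply, MulAut.mul_apply, _root_.map_mul, _root_.map_inv]

/-- The outer automorphism group `Out(F_n)`. -/
abbrev OutF (n : ℕ) := FrAut n ⧸ Inn n

/-- The projection `Aut(F_n) → Out(F_n)`. -/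
def toOut (n : ℕ) : FrAut n →* OutF n := QuotientGroup.mk' (Inn n)

lemma mat_conj {n : ℕ} (g : FreeGroup (Fin n)) : mat (MulAut.conj g) = 1 := by
  rw [← mat_one (n := n)]
  ext i j
  simp only [mat, Matrix.of_apply, MulAut.conj_apply, MulAut.one_apply, _root_.map_mul,
    _root_.map_inv, toAdd_mul, toAdd_inv]
  omega

lemma ρ_conj {n : ℕ} (g : FreeGroup (Fin n)) : ρ n (MulAut.conj g) = 1 :=
  Units.ext (mat_conj g)

/-- The homomorphism `Out(F_n) → GL_n(ℤ)` induced by abelianization. -/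
def ρOut (n : ℕ) : OutF n →* GL (Fin n) ℤ :=
  QuotientGroup.lift (Inn n) (ρ n) (by rintro - ⟨g, rfl⟩; exact ρ_conj g)

/-- The composition of `ρOut` with the determinant. -/
def detρOut (n : ℕ) : OutF n →* ℤˣ := (Matrix.GeneralLinearGroup.det).comp (ρOut n)

/-- The special outer automorphism group `SOut(F_n)`. -/
def SOut (n : ℕ) : Subgroup (OutF n) := (detρOut n).ker

/-- Entrywise reduction `GL_n(ℤ) → GL_n(ℤ/ℓℤ)`. -/
def redGL (n ℓ : ℕ) : GL (Fin n) ℤ →* GL (Fin n) (ZMod ℓ) :=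
  Units.map (RingHom.mapMatrix (Int.castRingHom (ZMod ℓ))).toMonoidHom

/-- The subgroup `GΓ_n(ℓ)` of `GL_n(ℤ)` of matrices congruent to the identity mod `ℓ`. -/
def GGamma (n ℓ : ℕ) : Subgroup (GL (Fin n) ℤ) := (redGL n ℓ).ker

/-- The level `ℓ` congruence subgroup `Γ_n(ℓ)` (viewed inside `GL_n(ℤ)`): matrices with
determinant `1` that are congruent to the identity mod `ℓ`. -/
def GammaGL (n ℓ : ℕ) : Subgroup (GL (Fin n) ℤ) :=
  GGamma n ℓ ⊓ (Matrix.GeneralLinearGroup.det).ker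

/-- Reduction `SL_n(ℤ) → SL_n(ℤ/ℓℤ)`. -/
def redSL (n ℓ : ℕ) : Matrix.SpecialLinearGroup (Fin n) ℤ →*
    Matrix.SpecialLinearGroup (Fin n) (ZMod ℓ) :=
  Matrix.SpecialLinearGroup.map (Int.castRingHom (ZMod ℓ))

/-- Projection `SL_n(ℤ/ℓℤ) → PSL_n(ℤ/ℓℤ)`. -/
def projPSL (n ℓ : ℕ) : Matrix.SpecialLinearGroup (Fin n) (ZMod ℓ) →*
    Matrix.ProjectiveSpecialLinearGroup (Fin n) (ZMod ℓ) :=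
  QuotientGroup.mk' _

end NormalClosurePaper

/-- A group generated (up to enlarging) by elementary, permutation and sign elements subject to
Steinberg-type relations, together with its linear action on `ι → ℤ`. -/
structure SteinbergData (ι Γ : Type*) [DecidableEq ι] [Group Γ] where
  x : ι → ι → Γ
  P : Equiv.Perm ι →* Γ
  δ : (ι → ℤˣ) →* Γ
  φ : Γ →* Module.End ℤ (ι → ℤ)
  comm : ∀ {i j k l}, i ≠ j → k ≠ l → j ≠ k → i ≠ l → x i j * x k l = x k l * x i j
  st : ∀ {i j k}, i ≠ j → j ≠ k → i ≠ k → x i j * x j k = x j k * x i k * x i j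
  P_x : ∀ σ {i j}, i ≠ j → P σ * x i j = x (σ i) (σ j) * P σ
  δ_x : ∀ d {i j}, i ≠ j → δ d * x i j = x i j ^ ((d i * d j : ℤˣ) : ℤ) * δ d
  P_δ : ∀ σ d, P σ * δ d = δ (d ∘ σ.symm) * P σ
  weyl : ∀ {i j}, i ≠ j →
    x j i = x i j * P (Equiv.swap i j) * δ (Pi.mulSingle j (-1)) * x i j
  φ_x : ∀ {i j}, i ≠ j → ∀ v, φ (x i j) v = Function.update v i (v i + v j)
  φ_P : ∀ σ v, φ (P σ) v = v ∘ σ.symm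
  φ_δ : ∀ d v, φ (δ d) v = fun i => (d i : ℤ) * v i

namespace SteinbergData

open Function

lemma mem_of_supp {ι : Type*} {S : Set ι} {σ : Equiv.Perm ι} (hσ : ∀ i ∉ S, σ i = i) {i : ι} :
    σ i ∈ S ↔ i ∈ S := by
  constructor
  · intro h
    by_contra hi
    rw [hσ i hi] at h
    exact hi h
  · intro h
    by_contra hi
    have := hσ _ hi
    rw [σ.injective this] at hi
    exact hi h

lemma symm_supp {ι : Type*} {S : Set ι} {σ : Equiv.Perm ι} (hσ : ∀ i ∉ S, σ i = i) :
    ∀ i ∉ S, σ.symm i = i := by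
  intro i hi
  rw [Equiv.symm_apply_eq, hσ i hi]

variable {ι Γ : Type*} [DecidableEq ι] [Group Γ] (D : SteinbergData ι Γ)

/-- The subgroup generated by the standard elements supported on `S`. -/
def sub (S : Set ι) : Subgroup Γ :=
  Subgroup.closure ({g | ∃ i ∈ S, ∃ j ∈ S, i ≠ j ∧ g = D.x i j} ∪
    {g | ∃ σ : Equiv.Perm ι, (∀ i ∉ S, σ i = i) ∧ g = D.P σ} ∪
    {g | ∃ d : ι → ℤˣ, (∀ i ∉ S, d i = 1) ∧ g = D.δ d})

/-- The subgroup generated by the standard elements supported on `S` that fix the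
`s`-th basis vector. -/
def fix (s : ι) (S : Set ι) : Subgroup Γ :=
  Subgroup.closure ({g | ∃ i ∈ S, ∃ j ∈ S, i ≠ j ∧ j ≠ s ∧ g = D.x i j} ∪
    {g | ∃ σ : Equiv.Perm ι, (∀ i ∉ S, σ i = i) ∧ σ s = s ∧ g = D.P σ} ∪
    {g | ∃ d : ι → ℤˣ, (∀ i ∉ S, d i = 1) ∧ d s = 1 ∧ g = D.δ d})

variable {D} {s : ι} {S : Set ι}

lemma x_mem_sub {i j : ι} (hi : i ∈ S) (hj : j ∈ S) (hij : i ≠ j) : D.x i j ∈ D.sub S :=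
  Subgroup.subset_closure (Or.inl (Or.inl ⟨i, hi, j, hj, hij, rfl⟩))

lemma P_mem_sub {σ : Equiv.Perm ι} (h : ∀ i ∉ S, σ i = i) : D.P σ ∈ D.sub S :=
  Subgroup.subset_closure (Or.inl (Or.inr ⟨σ, h, rfl⟩))

lemma δ_mem_sub {d : ι → ℤˣ} (h : ∀ i ∉ S, d i = 1) : D.δ d ∈ D.sub S :=
  Subgroup.subset_closure (Or.inr ⟨d, h, rfl⟩)

lemma x_mem_fix {i j : ι} (hi : i ∈ S) (hj : j ∈ S) (hij : i ≠ j) (hjs : j ≠ s) :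
    D.x i j ∈ D.fix s S :=
  Subgroup.subset_closure (Or.inl (Or.inl ⟨i, hi, j, hj, hij, hjs, rfl⟩))

lemma P_mem_fix {σ : Equiv.Perm ι} (h : ∀ i ∉ S, σ i = i) (hs : σ s = s) :
    D.P σ ∈ D.fix s S :=
  Subgroup.subset_closure (Or.inl (Or.inr ⟨σ, h, hs, rfl⟩))

lemma δ_mem_fix {d : ι → ℤˣ} (h : ∀ i ∉ S, d i = 1) (hs : d s = 1) : D.δ d ∈ D.fix s S :=
  Subgroup.subset_closure (Or.inr ⟨d, h, hs, rfl⟩)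

lemma δ_sq (d : ι → ℤˣ) : D.δ d * D.δ d = 1 := by
  rw [← map_mul, show d * d = 1 from funext fun i => Int.units_mul_self (d i), map_one]

variable (D s S)

/-- `D.Desc s S v q`: the nonnegative vector `v` reduces by subtractions of coordinates in `S` to
a basis vector, and `q` is the coset recorded along the way. -/
inductive Desc : (ι → ℕ) → Γ ⧸ D.fix s S → Prop
  | base (v : ι → ℕ) (σ : Equiv.Perm ι) (hσ : ∀ i ∉ S, σ i = i)
      (hv : v = Pi.single (σ s) 1) : Desc v (D.P σ : Γ ⧸ D.fix s S)
  | step (v : ι → ℕ) (r : Γ ⧸ D.fix s S) (i j : ι) (hi : i ∈ S) (hj : j ∈ S) (hij : i ≠ j)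
      (h0 : 0 < v j) (hle : v j ≤ v i) (hr : Desc (update v i (v i - v j)) r) :
      Desc v (D.x i j • r)

variable {D s S}

lemma smul_P_eq_of_conj {g : Γ} {σ : Equiv.Perm ι} {h : Γ} (hh : h ∈ D.fix s S)
    (e : g * D.P σ = D.P σ * h) :
    g • (D.P σ : Γ ⧸ D.fix s S) = D.P σ := by
  rw [MulAction.Quotient.smul_coe, smul_eq_mul, e]
  exact QuotientGroup.mk_mul_of_mem _ hh

lemma x_mul_P (σ : Equiv.Perm ι) {i j : ι} (hij : i ≠ j) :
    D.x i j * D.P σ = D.P σ * D.x (σ.symm i) (σ.symm j) := by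
  rw [D.P_x σ (by simpa using hij)]
  simp

lemma δ_mul_P (σ : Equiv.Perm ι) (d : ι → ℤˣ) :
    D.δ d * D.P σ = D.P σ * D.δ (d ∘ σ) := by
  rw [D.P_δ]
  congr 2
  ext i
  simp

/-- Elementary elements adding a vanishing coordinate fix the recorded coset. -/
lemma Desc.x_smul {v : ι → ℕ} {q : Γ ⧸ D.fix s S} (h : D.Desc s S v q) :
    ∀ {i j : ι}, i ∈ S → j ∈ S → i ≠ j → v j = 0 → D.x i j • q = q := by
  induction h with
  | base v σ hσ hv =>
    intro i j hi hj hij h0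
    refine smul_P_eq_of_conj (x_mem_fix ?_ ?_ ?_ ?_) (x_mul_P σ hij)
    · exact (mem_of_supp (symm_supp hσ)).2 hi
    · exact (mem_of_supp (symm_supp hσ)).2 hj
    · simpa using hij
    · rintro rfl
      simp [hv] at h0
  | step v r k l hk hl hkl hpos hle hr ih =>
    intro i j hi hj hij h0
    have hjl : l ≠ j := by rintro rfl; omega
    have hjk : k ≠ j := by rintro rfl; omega
    have hz : update v k (v k - v l) j = 0 := by rw [update_of_ne hjk.symm, h0]
    by_cases hil : i = l
    · subst hil
      have e : D.x i j * D.x k i = D.x k i * (D.x k j)⁻¹ * D.x i j := by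
        have h1 := D.st hkl hij hjk
        have h2 := D.comm (i := k) (j := i) (k := k) (l := j) hkl hjk hkl.symm hjk
        have h3 := D.comm (i := k) (j := j) (k := i) (l := j) hjk hij hij.symm hjk
        have h4 := D.comm (i := k) (j := j) (k := k) (l := i) hjk hkl hjk.symm hkl
        have : D.x k j * (D.x i j * D.x k i) = D.x k i * D.x i j := by
          rw [h1, ← mul_assoc, h3]
        rw [show D.x k i * (D.x k j)⁻¹ = (D.x k j)⁻¹ * D.x k i by
          rw [mul_inv_eq_iff_eq_mul, mul_assoc, h2, inv_mul_cancel_left]]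
        rw [mul_assoc, ← this, inv_mul_cancel_left]
      rw [smul_smul, e, mul_smul, mul_smul, ih hi hj hij hz]
      congr 1
      rw [inv_smul_eq_iff]
      exact (ih hk hj hjk hz).symm
    · rw [smul_smul, D.comm hij hkl hjk.symm hil, mul_smul, ih hi hj hij hz]

/-- Sign changes away from the support fix the recorded coset. -/
lemma Desc.δ_smul {v : ι → ℕ} {q : Γ ⧸ D.fix s S} (h : D.Desc s S v q) (d : ι → ℤˣ)
    (hd : ∀ i ∉ S, d i = 1) : (∀ i, v i ≠ 0 → d i = 1) → D.δ d • q = q := by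
  induction h with
  | base v σ hσ hv =>
    intro h0
    refine smul_P_eq_of_conj (δ_mem_fix ?_ ?_) (δ_mul_P σ d)
    · intro i hi
      exact hd _ (by rwa [mem_of_supp hσ])
    · exact h0 _ (by simp [hv])
  | step v r k l hk hl hkl hpos hle hr ih =>
    intro h0
    have hk' := h0 k (by omega)
    have hl' := h0 l (by omega)
    rw [smul_smul, D.δ_x d hkl, hk', hl', mul_smul, ih]
    · simp
    · intro i hi
      rcases eq_or_ne i k with rfl | hik
      · exact hk'
      · exact h0 i (by simpa [update_of_ne hik] using hi)

/-- Permuting coordinates. -/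
lemma Desc.P_smul {v : ι → ℕ} {q : Γ ⧸ D.fix s S} (h : D.Desc s S v q) (τ : Equiv.Perm ι)
    (hτ : ∀ i ∉ S, τ i = i) : D.Desc s S (v ∘ τ.symm) (D.P τ • q) := by
  induction h with
  | base v σ hσ hv =>
    rw [MulAction.Quotient.smul_coe, smul_eq_mul, ← map_mul]
    refine Desc.base _ _ ?_ ?_
    · intro i hi
      rw [Equiv.Perm.mul_apply, hσ i hi, hτ i hi]
    · ext m
      simp [hv, Pi.single_apply, Equiv.symm_apply_eq]
  | step v r k l hk hl hkl hpos hle hr ih =>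
    rw [smul_smul, D.P_x τ hkl, mul_smul]
    refine Desc.step _ _ _ _ ((mem_of_supp hτ).2 hk) ((mem_of_supp hτ).2 hl)
      (by simpa using hkl) (by simpa using hpos) (by simpa using hle) ?_
    convert ih using 1
    ext m
    simp [update_apply, Equiv.symm_apply_eq]

lemma weyl_inv {i j : ι} (hij : i ≠ j) :
    (D.x i j)⁻¹ * D.x j i * (D.x i j)⁻¹ =
      D.P (Equiv.swap i j) * D.δ (Pi.mulSingle j (-1)) := by
  rw [D.weyl hij]; group

lemma sum_update_lt [Fintype ι] {v : ι → ℕ} {i j : ι} (h0 : 0 < v j) (hle : v j ≤ v i) :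
    ∑ m, update v i (v i - v j) m < ∑ m, v m := by
  refine Finset.sum_lt_sum (fun m _ => ?_) ⟨i, Finset.mem_univ _, ?_⟩
  · rw [update_apply]; split_ifs with h
    · subst h; omega
    · exact le_rfl
  · rw [update_self]; omega

variable (D s S) in
/-- Every subtraction applied to a vector of smaller size than `N` is recorded compatibly. -/
def Confl [Fintype ι] (N : ℕ) : Prop :=
  ∀ v : ι → ℕ, ∑ m, v m < N → ∀ q, D.Desc s S v q → ∀ i j, i ∈ S → j ∈ S → i ≠ j →
    0 < v j → v j ≤ v i → D.Desc s S (update v i (v i - v j)) ((D.x i j)⁻¹ • q)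

lemma confl_swap {v : ι → ℕ} {r : Γ ⧸ D.fix s S} {i j : ι} (hi : i ∈ S) (hj : j ∈ S)
    (hij : i ≠ j) (h : v i = v j)
    (hr : D.Desc s S (update v j (v j - v i)) r) :
    D.Desc s S (update v i (v i - v j)) ((D.x i j)⁻¹ • D.x j i • r) := by
  have h1 := hr.x_smul hi hj hij (by simp [h])
  have h2 := hr.δ_smul (Pi.mulSingle j (-1))
    (fun m hm => Pi.mulSingle_eq_of_ne (by rintro rfl; exact hm hj) _)
    (fun m hm => Pi.mulSingle_eq_of_ne (by rintro rfl; simp [h] at hm) _)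
  have h3 := hr.P_smul (Equiv.swap i j)
    (fun m hm => Equiv.swap_apply_of_ne_of_ne (by rintro rfl; exact hm hi)
      (by rintro rfl; exact hm hj))
  have e : (D.x i j)⁻¹ • D.x j i • r = D.P (Equiv.swap i j) • r := by
    conv_lhs => rw [← inv_smul_eq_iff.2 h1.symm]
    rw [smul_smul, smul_smul, weyl_inv hij, mul_smul, h2]
  rw [e]
  convert h3 using 1
  ext m
  simp only [update_apply, Function.comp_apply, Equiv.symm_swap, Equiv.swap_apply_def]
  grind

section

variable [Fintype ι] {v : ι → ℕ} {r : Γ ⧸ D.fix s S} {i j k l : ι}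

lemma confl_commute (IH : D.Confl s S (∑ m, v m)) (hi : i ∈ S) (hj : j ∈ S) (hij : i ≠ j)
    (hk : k ∈ S) (hl : l ∈ S) (hkl : k ≠ l) (hjk : j ≠ k) (hil : i ≠ l)
    (hpj : 0 < v j) (hpl : 0 < v l) (hji : v j ≤ v i) (hlk : v l ≤ v k)
    (hik : i = k → v j + v l ≤ v i)
    (hr : D.Desc s S (update v k (v k - v l)) r) :
    D.Desc s S (update v i (v i - v j)) ((D.x i j)⁻¹ • D.x k l • r) := by
  have key := IH _ (sum_update_lt hpl hlk) r hr i j hi hj hij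
    (by rw [update_of_ne hjk]; exact hpj)
    (by
      rw [update_of_ne hjk, update_apply]
      split_ifs with h
      · have := hik h; subst h; omega
      · exact hji)
  have e : (D.x i j)⁻¹ • D.x k l • r = D.x k l • (D.x i j)⁻¹ • r := by
    rw [inv_smul_eq_iff, smul_smul, smul_smul, D.comm hij hkl hjk hil, ← smul_smul, ← smul_smul,
      smul_inv_smul]
  rw [e]
  refine Desc.step _ _ k l hk hl hkl ?_ ?_ ?_
  · rw [update_of_ne hil.symm]; exact hpl
  · rw [update_of_ne hil.symm, update_apply]
    split_ifs with h
    · have := hik h.symm; subst h; omega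
    · exact hlk
  · convert key using 1
    ext m
    simp only [update_apply]
    grind

lemma confl_left (IH : D.Confl s S (∑ m, v m)) (hi : i ∈ S) (hj : j ∈ S) (hij : i ≠ j)
    (hl : l ∈ S) (hjl : j ≠ l) (hil : i ≠ l)
    (hpl : 0 < v l) (hji : v j ≤ v i) (hlj : v l ≤ v j)
    (hr : D.Desc s S (update v j (v j - v l)) r) :
    D.Desc s S (update v i (v i - v j)) ((D.x i j)⁻¹ • D.x j l • r) := by
  have A : D.Desc s S (update (update v j (v j - v l)) i (v i - (v j - v l)))
      ((D.x i j)⁻¹ • r) := by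
    rcases hlj.eq_or_lt with h | h
    · have h0 : update v j (v j - v l) j = 0 := by rw [update_self]; omega
      have : (D.x i j)⁻¹ • r = r := by
        rw [inv_smul_eq_iff]; exact (hr.x_smul hi hj hij h0).symm
      rw [this]
      convert hr using 1
      ext m
      simp only [update_apply]
      grind
    · have := IH _ (sum_update_lt hpl hlj) r hr i j hi hj hij
        (by rw [update_self]; omega) (by rw [update_self, update_of_ne hij]; omega)
      rwa [update_self, update_of_ne hij] at this
  have hlt : ∑ m, update (update v j (v j - v l)) i (v i - (v j - v l)) m < ∑ m, v m := by
    refine Finset.sum_lt_sum (fun m _ => ?_) ⟨j, Finset.mem_univ _, ?_⟩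
    · simp only [update_apply]; grind
    · simp only [update_apply]; grind
  have B := IH _ hlt _ A i l hi hl hil (by simp only [update_apply]; grind)
    (by simp only [update_apply]; grind)
  have e : (D.x i j)⁻¹ • D.x j l • r = D.x j l • (D.x i l)⁻¹ • (D.x i j)⁻¹ • r := by
    rw [inv_smul_eq_iff, smul_smul, smul_smul, smul_smul]
    congr 1
    have h1 := D.st hij hjl hil
    have h2 := D.comm hij hil hij.symm hil
    calc D.x j l = D.x j l * (D.x i l * D.x i j) * (D.x i l)⁻¹ * (D.x i j)⁻¹ := by
          rw [← h2]; group
      _ = _ := by rw [← mul_assoc, ← h1]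
  rw [e]
  refine Desc.step _ _ j l hj hl hjl (by simp only [update_apply]; grind)
    (by simp only [update_apply]; grind) ?_
  convert B using 1
  ext m
  simp only [update_apply]
  grind

lemma confl_right (IH : D.Confl s S (∑ m, v m)) (hi : i ∈ S) (hj : j ∈ S) (hij : i ≠ j)
    (hk : k ∈ S) (hki : k ≠ i) (hkj : k ≠ j)
    (hpj : 0 < v j) (hji : v j ≤ v i) (hik : v i ≤ v k)
    (hr : D.Desc s S (update v k (v k - v i)) r) :
    D.Desc s S (update v i (v i - v j)) ((D.x i j)⁻¹ • D.x k i • r) := by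
  have A := IH _ (sum_update_lt (by omega) hik) r hr i j hi hj hij
    (by rw [update_of_ne hkj.symm]; exact hpj)
    (by rw [update_of_ne hkj.symm, update_of_ne hki.symm]; exact hji)
  have B : D.Desc s S (update (update v i (v i - v j)) k (v k - (v i - v j)))
      (D.x k j • (D.x i j)⁻¹ • r) := by
    refine Desc.step _ _ k j hk hj hkj (by simp only [update_apply]; grind)
      (by simp only [update_apply]; grind) ?_
    convert A using 1
    ext m
    simp only [update_apply]
    grind
  have e : (D.x i j)⁻¹ • D.x k i • r = D.x k i • D.x k j • (D.x i j)⁻¹ • r := by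
    rw [inv_smul_eq_iff, smul_smul, smul_smul, smul_smul]
    congr 1
    have h1 := D.st hki hij hkj
    have h2 := D.comm hki hkj hki.symm hkj
    calc D.x k i = D.x k i * D.x i j * (D.x i j)⁻¹ := by group
      _ = _ := by rw [h1, mul_assoc (D.x i j), ← h2]; group
  rw [e]
  rcases hji.eq_or_lt with h | h
  · have e2 := B.x_smul hk hi hki (by simp only [update_apply]; grind)
    rw [e2]
    convert B using 1
    ext m
    simp only [update_apply]
    grind
  · refine Desc.step _ _ k i hk hi hki (by simp only [update_apply]; grind)
      (by simp only [update_apply]; grind) ?_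
    convert B using 1
    ext m
    simp only [update_apply]
    grind

end

theorem confl [Fintype ι] (N : ℕ) : D.Confl s S N := by
  induction N with
  | zero => intro v hv; omega
  | succ N ih =>
    intro v hv q hq i j hi hj hij hpj hji
    have IH : D.Confl s S (∑ m, v m) := fun w hw => ih w (by omega)
    cases hq with
    | base _ σ hσ hv =>
      exfalso
      rw [hv] at hpj hji
      simp only [Pi.single_apply] at hpj hji
      grind
    | step _ r k l hk hl hkl hpl hlk hr =>
      by_cases hil : i = l
      · subst hil
        by_cases hjk : j = k
        · subst hjk
          exact confl_swap hi hj hij (le_antisymm hlk hji) hr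
        · exact confl_right IH hi hj hij hk hkl (Ne.symm hjk) hpj hji hlk hr
      by_cases hjk : j = k
      · subst hjk
        exact confl_left IH hi hj hij hl hkl hil hpl hji hlk hr
      by_cases hik : i = k
      · subst hik
        by_cases hjl : j = l
        · subst hjl
          rwa [inv_smul_smul]
        by_cases hs : v j + v l ≤ v i
        · exact confl_commute IH hi hj hij hk hl hkl hjk hil hpj hpl hji hlk (fun _ => hs) hr
        rcases le_total (v l) (v j) with h | h
        · have A := confl_commute IH hj hl hjl hi hl hkl (Ne.symm hil) hjl hpl hpl h hlk
            (fun e => absurd e hjk) hr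
          have B := confl_left IH hi hj hij hl hjl hil hpl hji h A
          rwa [smul_inv_smul] at B
        · have A := confl_right IH hl hj (Ne.symm hjl) hi hil hij hpj h hlk hr
          have B := confl_commute IH hi hj hij hl hj (Ne.symm hjl) hjl hij hpj hpj hji h
            (fun e => absurd e hil) A
          rwa [smul_inv_smul] at B
      · exact confl_commute IH hi hj hij hk hl hkl hjk hil hpj hpl hji hlk
          (fun e => absurd e hik) hr

lemma Desc.sub [Fintype ι] {v : ι → ℕ} {q : Γ ⧸ D.fix s S} (h : D.Desc s S v q) {i j : ι}
    (hi : i ∈ S) (hj : j ∈ S) (hij : i ≠ j) (hpj : 0 < v j) (hji : v j ≤ v i) :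
    D.Desc s S (update v i (v i - v j)) ((D.x i j)⁻¹ • q) :=
  confl _ v (Nat.lt_succ_self _) q h i j hi hj hij hpj hji

lemma Desc.add {v : ι → ℕ} {q : Γ ⧸ D.fix s S} (h : D.Desc s S v q) {i j : ι}
    (hi : i ∈ S) (hj : j ∈ S) (hij : i ≠ j) :
    D.Desc s S (update v i (v i + v j)) (D.x i j • q) := by
  rcases Nat.eq_zero_or_pos (v j) with h0 | h0
  · rw [h.x_smul hi hj hij h0, h0, add_zero, update_eq_self]
    exact h
  · refine Desc.step _ _ i j hi hj hij ?_ ?_ ?_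
    · rwa [update_of_ne hij.symm]
    · rw [update_of_ne hij.symm, update_self]; omega
    · rw [update_of_ne hij.symm, update_self, update_idem, Nat.add_sub_cancel, update_eq_self]
      exact h

lemma Desc.sub_of_lt [Fintype ι] {v : ι → ℕ} {q : Γ ⧸ D.fix s S} (h : D.Desc s S v q) {i j : ι}
    (hi : i ∈ S) (hj : j ∈ S) (hij : i ≠ j) (hlt : v i < v j) :
    D.Desc s S (update v i (v j - v i)) (D.δ (Pi.mulSingle i (-1)) • (D.x i j)⁻¹ • q) := by
  have A : D.Desc s S (update v j (v j - v i)) ((D.x j i)⁻¹ • q) := by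
    rcases Nat.eq_zero_or_pos (v i) with h0 | h0
    · have := h.x_smul hj hi hij.symm h0
      rw [h0, Nat.sub_zero, update_eq_self, inv_smul_eq_iff.2 this.symm]
      exact h
    · exact h.sub hj hi hij.symm h0 hlt.le
  have B := (A.P_smul (Equiv.swap i j)
    (fun m hm => Equiv.swap_apply_of_ne_of_ne (by rintro rfl; exact hm hi)
      (by rintro rfl; exact hm hj))).add hj hi hij.symm
  have e : D.δ (Pi.mulSingle i (-1)) • (D.x i j)⁻¹ • q =
      D.x j i • D.P (Equiv.swap i j) • (D.x j i)⁻¹ • q := by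
    simp only [smul_smul]
    congr 1
    have hw := D.weyl hij.symm
    have hx := D.δ_x (Pi.mulSingle i (-1)) hij.symm
    rw [Equiv.swap_comm] at hw
    rw [Pi.mulSingle_eq_same, Pi.mulSingle_eq_of_ne hij.symm] at hx
    have hP : D.P (Equiv.swap i j) * D.P (Equiv.swap i j) = 1 := by
      rw [← map_mul, Equiv.swap_mul_self, map_one]
    have hδ := D.δ_sq (Pi.mulSingle i (-1))
    set δ := D.δ (Pi.mulSingle i (-1))
    set P := D.P (Equiv.swap i j)
    have hP' : P⁻¹ = P := inv_eq_of_mul_eq_one_right hP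
    have hδ' : δ⁻¹ = δ := inv_eq_of_mul_eq_one_right hδ
    have hx' : δ * (D.x j i)⁻¹ = D.x j i * δ := by
      rw [mul_inv_eq_iff_eq_mul, mul_assoc, hx]
      simp
    rw [hw, _root_.mul_inv_rev, _root_.mul_inv_rev, _root_.mul_inv_rev, hP', hδ', ← mul_assoc, hx',
      ← mul_assoc,
      mul_assoc (D.x j i), hδ, mul_one]
  rw [e]
  convert B using 1
  ext m
  simp only [update_apply, Function.comp_apply, Equiv.symm_swap, Equiv.swap_apply_def]
  grind

variable (D s S) in
/-- The extension of `Desc` to integer vectors by sign changes. -/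
def DescZ (v : ι → ℤ) (q : Γ ⧸ D.fix s S) : Prop :=
  ∃ (d : ι → ℤˣ) (u : ι → ℕ) (r : Γ ⧸ D.fix s S), (∀ i ∉ S, d i = 1) ∧ D.Desc s S u r ∧
    v = (fun i => (d i : ℤ) * u i) ∧ q = D.δ d • r

lemma DescZ.δ_smul {v : ι → ℤ} {q : Γ ⧸ D.fix s S} (h : D.DescZ s S v q) {d : ι → ℤˣ}
    (hd : ∀ i ∉ S, d i = 1) : D.DescZ s S (D.φ (D.δ d) v) (D.δ d • q) := by
  obtain ⟨d', u, r, hd', hu, rfl, rfl⟩ := h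
  refine ⟨d * d', u, r, fun i hi => by simp [hd i hi, hd' i hi], hu, ?_, ?_⟩
  · ext i; simp [D.φ_δ, mul_assoc]
  · rw [smul_smul, map_mul]

lemma DescZ.P_smul {v : ι → ℤ} {q : Γ ⧸ D.fix s S} (h : D.DescZ s S v q) {σ : Equiv.Perm ι}
    (hσ : ∀ i ∉ S, σ i = i) : D.DescZ s S (D.φ (D.P σ) v) (D.P σ • q) := by
  obtain ⟨d, u, r, hd, hu, rfl, rfl⟩ := h
  refine ⟨d ∘ σ.symm, u ∘ σ.symm, D.P σ • r, fun i hi => ?_, hu.P_smul σ hσ, ?_, ?_⟩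
  · rw [Function.comp_apply, symm_supp hσ i hi, hd i hi]
  · ext i; simp [D.φ_P]
  · rw [smul_smul, smul_smul, D.P_δ]

lemma φ_x_inv {i j : ι} (hij : i ≠ j) (v : ι → ℤ) :
    D.φ (D.x i j)⁻¹ v = update v i (v i - v j) := by
  have : D.φ (D.x i j) (update v i (v i - v j)) = v := by
    rw [D.φ_x hij]; simp [hij.symm]
  conv_lhs => rw [← this]
  rw [← Module.End.mul_apply, ← map_mul, inv_mul_cancel, map_one, Module.End.one_apply]

lemma Desc.descZ_x [Fintype ι] {u : ι → ℕ} {r : Γ ⧸ D.fix s S} (h : D.Desc s S u r) {i j : ι}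
    (hi : i ∈ S) (hj : j ∈ S) (hij : i ≠ j) (t : ℤˣ) :
    D.DescZ s S (D.φ (D.x i j ^ (t : ℤ)) (fun i => (u i : ℤ))) (D.x i j ^ (t : ℤ) • r) := by
  rcases Int.units_eq_one_or t with rfl | rfl
  · refine ⟨1, _, _, fun _ _ => rfl, h.add hi hj hij, ?_, by simp⟩
    ext m
    simp only [Units.val_one, zpow_one, D.φ_x hij, update_apply, Pi.one_apply]
    split_ifs <;> simp
  · simp only [Units.val_neg, Units.val_one, _root_.zpow_neg, zpow_one, φ_x_inv hij]
    rcases Nat.eq_zero_or_pos (u j) with h0 | h0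
    · refine ⟨1, u, r, fun _ _ => rfl, h, ?_, ?_⟩
      · ext m
        simp only [update_apply, Pi.one_apply]
        split_ifs with hm
        · simp [h0, hm]
        · simp
      · rw [map_one, one_smul, inv_smul_eq_iff, h.x_smul hi hj hij h0]
    rcases le_or_gt (u j) (u i) with hle | hlt
    · refine ⟨1, _, _, fun _ _ => rfl, h.sub hi hj hij h0 hle, ?_, by simp⟩
      ext m
      simp only [update_apply, Pi.one_apply]
      split_ifs <;> simp [hle]
    · refine ⟨Pi.mulSingle i (-1), _, _, fun m hm => ?_, h.sub_of_lt hi hj hij hlt, ?_, ?_⟩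
      · exact Pi.mulSingle_eq_of_ne (by rintro rfl; exact hm hi) _
      · ext m
        simp only [update_apply, Pi.mulSingle_apply]
        split_ifs <;> simp [hlt.le]
      · rw [smul_smul, D.δ_sq, one_smul]

lemma DescZ.x_smul [Fintype ι] {v : ι → ℤ} {q : Γ ⧸ D.fix s S} (h : D.DescZ s S v q) {i j : ι}
    (hi : i ∈ S) (hj : j ∈ S) (hij : i ≠ j) (t : ℤˣ) :
    D.DescZ s S (D.φ (D.x i j ^ (t : ℤ)) v) (D.x i j ^ (t : ℤ) • q) := by
  obtain ⟨d, u, r, hd, hu, rfl, rfl⟩ := h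
  have A := (hu.descZ_x hi hj hij (d i * d j * t)).δ_smul hd
  have e : D.δ d * D.x i j ^ ((d i * d j * t : ℤˣ) : ℤ) = D.x i j ^ (t : ℤ) * D.δ d := by
    have h1 : D.δ d * D.x i j * (D.δ d)⁻¹ = D.x i j ^ ((d i * d j : ℤˣ) : ℤ) := by
      rw [D.δ_x d hij, mul_inv_cancel_right]
    rw [← mul_inv_eq_iff_eq_mul, ← conj_zpow, h1, ← _root_.zpow_mul, ← Units.val_mul, ← mul_assoc,
      Int.units_mul_self, one_mul]
  rw [smul_smul, e, ← Module.End.mul_apply, ← map_mul, e, map_mul, mul_smul,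
    Module.End.mul_apply, D.φ_δ] at A
  exact A

/-- The recorded coset is equivariant. -/
theorem DescZ.smul [Fintype ι] {g : Γ} (hg : g ∈ D.sub S) : ∀ {v : ι → ℤ} {q : Γ ⧸ D.fix s S},
    D.DescZ s S v q → D.DescZ s S (D.φ g v) (g • q) := by
  unfold SteinbergData.sub at hg
  induction hg using Subgroup.closure_induction'' with
  | one => intro v q h; simpa using h
  | mem y hy =>
    intro v q h
    rcases hy with (⟨i, hi, j, hj, hij, rfl⟩ | ⟨σ, hσ, rfl⟩) | ⟨d, hd, rfl⟩
    · simpa using h.x_smul hi hj hij 1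
    · exact h.P_smul hσ
    · exact h.δ_smul hd
  | inv_mem y hy =>
    intro v q h
    rcases hy with (⟨i, hi, j, hj, hij, rfl⟩ | ⟨σ, hσ, rfl⟩) | ⟨d, hd, rfl⟩
    · simpa using h.x_smul hi hj hij (-1)
    · rw [← map_inv]
      exact h.P_smul (symm_supp hσ)
    · rw [← map_inv]
      exact h.δ_smul (fun i hi => by simp [hd i hi])
  | mul y z _ _ hy hz =>
    intro v q h
    rw [map_mul, Module.End.mul_apply, mul_smul]
    exact hy (hz h)

/-- The stabilizer of a basis vector is generated by the obvious elements. -/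
theorem mem_fix_of_φ_single [Fintype ι] {g : Γ} (hg : g ∈ D.sub S)
    (h : D.φ g (Pi.single s 1) = Pi.single s 1) : g ∈ D.fix s S := by
  have A : D.DescZ s S (Pi.single s 1) ((1 : Γ) : Γ ⧸ D.fix s S) := by
    refine ⟨1, Pi.single s 1, _, fun _ _ => rfl,
      Desc.base _ 1 (fun _ _ => rfl) (by simp), ?_, by simp⟩
    ext m
    simp only [Pi.single_apply]
    split_ifs <;> simp
  obtain ⟨d, u, r, hd, hu, hv, hq⟩ := A.smul hg
  rw [h] at hv
  have hu1 : u = Pi.single s 1 := by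
    ext m
    have := congrArg Int.natAbs (congrFun hv m)
    simp only [Pi.single_apply, Int.natAbs_mul, Int.units_natAbs] at this
    rw [Pi.single_apply]
    split_ifs at * <;> simp_all
  have hds : d s = 1 := by
    have := congrFun hv s
    simp only [hu1, Pi.single_eq_same] at this
    ext; simpa using this.symm
  subst hu1
  rw [hu.δ_smul d hd (fun m hm => by
    rcases eq_or_ne m s with rfl | hms
    · exact hds
    · simp [hms] at hm)] at hq
  have hr : r = ((1 : Γ) : Γ ⧸ D.fix s S) := by
    cases hu with
    | base _ σ hσ hv =>
      have hs : σ s = s := by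
        by_contra hne
        have := congrFun hv s
        simp [Ne.symm hne] at this
      rw [QuotientGroup.eq, mul_one, inv_mem_iff]
      exact P_mem_fix hσ hs
    | step _ r k l hk hl hkl hpl hlk hr =>
      exfalso
      simp only [Pi.single_apply] at hpl hlk
      grind
  rw [hr, MulAction.Quotient.smul_coe, smul_eq_mul, mul_one, eq_comm, QuotientGroup.eq] at hq
  simpa using hq

lemma pairwise_commute_row : Pairwise fun j k => ∀ a b : Multiplicative ℤ,
    Commute (zpowersHom Γ (if j = s then 1 else D.x s j) a)
      (zpowersHom Γ (if k = s then 1 else D.x s k) b) := by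
  intro j k hjk a b
  simp only [zpowersHom_apply]
  apply Commute.zpow_zpow
  by_cases hj : j = s
  · simp [hj]
  by_cases hk : k = s
  · simp [hk]
  · simp only [hj, hk, if_false]
    exact D.comm (Ne.symm hj) (Ne.symm hk) hj (Ne.symm hk)

variable (D s) in
/-- The homomorphism sending `a` to the product of the commuting elements `x s j ^ a j`. -/
noncomputable def rowHom [Fintype ι] : (ι → Multiplicative ℤ) →* Γ :=
  MonoidHom.noncommPiCoprod (fun j => zpowersHom Γ (if j = s then 1 else D.x s j))
    pairwise_commute_row

lemma rowHom_mulSingle [Fintype ι] (j : ι) (a : Multiplicative ℤ) :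
    D.rowHom s (Pi.mulSingle j a) = (if j = s then 1 else D.x s j) ^ a.toAdd := by
  rw [rowHom, MonoidHom.noncommPiCoprod_mulSingle, zpowersHom_apply]

lemma x_mem_range_rowHom [Fintype ι] {j : ι} (hj : j ≠ s) : D.x s j ∈ (D.rowHom s).range :=
  ⟨Pi.mulSingle j (Multiplicative.ofAdd 1), by simp [rowHom_mulSingle, hj]⟩

lemma φ_x_zpow {i j : ι} (hij : i ≠ j) (a : ℤ) (v : ι → ℤ) :
    D.φ (D.x i j ^ a) v = update v i (v i + a * v j) := by
  induction a generalizing v with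
  | zero => simp
  | succ n ih =>
    rw [_root_.zpow_add_one, map_mul, Module.End.mul_apply, D.φ_x hij, ih]
    simp only [update_self, update_of_ne hij.symm, update_idem]
    congr 1; ring
  | pred n ih =>
    rw [_root_.zpow_sub_one, map_mul, Module.End.mul_apply, φ_x_inv hij, ih]
    simp only [update_self, update_of_ne hij.symm, update_idem]
    congr 1; ring

lemma φ_rowHom [Fintype ι] (a : ι → Multiplicative ℤ) :
    ∀ v : ι → ℤ, (∀ m, m ≠ s → D.φ (D.rowHom s a) v m = v m) ∧
      D.φ (D.rowHom s a) v s = v s + ∑ j, if j = s then 0 else (a j).toAdd * v j := by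
  induction a using Pi.mulSingle_induction with
  | one => intro v; simp
  | mul f g hf hg =>
    intro v
    rw [map_mul, map_mul, Module.End.mul_apply]
    obtain ⟨h1, h2⟩ := hg v
    obtain ⟨h3, h4⟩ := hf (D.φ (D.rowHom s g) v)
    refine ⟨fun m hm => by rw [h3 m hm, h1 m hm], ?_⟩
    rw [h4, h2, add_assoc, ← Finset.sum_add_distrib]
    congr 1
    refine Finset.sum_congr rfl fun j _ => ?_
    split_ifs with hj
    · simp
    · rw [h1 j hj, Pi.mul_apply, toAdd_mul]; ring
  | mulSingle k b =>
    intro v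
    rw [rowHom_mulSingle]
    by_cases hk : k = s
    · simp only [hk, if_true, _root_.one_zpow, map_one, Module.End.one_apply, implies_true,
        true_and]
      rw [Finset.sum_eq_zero, add_zero]
      intro j _
      split_ifs with hj
      · rfl
      · rw [Pi.mulSingle_eq_of_ne hj]; simp
    · rw [if_neg hk, φ_x_zpow (Ne.symm hk)]
      refine ⟨fun m hm => update_of_ne hm _ _, ?_⟩
      rw [update_self, Finset.sum_eq_single k]
      · simp [hk]
      · intro j _ hj
        rw [Pi.mulSingle_eq_of_ne hj]; simp
      · simp

lemma rowHom_eq_one [Fintype ι] {a : ι → Multiplicative ℤ} (h : D.φ (D.rowHom s a) = 1) :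
    D.rowHom s a = 1 := by
  have key : ∀ j, j ≠ s → a j = 1 := by
    intro j hj
    have h2 := (φ_rowHom (D := D) (s := s) a (Pi.single j 1)).2
    rw [h, Module.End.one_apply, Finset.sum_eq_single j] at h2
    · simp only [hj, if_false, Pi.single_eq_same, mul_one] at h2
      exact Multiplicative.toAdd.injective (by simpa using h2)
    · intro k _ hk; simp [hk]
    · simp
  have : a = Pi.mulSingle s (a s) := by
    ext j
    rcases eq_or_ne j s with rfl | hj
    · simp
    · rw [key j hj, Pi.mulSingle_eq_of_ne hj]
  rw [this, rowHom_mulSingle, if_pos rfl, _root_.one_zpow]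

/-- Elements supported on a set avoiding `s` normalize the row subgroup of `s`. -/
lemma conj_rowHom_mem [Fintype ι] (hs : s ∉ S) {l : Γ} (hl : l ∈ D.sub S) :
    ∀ u ∈ (D.rowHom s).range, l * u * l⁻¹ ∈ (D.rowHom s).range := by
  have red : ∀ g : Γ, (∀ j, j ≠ s → g * D.x s j * g⁻¹ ∈ (D.rowHom s).range) →
      ∀ u ∈ (D.rowHom s).range, g * u * g⁻¹ ∈ (D.rowHom s).range := by
    rintro g hg - ⟨a, rfl⟩
    induction a using Pi.mulSingle_induction with
    | one => simp
    | mul f g hf hg => rw [map_mul, ← conj_mul]; exact mul_mem hf hg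
    | mulSingle k b =>
      rw [rowHom_mulSingle]
      split_ifs with hk
      · simp
      · rw [← conj_zpow]; exact zpow_mem (hg k hk) _
  unfold SteinbergData.sub at hl
  induction hl using Subgroup.closure_induction'' with
  | one => simp
  | mem y hy =>
    refine red y fun k hk => ?_
    rcases hy with (⟨i, hi, j, hj, hij, rfl⟩ | ⟨σ, hσ, rfl⟩) | ⟨d, hd, rfl⟩
    · have his : i ≠ s := by rintro rfl; exact hs hi
      have hjs : j ≠ s := by rintro rfl; exact hs hj
      by_cases hki : k = i
      · subst hki
        have e : D.x k j * D.x s k * (D.x k j)⁻¹ = D.x s k * (D.x s j)⁻¹ := by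
          have h1 := D.st hk.symm hij hjs.symm
          have h2 := D.comm hjs.symm hk.symm hjs hk.symm
          have h3 := D.comm hjs.symm hij hij.symm hjs.symm
          have h4 : D.x k j * (D.x s j)⁻¹ = (D.x s j)⁻¹ * D.x k j :=
            (Commute.inv_left (show Commute _ _ from h3)).eq.symm
          rw [mul_inv_eq_iff_eq_mul]
          calc D.x k j * D.x s k = D.x k j * (D.x s k * D.x s j) * (D.x s j)⁻¹ := by group
            _ = D.x s k * D.x k j * (D.x s j)⁻¹ := by rw [← h2, ← mul_assoc, ← h1]
            _ = _ := by rw [mul_assoc, h4, mul_assoc]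
        rw [e]
        exact mul_mem (x_mem_range_rowHom hk) (inv_mem (x_mem_range_rowHom hjs))
      · rw [D.comm hij hk.symm hjs (Ne.symm hki), mul_inv_cancel_right]
        exact x_mem_range_rowHom hk
    · have hσs := hσ s hs
      rw [D.P_x σ hk.symm, mul_inv_cancel_right, hσs]
      exact x_mem_range_rowHom (fun h => hk (σ.injective (h.trans hσs.symm)))
    · rw [D.δ_x d hk.symm, mul_inv_cancel_right]
      exact zpow_mem (x_mem_range_rowHom hk) _
  | inv_mem y hy =>
    refine red y⁻¹ fun k hk => ?_
    rcases hy with (⟨i, hi, j, hj, hij, rfl⟩ | ⟨σ, hσ, rfl⟩) | ⟨d, hd, rfl⟩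
    · have his : i ≠ s := by rintro rfl; exact hs hi
      have hjs : j ≠ s := by rintro rfl; exact hs hj
      rw [inv_inv]
      by_cases hki : k = i
      · subst hki
        have e : (D.x k j)⁻¹ * D.x s k * D.x k j = D.x s j * D.x s k := by
          rw [mul_assoc, D.st hk.symm hij hjs.symm]; group
        rw [e]
        exact mul_mem (x_mem_range_rowHom hjs) (x_mem_range_rowHom hk)
      · rw [mul_assoc, D.comm hk.symm hij hki hjs.symm, inv_mul_cancel_left]
        exact x_mem_range_rowHom hk
    · have hσs := hσ s hs
      have hσs' := symm_supp hσ s hs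
      rw [← map_inv, D.P_x σ⁻¹ hk.symm, mul_inv_cancel_right]
      rw [show σ⁻¹ s = s from hσs']
      exact x_mem_range_rowHom (fun h => hk (σ.symm.injective (h.trans hσs'.symm)))
    · rw [← map_inv, D.δ_x d⁻¹ hk.symm, mul_inv_cancel_right]
      exact zpow_mem (x_mem_range_rowHom hk) _
  | mul y z _ _ hy hz =>
    intro u hu
    have := hy _ (hz u hu)
    rwa [show y * z * u * (y * z)⁻¹ = y * (z * u * z⁻¹) * y⁻¹ by group]

/-- An element fixing the `s`-th basis vector is a product of a row element and an
element supported away from `s`. -/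
lemma exists_eq_mul_of_mem_fix [Fintype ι] (hs : s ∉ S) {g : Γ} (hg : g ∈ D.fix s (insert s S)) :
    ∃ u ∈ (D.rowHom s).range, ∃ l ∈ D.sub S, g = u * l := by
  have hP : ∀ σ : Equiv.Perm ι, (∀ i ∉ insert s S, σ i = i) → σ s = s → D.P σ ∈ D.sub S := by
    intro σ hσ hss
    refine P_mem_sub fun i hi => ?_
    rcases eq_or_ne i s with rfl | his
    · exact hss
    · exact hσ i (by simp [his, hi])
  have hδ : ∀ d : ι → ℤˣ, (∀ i ∉ insert s S, d i = 1) → d s = 1 → D.δ d ∈ D.sub S := by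
    intro d hd hss
    refine δ_mem_sub fun i hi => ?_
    rcases eq_or_ne i s with rfl | his
    · exact hss
    · exact hd i (by simp [his, hi])
  have mulcase : ∀ y z : Γ, (∃ u ∈ (D.rowHom s).range, ∃ l ∈ D.sub S, y = u * l) →
      (∃ u ∈ (D.rowHom s).range, ∃ l ∈ D.sub S, z = u * l) →
      ∃ u ∈ (D.rowHom s).range, ∃ l ∈ D.sub S, y * z = u * l := by
    rintro - - ⟨u, hu, l, hl, rfl⟩ ⟨u', hu', l', hl', rfl⟩
    refine ⟨u * (l * u' * l⁻¹), mul_mem hu (conj_rowHom_mem hs hl u' hu'), l * l',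
      mul_mem hl hl', by group⟩
  unfold SteinbergData.fix at hg
  induction hg using Subgroup.closure_induction with
  | one => exact ⟨1, one_mem _, 1, one_mem _, by simp⟩
  | mem y hy =>
    rcases hy with (⟨i, hi, j, hj, hij, hjs, rfl⟩ | ⟨σ, hσ, hss, rfl⟩) | ⟨d, hd, hss, rfl⟩
    · rcases eq_or_ne i s with rfl | his
      · exact ⟨_, x_mem_range_rowHom hjs, 1, one_mem _, by simp⟩
      · exact ⟨1, one_mem _, _, x_mem_sub (Set.mem_of_mem_insert_of_ne hi his)
          (Set.mem_of_mem_insert_of_ne hj hjs) hij, by simp⟩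
    · exact ⟨1, one_mem _, _, hP σ hσ hss, by simp⟩
    · exact ⟨1, one_mem _, _, hδ d hd hss, by simp⟩
  | mul y z _ _ hy hz => exact mulcase y z hy hz
  | inv y _ hy =>
    obtain ⟨u, hu, l, hl, rfl⟩ := hy
    refine ⟨l⁻¹ * u⁻¹ * l⁻¹⁻¹, conj_rowHom_mem hs (inv_mem hl) _ (inv_mem hu), l⁻¹, inv_mem hl, ?_⟩
    group

lemma φ_apply_of_notMem {g : Γ} (hg : g ∈ D.sub S) (hs : s ∉ S) :
    ∀ v : ι → ℤ, D.φ g v s = v s := by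
  unfold SteinbergData.sub at hg
  induction hg using Subgroup.closure_induction with
  | one => simp
  | mem y hy =>
    intro v
    rcases hy with (⟨i, hi, j, hj, hij, rfl⟩ | ⟨σ, hσ, rfl⟩) | ⟨d, hd, rfl⟩
    · rw [D.φ_x hij, update_of_ne (by rintro rfl; exact hs hi)]
    · rw [D.φ_P, Function.comp_apply, symm_supp hσ s hs]
    · rw [D.φ_δ]; simp [hd s hs]
  | mul y z _ _ hy hz => intro v; rw [map_mul, Module.End.mul_apply, hy, hz]
  | inv y _ hy =>
    intro v
    have := hy (D.φ y⁻¹ v)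
    rw [← Module.End.mul_apply, ← map_mul, mul_inv_cancel, map_one, Module.End.one_apply] at this
    exact this.symm

/-- The action on `ι → ℤ` of the group generated by the standard elements is faithful. -/
theorem eq_one_of_φ_eq_one [Fintype ι] (T : Finset ι) {g : Γ} (hg : g ∈ D.sub (T : Set ι))
    (h : D.φ g = 1) : g = 1 := by
  induction T using Finset.induction_on generalizing g with
  | empty =>
    suffices D.sub ((∅ : Finset ι) : Set ι) = ⊥ by rwa [this, Subgroup.mem_bot] at hg
    rw [SteinbergData.sub, Subgroup.closure_eq_bot_iff]
    rintro y ((⟨i, hi, -⟩ | ⟨σ, hσ, rfl⟩) | ⟨d, hd, rfl⟩)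
    · simp at hi
    · rw [show σ = 1 from Equiv.ext fun i => hσ i (by simp)]; simp
    · rw [show d = 1 from funext fun i => hd i (by simp)]; simp
  | insert s T hs ih =>
    rw [Finset.coe_insert] at hg
    have hs' : s ∉ (T : Set ι) := by simpa using hs
    obtain ⟨-, ⟨a, rfl⟩, l, hl, rfl⟩ :=
      exists_eq_mul_of_mem_fix hs' (mem_fix_of_φ_single (s := s) hg (by rw [h]; rfl))
    rw [map_mul] at h
    have hl1 : D.φ l = 1 := by
      refine LinearMap.ext fun v => funext fun m => ?_
      rcases eq_or_ne m s with rfl | hm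
      · exact φ_apply_of_notMem hl hs' v
      · rw [← (φ_rowHom (D := D) (s := s) a (D.φ l v)).1 m hm, ← Module.End.mul_apply, h]
    rw [hl1, mul_one] at h
    rw [rowHom_eq_one h, ih hl hl1, one_mul]

end SteinbergData

namespace FreeGroup

section CommonPrefix

variable {β : Type*} [DecidableEq β]

/-- The length of the longest common prefix of two lists. -/
def cpl : List β → List β → ℕ
  | a :: l, b :: m => if a = b then cpl l m + 1 else 0
  | _, _ => 0

lemma cpl_comm (l m : List β) : cpl l m = cpl m l := by
  induction l generalizing m with
  | nil => cases m <;> rfl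
  | cons a l ih =>
    cases m with
    | nil => rfl
    | cons b m => simp only [cpl, ih m, eq_comm]

lemma exists_append_of_cpl (l m : List β) : ∃ p a b, l = p ++ a ∧ m = p ++ b ∧
    p.length = cpl l m ∧ ∀ y ∈ a.head?, ∀ z ∈ b.head?, y ≠ z := by
  induction l generalizing m with
  | nil => exact ⟨[], [], m, by simp [cpl]⟩
  | cons c l ih =>
    cases m with
    | nil => exact ⟨[], c :: l, [], by simp [cpl]⟩
    | cons e m =>
      by_cases h : c = e
      · subst h
        obtain ⟨p, a, b, h1, h2, h3, h4⟩ := ih m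
        exact ⟨c :: p, a, b, by simp [h1], by simp [h2], by simp [cpl, h3], h4⟩
      · exact ⟨[], c :: l, e :: m, by simp [cpl, h]⟩

lemma min_cpl_le (l m k : List β) : min (cpl l m) (cpl m k) ≤ cpl l k := by
  induction l generalizing m k with
  | nil => cases m <;> simp [cpl]
  | cons a l ih =>
    rcases m with _ | ⟨b, m⟩
    · simp [cpl]
    rcases k with _ | ⟨c, k⟩
    · simp [cpl]
    have := ih m k
    simp only [cpl]
    split_ifs <;> simp_all

end CommonPrefix

variable {α : Type*} [DecidableEq α]

/-- The length of the longest common prefix of the reduced words of `x` and `y`. -/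
def common (x y : FreeGroup α) : ℕ := cpl x.toWord y.toWord

lemma common_comm (x y : FreeGroup α) : common x y = common y x := cpl_comm _ _

lemma min_common_le (x y z : FreeGroup α) : min (common x y) (common y z) ≤ common x z :=
  min_cpl_le _ _ _

lemma common_eq_of_lt {x y z : FreeGroup α} (h : common x y < common y z) :
    common x z = common x y := by
  have h1 := min_common_le x y z
  have h2 := min_common_le x z y
  rw [common_comm z y] at h2
  omega

lemma norm_inv_mul (x y : FreeGroup α) :
    norm (x⁻¹ * y) + 2 * common x y = norm x + norm y := by
  obtain ⟨p, a, b, hx, hy, hp, hab⟩ := exists_append_of_cpl x.toWord y.toWord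
  have hxr : IsReduced a := (List.isChain_append.1 (hx ▸ isReduced_toWord (x := x))).2.1
  have hyr : IsReduced b := (List.isChain_append.1 (hy ▸ isReduced_toWord (x := y))).2.1
  have hxr' : IsReduced (invRev a) := by
    rw [isReduced_iff_reduce_eq, reduce_invRev, hxr.reduce_eq]
  have hred : IsReduced (invRev a ++ b) := by
    refine List.isChain_append.2 ⟨hxr', hyr, ?_⟩
    intro y hy z hz hyz
    have hy' : (y.1, !y.2) ∈ a.head? := by
      cases a with
      | nil => simp [invRev] at hy
      | cons c a =>
        simp only [invRev, List.map_cons, List.reverse_cons, List.getLast?_append,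
          List.getLast?_singleton, Option.some_or, Option.mem_def, Option.some.injEq] at hy
        simp [← hy]
    have := hab _ hy' z hz
    by_contra h
    apply this
    ext
    · exact hyz
    · revert h; cases y.2 <;> cases z.2 <;> simp
  have e : x⁻¹ * y = mk (invRev a ++ b) := by
    rw [← mk_toWord (x := x), ← mk_toWord (x := y), hx, hy, ← mul_mk, ← mul_mk, ← mul_mk,
      _root_.mul_inv_rev, inv_mk (L := a)]
    group
  rw [common, ← hp, norm, norm, norm, e, toWord_mk, hred.reduce_eq, hx, hy]
  simp only [List.length_append, invRev_length]
  omega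

lemma norm_mul_add (x y : FreeGroup α) :
    norm (x * y) + 2 * common x⁻¹ y = norm x + norm y := by
  have := norm_inv_mul x⁻¹ y
  rwa [inv_inv, norm_inv_eq] at this

lemma two_mul_common_inv_self_lt {x : FreeGroup α} (hx : x ≠ 1) :
    2 * common x⁻¹ x < norm x := by
  obtain ⟨p, a, b, h1, h2, hp, -⟩ := exists_append_of_cpl x⁻¹.toWord x.toWord
  have hlen : x.toWord.length ≠ 0 := by
    rwa [Ne, List.length_eq_zero_iff, toWord_eq_nil_iff]
  have key : ∀ i, i < p.length → i < x.toWord.length →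
      (x.toWord[i]?) = (x.toWord[x.toWord.length - 1 - i]?).map fun y => (y.1, !y.2) := by
    intro i hi hi'
    have e1 : x.toWord[i]? = x⁻¹.toWord[i]? := by
      rw [h1, h2, List.getElem?_append_left hi, List.getElem?_append_left hi]
    rw [e1, toWord_inv, invRev, List.getElem?_reverse (by simpa using hi'), List.getElem?_map,
      List.length_map]
  have hred := isReduced_toWord (x := x)
  rw [common, ← hp, norm]
  by_contra hcon
  generalize x.toWord = w at *
  obtain ⟨k, hk | hk⟩ := Nat.even_or_odd' w.length
  · have := key (k - 1) (by omega) (by omega)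
    rw [show w.length - 1 - (k - 1) = k by omega, List.getElem?_eq_getElem (by omega),
      List.getElem?_eq_getElem (by omega), Option.map_some, Option.some_inj] at this
    have h3 := List.isChain_iff_getElem.1 hred (k - 1) (by omega)
    simp only [show k - 1 + 1 = k by omega] at h3
    rw [this] at h3
    simp at h3
  · have := key k (by omega) (by omega)
    rw [show w.length - 1 - k = k by omega, List.getElem?_eq_getElem (by omega),
      Option.map_some, Option.some_inj] at this
    have := congrArg Prod.snd this
    simp at this

lemma toWord_mk_of_norm_eq {L : List (α × Bool)} (h : norm (mk L) = L.length) :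
    (mk L).toWord = L := by
  rw [toWord_mk]
  exact (reduce.red (L := L)).sublist.eq_of_length (by rw [← toWord_mk]; exact h)

/-- The value of a signed letter under an assignment of the generators. -/
def letter {G : Type*} [Group G] (u : α → G) (a : α × Bool) : G := cond a.2 (u a.1) (u a.1)⁻¹

lemma letter_flip {β G : Type*} [Group G] (u : β → G) (a : β × Bool) :
    letter u (a.1, !a.2) = (letter u a)⁻¹ := by
  rcases a with ⟨i, _ | _⟩ <;> simp [letter]

lemma length_add_common_le {β γ : Type*} [DecidableEq γ] {u : β → FreeGroup γ}
    (h0 : ∀ a, letter u a ≠ 1)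
    (h1 : ∀ a b : β × Bool, (a.1 = b.1 → a.2 = b.2) →
      2 * common (letter u a)⁻¹ (letter u b) ≤ norm (letter u b))
    (h2 : ∀ a b c : β × Bool, (a.1 = b.1 → a.2 = b.2) → (b.1 = c.1 → b.2 = c.2) →
      common (letter u a)⁻¹ (letter u b) + common (letter u b)⁻¹ (letter u c) < norm (letter u b))
    (W : List (β × Bool)) : ∀ b, IsReduced (b :: W) →
    W.length + 1 ≤ norm (((b :: W).map (letter u)).prod) ∧
    ∀ a : β × Bool, (a.1 = b.1 → a.2 = b.2) →
      common (letter u a)⁻¹ ((b :: W).map (letter u)).prod =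
        common (letter u a)⁻¹ (letter u b) ∧
      W.length + 1 + common (letter u a)⁻¹ (letter u b) ≤
        norm (((b :: W).map (letter u)).prod) := by
  induction W with
  | nil =>
    intro b _
    have hb : norm (letter u b) ≠ 0 := by rw [Ne, norm_eq_zero]; exact h0 b
    simp only [List.map_cons, List.map_nil, List.prod_cons, List.prod_nil, mul_one,
      List.length_nil]
    refine ⟨by omega, fun a hab => ⟨trivial, ?_⟩⟩
    have := h1 a b hab
    omega
  | cons c W ih =>
    intro b hW
    rw [isReduced_cons_cons] at hW
    obtain ⟨hbc, hW⟩ := hW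
    obtain ⟨-, hP⟩ := ih c hW
    obtain ⟨hd, hQ⟩ := hP b hbc
    rw [List.map_cons, List.prod_cons]
    set P := ((c :: W).map (letter u)).prod
    have e1 := norm_mul_add (letter u b) P
    have e2 := norm_inv_mul (letter u b * P) (letter u b)
    rw [show (letter u b * P)⁻¹ * letter u b = P⁻¹ by group, norm_inv_eq] at e2
    rw [hd] at e1
    have hb := h2 b b c (fun _ => rfl) hbc
    rw [List.length_cons]
    refine ⟨by omega, fun a hab => ?_⟩
    have hN := h2 a b c hab hbc
    refine ⟨common_eq_of_lt ?_, by omega⟩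
    rw [common_comm (letter u b)]
    omega

/-- If a Nielsen reduced tuple generates, every generator is a signed member of the tuple. -/
lemma exists_letter_eq_of {β γ : Type*} [DecidableEq β] [DecidableEq γ] {u : β → FreeGroup γ}
    (h0 : ∀ a, letter u a ≠ 1)
    (h1 : ∀ a b : β × Bool, (a.1 = b.1 → a.2 = b.2) →
      2 * common (letter u a)⁻¹ (letter u b) ≤ norm (letter u b))
    (h2 : ∀ a b c : β × Bool, (a.1 = b.1 → a.2 = b.2) → (b.1 = c.1 → b.2 = c.2) →
      common (letter u a)⁻¹ (letter u b) + common (letter u b)⁻¹ (letter u c) < norm (letter u b))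
    (hs : Function.Surjective (lift u)) (k : γ) :
    ∃ b, letter u b = of k := by
  obtain ⟨w, hw⟩ := hs (of k)
  rw [← mk_toWord (x := w), lift_mk] at hw
  change (w.toWord.map (letter u)).prod = of k at hw
  have hr := isReduced_toWord (x := w)
  generalize w.toWord = V at hw hr
  rcases V with _ | ⟨b, W⟩
  · exact absurd hw (by simp [one_ne_of])
  · have := (length_add_common_le h0 h1 h2 W b hr).1
    rw [hw, norm_of] at this
    have hW : W = [] := List.length_eq_zero_iff.1 (by omega)
    subst hW
    exact ⟨b, by simpa using hw⟩

section Encoding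

variable [Fintype α]

/-- The value of a word read as a numeral. -/
noncomputable def enc {β : Type*} [Fintype β] : List (β × Bool) → ℕ
  | [] => 0
  | a :: l => Fintype.equivFin (β × Bool) a * Fintype.card (β × Bool) ^ l.length + enc l

lemma enc_append {β : Type*} [Fintype β] (p z : List (β × Bool)) :
    enc (p ++ z) = enc p * Fintype.card (β × Bool) ^ z.length + enc z := by
  induction p with
  | nil => simp [enc]
  | cons a p ih => simp only [List.cons_append, enc, ih, List.length_append, pow_add]; ring

lemma enc_lt {β : Type*} [Fintype β] (p : List (β × Bool)) :
    enc p < Fintype.card (β × Bool) ^ p.length := by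
  induction p with
  | nil => simp [enc]
  | cons a p ih =>
    have := (Fintype.equivFin (β × Bool) a).2
    simp only [enc, List.length_cons, pow_succ]
    nlinarith

lemma eq_of_enc_eq {β : Type*} [Fintype β] {p q : List (β × Bool)} (hl : p.length = q.length)
    (h : enc p = enc q) : p = q := by
  induction p generalizing q with
  | nil => exact (List.length_eq_zero_iff.1 hl.symm).symm
  | cons a p ih =>
    rcases q with _ | ⟨b, q⟩
    · simp at hl
    simp only [List.length_cons, Nat.add_right_cancel_iff] at hl
    simp only [enc, hl] at h
    have hp := enc_lt p
    have hq := enc_lt q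
    rw [hl] at hp
    set B := Fintype.card (β × Bool) ^ q.length
    have e1 := congrArg (· / B) h
    have e2 := congrArg (· % B) h
    have hB : 0 < B := by omega
    simp only [mul_comm _ B, Nat.mul_add_div hB, Nat.mul_add_mod, Nat.div_eq_of_lt hp,
      Nat.div_eq_of_lt hq, Nat.mod_eq_of_lt hp, Nat.mod_eq_of_lt hq, add_zero] at e1 e2
    rw [ih hl e2, (Fintype.equivFin (β × Bool)).injective (Fin.ext e1)]

lemma enc_le_of_append {β : Type*} [Fintype β] {p q z : List (β × Bool)}
    (h : enc (p ++ z) ≤ enc (q ++ z)) : enc p ≤ enc q := by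
  rw [enc_append, enc_append, Nat.add_le_add_iff_right] at h
  rcases Nat.eq_zero_or_pos (Fintype.card (β × Bool) ^ z.length) with h0 | h0
  · have := enc_lt z
    omega
  · exact Nat.le_of_mul_le_mul_right h h0

/-- The secondary complexity of a reduced word: the numerals of the first halves of the word and
of its inverse. -/
noncomputable def halves (x : FreeGroup α) : ℕ :=
  enc (x.toWord.take ((norm x + 1) / 2)) + enc (x⁻¹.toWord.take ((norm x + 1) / 2))

lemma halves_inv (x : FreeGroup α) : halves x⁻¹ = halves x := by
  rw [halves, halves, inv_inv, norm_inv_eq, add_comm]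

lemma enc_le_of_halves_le {x y : FreeGroup α} {p q z : List (α × Bool)}
    (hx : x.toWord = p ++ z) (hy : y.toWord = q ++ z) (hpq : p.length = q.length)
    (hz : p.length ≤ z.length) (h : halves x ≤ halves y) : enc p ≤ enc q := by
  have hnx : norm x = p.length + z.length := by rw [norm, hx, List.length_append]
  have hny : norm y = p.length + z.length := by rw [norm, hy, List.length_append, hpq]
  rw [halves, halves, toWord_inv, toWord_inv, hx, hy, hnx, hny, invRev_append, invRev_append,
    List.take_append_of_le_length (l₁ := invRev z) (by rw [invRev_length]; omega),
    List.take_append_of_le_length (l₁ := invRev z) (by rw [invRev_length]; omega),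
    Nat.add_le_add_iff_right, List.take_append, List.take_append,
    List.take_of_length_le (l := p) (by omega), List.take_of_length_le (l := q) (by omega),
    hpq] at h
  exact enc_le_of_append h

/-- Two elements cancelling opposite halves of a middle one cannot both be minimal. -/
lemma common_add_common_lt {x y z : FreeGroup α} (hy : y ≠ 1)
    (hxy : 2 * common x⁻¹ y ≤ norm x) (hyx : 2 * common x⁻¹ y ≤ norm y)
    (hyz : 2 * common y⁻¹ z ≤ norm y) (hzy : 2 * common y⁻¹ z ≤ norm z)
    (hx : norm (x * y) = norm x → halves x ≤ halves (x * y))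
    (hz : norm (y * z) = norm z → halves z ≤ halves (y * z)) :
    common x⁻¹ y + common y⁻¹ z < norm y := by
  by_contra hcon
  have ex := norm_mul_add x y
  have ez := norm_mul_add y z
  have nx : norm (x * y) = norm x := by omega
  have nz : norm (y * z) = norm z := by omega
  obtain ⟨p, a, b, hp1, hp2, hp, -⟩ := exists_append_of_cpl x⁻¹.toWord y.toWord
  obtain ⟨q, c, e, hq1, hq2, hq, -⟩ := exists_append_of_cpl y⁻¹.toWord z.toWord
  change p.length = common x⁻¹ y at hp
  change q.length = common y⁻¹ z at hq
  have hpq : p.length = q.length := by omega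
  have ly : y.toWord.length = p.length + q.length := by change norm y = _; omega
  have lx : norm x = p.length + a.length := by
    rw [← norm_inv_eq, norm, hp1, List.length_append]
  have lz : norm z = q.length + e.length := by rw [norm, hq2, List.length_append]
  have hyw : y.toWord = p ++ invRev q := by
    have h1 : y.toWord = invRev c ++ invRev q := by
      rw [← invRev_append, ← hq1, toWord_inv, invRev_invRev]
    have : p = invRev c := by
      have hl : p.length = (invRev c).length := by
        have := congrArg List.length h1
        rw [List.length_append, invRev_length, invRev_length] at this
        rw [invRev_length]; omega
      exact (List.append_inj (hp2.symm.trans h1) hl).1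
    rw [h1, this]
  have my : y = mk p * (mk q)⁻¹ := by
    rw [← mk_toWord (x := y), hyw, ← mul_mk, inv_mk]
  have mx : x⁻¹ = mk p * mk a := by rw [← mk_toWord (x := x⁻¹), hp1, mul_mk]
  have mz : z = mk q * mk e := by rw [← mk_toWord (x := z), hq2, mul_mk]
  have wyz : (y * z).toWord = p ++ e := by
    have h1 : y * z = mk (p ++ e) := by rw [my, mz, ← mul_mk]; group
    rw [h1] at nz ⊢
    exact toWord_mk_of_norm_eq (by rw [nz, lz, List.length_append, hpq])
  have wxy : (x * y)⁻¹.toWord = q ++ a := by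
    have h1 : (x * y)⁻¹ = mk (q ++ a) := by rw [_root_.mul_inv_rev, my, mx, ← mul_mk]; group
    rw [← norm_inv_eq, h1] at nx
    rw [h1]
    exact toWord_mk_of_norm_eq (by rw [nx, lx, List.length_append, hpq])
  have l1 : enc q ≤ enc p :=
    enc_le_of_halves_le hq2 wyz hpq.symm (by omega) (hz nz)
  have l2 : enc p ≤ enc q := by
    refine enc_le_of_halves_le hp1 wxy hpq (by omega) ?_
    rw [halves_inv, halves_inv]
    exact hx nx
  have := eq_of_enc_eq hpq (le_antisymm l2 l1)
  apply hy
  rw [my, this, mul_inv_cancel]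

/-- A generating tuple that cannot be shortened by multiplying one member by
another contains every generator up to inversion. -/
theorem exists_letter_eq_of_minimal {u : α → FreeGroup α}
    (hinj : ∀ i, u i ≠ 1) (hs : Function.Surjective (lift u))
    (hmin : ∀ a b : α × Bool, a.1 ≠ b.1 →
      norm (letter u a) ≤ norm (letter u a * letter u b) ∧
      (norm (letter u a * letter u b) = norm (letter u a) →
        halves (letter u a) ≤ halves (letter u a * letter u b))) (k : α) :
    ∃ b, letter u b = of k := by
  have h0 : ∀ a, letter u a ≠ 1 := by
    rintro ⟨i, _ | _⟩ <;> simpa [letter] using hinj i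
  have hmin' : ∀ a b : α × Bool, a.1 ≠ b.1 →
      norm (letter u b) ≤ norm (letter u a * letter u b) ∧
      (norm (letter u a * letter u b) = norm (letter u b) →
        halves (letter u b) ≤ halves (letter u a * letter u b)) := by
    intro a b hab
    have := hmin (b.1, !b.2) (a.1, !a.2) hab.symm
    rwa [letter_flip, letter_flip, ← _root_.mul_inv_rev, norm_inv_eq, norm_inv_eq, halves_inv,
      halves_inv] at this
  have h1 : ∀ a b : α × Bool, (a.1 = b.1 → a.2 = b.2) →
      2 * common (letter u a)⁻¹ (letter u b) ≤ norm (letter u a) ∧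
      2 * common (letter u a)⁻¹ (letter u b) ≤ norm (letter u b) := by
    intro a b hab
    by_cases h : a.1 = b.1
    · obtain rfl : a = b := Prod.ext h (hab h)
      have := two_mul_common_inv_self_lt (h0 a)
      omega
    · have e1 := norm_mul_add (letter u a) (letter u b)
      have e2 := (hmin a b h).1
      have e3 := (hmin' a b h).1
      omega
  refine exists_letter_eq_of h0 (fun a b hab => (h1 a b hab).2) ?_ hs k
  intro a b c hab hbc
  by_cases h : a.1 = b.1
  · obtain rfl : a = b := Prod.ext h (hab h)
    have := two_mul_common_inv_self_lt (h0 a)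
    have := (h1 a c hbc).1
    omega
  by_cases h' : b.1 = c.1
  · obtain rfl : b = c := Prod.ext h' (hbc h')
    have := two_mul_common_inv_self_lt (h0 b)
    have := (h1 a b hab).2
    omega
  exact common_add_common_lt (h0 b) (h1 a b hab).1 (h1 a b hab).2 (h1 b c hbc).1 (h1 b c hbc).2
    (hmin a b h).2 (hmin' b c h').2

end Encoding

end FreeGroup

namespace NormalClosurePaper

variable {n : ℕ}

lemma FrAut.ext {f g : FrAut n} (h : ∀ k, f (FreeGroup.of k) = g (FreeGroup.of k)) : f = g :=
  MulEquiv.toMonoidHom_injective (FreeGroup.ext_hom _ _ h)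

/-- An automorphism given by the images of the generators under it and under its inverse. -/
def ofImages (u v : Fin n → FreeGroup (Fin n)) (huv : ∀ k, FreeGroup.lift u (v k) = FreeGroup.of k)
    (hvu : ∀ k, FreeGroup.lift v (u k) = FreeGroup.of k) : FrAut n :=
  MonoidHom.toMulEquiv (FreeGroup.lift u) (FreeGroup.lift v)
    (FreeGroup.ext_hom _ _ fun k => by simp [hvu]) (FreeGroup.ext_hom _ _ fun k => by simp [huv])

lemma ofImages_apply (u v : Fin n → FreeGroup (Fin n)) (huv) (hvu) (k : Fin n) :
    ofImages u v huv hvu (FreeGroup.of k) = u k :=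
  FreeGroup.lift_apply_of (f := u)

lemma lift_shear {i j : Fin n} (h : i ≠ j) (s t : ℤ) (k : Fin n) :
    FreeGroup.lift (Function.update FreeGroup.of j
      (FreeGroup.of i ^ s * FreeGroup.of j * FreeGroup.of i ^ t))
      (Function.update FreeGroup.of j
        (FreeGroup.of i ^ (-s) * FreeGroup.of j * FreeGroup.of i ^ (-t)) k) =
      FreeGroup.of k := by
  by_cases hk : k = j
  · subst hk
    simp [h, mul_assoc]
  · simp [hk]

/-- The automorphism `x_j ↦ x_i ^ s * x_j * x_i ^ t`. -/
def shear (i j : Fin n) (s t : ℤ) : FrAut n :=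
  if h : i = j then 1 else
    ofImages
      (Function.update FreeGroup.of j (FreeGroup.of i ^ s * FreeGroup.of j * FreeGroup.of i ^ t))
      (Function.update FreeGroup.of j
        (FreeGroup.of i ^ (-s) * FreeGroup.of j * FreeGroup.of i ^ (-t)))
      (lift_shear h s t) (by simpa using lift_shear h (-s) (-t))

lemma shear_apply_self {i j : Fin n} (h : i ≠ j) (s t : ℤ) :
    shear i j s t (FreeGroup.of j) = FreeGroup.of i ^ s * FreeGroup.of j * FreeGroup.of i ^ t := by
  rw [shear, dif_neg h, ofImages_apply, Function.update_self]

lemma shear_apply_of_ne {i j k : Fin n} (h : k ≠ j) (s t : ℤ) :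
    shear i j s t (FreeGroup.of k) = FreeGroup.of k := by
  rw [shear]
  split_ifs
  · rfl
  · rw [ofImages_apply, Function.update_of_ne h]

lemma shear_mul {i j : Fin n} (h : i ≠ j) (s t s' t' : ℤ) :
    shear i j s t * shear i j s' t' = shear i j (s + s') (t + t') := by
  refine FrAut.ext fun k => ?_
  by_cases hk : k = j
  · subst hk
    simp only [MulAut.mul_apply, shear_apply_self h, _root_.map_mul, map_zpow,
      shear_apply_of_ne h, add_comm s, _root_.zpow_add, mul_assoc]
  · simp only [MulAut.mul_apply, shear_apply_of_ne hk]

lemma shear_zero (i j : Fin n) : shear i j 0 0 = 1 := by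
  refine FrAut.ext fun k => ?_
  by_cases hk : k = j
  · subst hk
    by_cases h : i = k
    · simp [shear, h]
    · simp [shear_apply_self h]
  · simp [shear_apply_of_ne hk]

lemma shear_zpow {i j : Fin n} (h : i ≠ j) (s t m : ℤ) :
    shear i j s t ^ m = shear i j (m * s) (m * t) := by
  induction m with
  | zero => simp [shear_zero]
  | succ m ih => rw [_root_.zpow_add_one, ih, shear_mul h]; congr 1 <;> ring
  | pred m ih =>
    have : (shear i j s t)⁻¹ = shear i j (-s) (-t) :=
      inv_eq_of_mul_eq_one_right (by rw [shear_mul h]; simp [shear_zero])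
    rw [_root_.zpow_sub_one, ih, this, shear_mul h]; congr 1 <;> ring

/-- The automorphism permuting the generators. -/
def permAut (n : ℕ) : Equiv.Perm (Fin n) →* FrAut n where
  toFun σ := FreeGroup.freeGroupCongr σ
  map_one' := FrAut.ext fun k => by simp
  map_mul' σ τ := FrAut.ext fun k => by simp [MulAut.mul_apply]

lemma permAut_apply (σ : Equiv.Perm (Fin n)) (k : Fin n) :
    permAut n σ (FreeGroup.of k) = FreeGroup.of (σ k) := by
  simp [permAut]

lemma lift_zpow_unit (d e : Fin n → ℤˣ) (k : Fin n) :
    FreeGroup.lift (fun k => FreeGroup.of k ^ ((d k : ℤˣ) : ℤ))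
        (FreeGroup.of k ^ ((e k : ℤˣ) : ℤ)) =
      FreeGroup.of k ^ ((d k * e k : ℤˣ) : ℤ) := by
  rw [map_zpow, FreeGroup.lift_apply_of, ← _root_.zpow_mul, Units.val_mul]

/-- The automorphism `x_k ↦ x_k ^ d k`. -/
def signAut (n : ℕ) : (Fin n → ℤˣ) →* FrAut n where
  toFun d := ofImages (fun k => FreeGroup.of k ^ ((d k : ℤˣ) : ℤ))
    (fun k => FreeGroup.of k ^ ((d k : ℤˣ) : ℤ))
    (fun k => by rw [lift_zpow_unit, Int.units_mul_self]; simp)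
    (fun k => by rw [lift_zpow_unit, Int.units_mul_self]; simp)
  map_one' := FrAut.ext fun k => by simp [ofImages_apply]
  map_mul' d e := FrAut.ext fun k => by
    rw [MulAut.mul_apply, ofImages_apply, ofImages_apply]
    exact (lift_zpow_unit d e k).symm

lemma signAut_apply (d : Fin n → ℤˣ) (k : Fin n) :
    signAut n d (FreeGroup.of k) = FreeGroup.of k ^ ((d k : ℤˣ) : ℤ) :=
  FreeGroup.lift_apply_of (f := fun k => FreeGroup.of k ^ ((d k : ℤˣ) : ℤ))

lemma permAut_mul_shear (σ : Equiv.Perm (Fin n)) {i j : Fin n} (h : i ≠ j) (s t : ℤ) :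
    permAut n σ * shear i j s t = shear (σ i) (σ j) s t * permAut n σ := by
  have h' : σ i ≠ σ j := σ.injective.ne h
  refine FrAut.ext fun k => ?_
  by_cases hk : k = j
  · subst hk
    simp [MulAut.mul_apply, shear_apply_self h, shear_apply_self h', permAut_apply]
  · simp [MulAut.mul_apply, shear_apply_of_ne hk, shear_apply_of_ne (σ.injective.ne hk),
      permAut_apply]

lemma signAut_mul_shear (d : Fin n → ℤˣ) {i j : Fin n} (h : i ≠ j) (s t : ℤ) :
    signAut n d * shear i j s t =
      (if d j = 1 then shear i j (d i * s) (d i * t) else shear i j (-(d i * t)) (-(d i * s))) *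
        signAut n d := by
  refine FrAut.ext fun k => ?_
  by_cases hk : k = j
  · subst hk
    rcases Int.units_eq_one_or (d k) with hd | hd
    · simp [MulAut.mul_apply, shear_apply_self h, signAut_apply, hd, _root_.zpow_mul]
    · simp [MulAut.mul_apply, shear_apply_self h, signAut_apply, hd, _root_.zpow_mul, mul_assoc]
  · split_ifs <;> simp [MulAut.mul_apply, shear_apply_of_ne hk, signAut_apply]

lemma permAut_mul_signAut (σ : Equiv.Perm (Fin n)) (d : Fin n → ℤˣ) :
    permAut n σ * signAut n d = signAut n (d ∘ σ.symm) * permAut n σ :=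
  FrAut.ext fun k => by simp [MulAut.mul_apply, signAut_apply, permAut_apply]

lemma shear_mul_shear_chain {i j k : Fin n} (hij : i ≠ j) (hjk : j ≠ k) (hik : i ≠ k) :
    shear i j 0 1 * shear j k 0 1 = shear j k 0 1 * shear i k 0 1 * shear i j 0 1 := by
  refine FrAut.ext fun m => ?_
  by_cases hm : m = k
  · subst hm
    simp [MulAut.mul_apply, shear_apply_self, shear_apply_of_ne, hij, hjk, hik, hjk.symm, mul_assoc]
  by_cases hm' : m = j
  · subst hm'
    simp [MulAut.mul_apply, shear_apply_self, shear_apply_of_ne, hij, hjk, hik, mul_assoc]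
  · simp [MulAut.mul_apply, shear_apply_of_ne, hm, hm']

lemma shear_mul_shear_comm {i j k l : Fin n} (hjl : j ≠ l) (hjk : j ≠ k) (hil : i ≠ l)
    (s t s' t' : ℤ) :
    shear i j s t * shear k l s' t' = shear k l s' t' * shear i j s t := by
  refine FrAut.ext fun m => ?_
  by_cases hij : i = j
  · simp [shear, hij]
  by_cases hkl : k = l
  · simp [shear, hkl]
  by_cases hm : m = j
  · subst hm
    simp [MulAut.mul_apply, shear_apply_self, shear_apply_of_ne, hij, hjl, hil, mul_assoc]
  by_cases hm' : m = l
  · subst hm'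
    simp [MulAut.mul_apply, shear_apply_self, shear_apply_of_ne, hkl, hjl.symm, hjk.symm, mul_assoc]
  · simp [MulAut.mul_apply, shear_apply_of_ne, hm, hm']

lemma shear_mul_shear_comm_same {i j k : Fin n} (hij : i ≠ j) (hkj : k ≠ j) (s t : ℤ) :
    shear i j s 0 * shear k j 0 t = shear k j 0 t * shear i j s 0 := by
  refine FrAut.ext fun m => ?_
  by_cases hm : m = j
  · subst hm
    simp [MulAut.mul_apply, shear_apply_self, shear_apply_of_ne, hij, hkj, mul_assoc]
  · simp [MulAut.mul_apply, shear_apply_of_ne, hm]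

lemma shear_swap {i j : Fin n} (h : i ≠ j) : shear j i 0 1 =
    shear i j 1 0 * permAut n (Equiv.swap i j) * signAut n (Pi.mulSingle j (-1)) *
      shear i j 0 1 := by
  refine FrAut.ext fun m => ?_
  by_cases hm : m = j
  · subst hm
    simp [MulAut.mul_apply, shear_apply_self, shear_apply_of_ne, h, h.symm, signAut_apply,
      permAut_apply, mul_assoc]
  by_cases hm' : m = i
  · subst hm'
    simp [MulAut.mul_apply, shear_apply_self, shear_apply_of_ne, h, h.symm, signAut_apply,
      permAut_apply, mul_assoc]
  · simp [MulAut.mul_apply, shear_apply_of_ne, hm, hm', signAut_apply, permAut_apply,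
      Equiv.swap_apply_of_ne_of_ne]

lemma mat_shear {i j : Fin n} (h : i ≠ j) (s t : ℤ) :
    mat (shear i j s t) = 1 + Matrix.single i j (s + t) := by
  ext a b
  by_cases hb : b = j
  · subst hb
    simp only [mat, of_apply, shear_apply_self h, _root_.map_mul, map_zpow, expSum,
      FreeGroup.lift_apply_of, Matrix.add_apply, Matrix.one_apply, single_apply]
    simp [toAdd_mul, toAdd_zpow, eq_comm]
    split_ifs <;> ring
  · simp [mat, shear_apply_of_ne hb, expSum, Matrix.one_apply, eq_comm, Ne.symm hb]

lemma mat_permAut (σ : Equiv.Perm (Fin n)) (a b : Fin n) :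
    mat (permAut n σ) a b = if σ b = a then 1 else 0 := by
  simp [mat, permAut_apply, expSum]

lemma mat_signAut (d : Fin n → ℤˣ) : mat (signAut n d) = diagonal fun k => (d k : ℤ) := by
  ext a b
  simp [mat, signAut_apply, expSum, diagonal_apply, toAdd_zpow]
  aesop

/-- The normal closure of the conjugations of one generator by another. -/
def conjClosure (n : ℕ) : Subgroup (FrAut n) :=
  Subgroup.normalClosure {g | ∃ i j, i ≠ j ∧ g = shear i j 1 (-1)}

instance conjClosure_normal (n : ℕ) : (conjClosure n).Normal :=
  Subgroup.normalClosure_normal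

lemma mk_shear {i j : Fin n} (h : i ≠ j) (s t : ℤ) :
    (shear i j s t : FrAut n ⧸ conjClosure n) =
      (shear i j 0 1 : FrAut n ⧸ conjClosure n) ^ (s + t) := by
  have h1 : shear i j s t = shear i j 1 (-1) ^ s * shear i j 0 1 ^ (s + t) := by
    rw [shear_zpow h, shear_zpow h, shear_mul h]
    congr 1 <;> ring
  have h2 : (shear i j 1 (-1) : FrAut n ⧸ conjClosure n) = 1 :=
    (QuotientGroup.eq_one_iff _).2 (Subgroup.subset_normalClosure ⟨i, j, h, rfl⟩)
  rw [h1, QuotientGroup.mk_mul, QuotientGroup.mk_zpow, QuotientGroup.mk_zpow, h2, _root_.one_zpow,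
    one_mul]

lemma mat_eq_one_of_mem_conjClosure {g : FrAut n} (hg : g ∈ conjClosure n) : matHom n g = 1 := by
  suffices conjClosure n ≤ (matHom n).ker from this hg
  refine Subgroup.normalClosure_le_normal ?_
  rintro _ ⟨i, j, h, rfl⟩
  change mat _ = 1
  simp [mat_shear h]

/-- The action of `Aut(F_n)` modulo conjugations on `ℤ ^ n`. -/
def quotAction (n : ℕ) : FrAut n ⧸ conjClosure n →* Module.End ℤ (Fin n → ℤ) :=
  QuotientGroup.lift (conjClosure n)
    (((Matrix.toLinAlgEquiv' : Matrix (Fin n) (Fin n) ℤ ≃ₐ[ℤ] _) : _ →* _).comp (matHom n))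
    fun g hg => by simp [mat_eq_one_of_mem_conjClosure hg]

lemma quotAction_mk (g : FrAut n) (v : Fin n → ℤ) : quotAction n g v = mat g *ᵥ v := rfl

/-- The Steinberg relations in the quotient of `Aut(F_n)` by the conjugations. -/
def steinbergData (n : ℕ) : SteinbergData (Fin n) (FrAut n ⧸ conjClosure n) where
  x i j := (shear i j 0 1 : FrAut n)
  P := (QuotientGroup.mk' _).comp (permAut n)
  δ := (QuotientGroup.mk' _).comp (signAut n)
  φ := quotAction n
  comm := by
    intro i j k l hij hkl hjk hil
    by_cases hjl : j = l
    · subst hjl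
      have h1 := mk_shear hij 1 0
      rw [add_zero, zpow_one] at h1
      rw [← h1, ← QuotientGroup.mk_mul, ← QuotientGroup.mk_mul,
        shear_mul_shear_comm_same hij hkl]
    · rw [← QuotientGroup.mk_mul, ← QuotientGroup.mk_mul, shear_mul_shear_comm hjl hjk hil]
  st := by
    intro i j k hij hjk hik
    simp only [← QuotientGroup.mk_mul, shear_mul_shear_chain hij hjk hik]
  P_x := by
    intro σ i j hij
    exact congrArg _ (permAut_mul_shear σ hij 0 1)
  δ_x := by
    intro d i j hij
    have h1 := congrArg (QuotientGroup.mk : _ → FrAut n ⧸ conjClosure n)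
      (signAut_mul_shear d hij 0 1)
    refine h1.trans ?_
    rw [QuotientGroup.mk_mul]
    congr 1
    rcases Int.units_eq_one_or (d j) with hd | hd
    · rw [if_pos hd, mk_shear hij, hd]; simp
    · rw [if_neg (by rw [hd]; decide), mk_shear hij, hd]; simp
  P_δ σ d := congrArg (QuotientGroup.mk : _ → FrAut n ⧸ conjClosure n) (permAut_mul_signAut σ d)
  weyl := by
    intro i j hij
    have h1 := mk_shear hij 1 0
    rw [add_zero, zpow_one] at h1
    rw [← h1]
    exact (congrArg (QuotientGroup.mk : _ → FrAut n ⧸ conjClosure n) (shear_swap hij)).trans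
      (by simp only [QuotientGroup.mk_mul, h1]; rfl)
  φ_x := by
    intro i j hij v
    rw [quotAction_mk, mat_shear hij]
    ext k
    by_cases hk : k = i
    · subst hk
      simp [add_mulVec, single_mulVec]
    · simp [add_mulVec, single_mulVec, hk]
  φ_P σ v := by
    change mat (permAut n σ) *ᵥ v = _
    ext a
    simp only [mulVec, dotProduct, mat_permAut, Function.comp_apply, ← Equiv.eq_symm_apply]
    simp
  φ_δ d v := by
    change mat (signAut n d) *ᵥ v = _
    ext a
    rw [mat_signAut, mulVec_diagonal]

lemma shear_mem_of_forall {A : Subgroup (FrAut n)}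
    (hE : ∀ i j, i ≠ j → shear i j 0 1 ∈ A) (hδ : ∀ d, signAut n d ∈ A) {i j : Fin n} (h : i ≠ j)
    (s : ℤ) : shear i j 0 s ∈ A ∧ shear i j s 0 ∈ A := by
  have h1 : ∀ s, shear i j 0 s ∈ A := fun s => by
    simpa [shear_zpow h] using A.zpow_mem (hE i j h) s
  refine ⟨h1 s, ?_⟩
  have h2 := signAut_mul_shear (Pi.mulSingle j (-1)) h 0 (-s)
  rw [if_neg (by simp)] at h2
  simp only [Pi.mulSingle_eq_of_ne h, Units.val_one, one_mul, neg_neg, neg_zero] at h2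
  rw [eq_mul_inv_of_mul_eq h2.symm]
  exact A.mul_mem (A.mul_mem (hδ _) (h1 _)) (A.inv_mem (hδ _))

/-- The complexity of an automorphism in the Nielsen reduction process. -/
noncomputable def complexity (f : FrAut n) : ℕ ×ₗ ℕ :=
  toLex (∑ k, (f (FreeGroup.of k)).norm, ∑ k, (f (FreeGroup.of k)).halves)

lemma le_of_complexity_le {f g : FrAut n} {i : Fin n}
    (h : ∀ k, k ≠ i → g (FreeGroup.of k) = f (FreeGroup.of k)) (hle : complexity f ≤ complexity g) :
    (f (FreeGroup.of i)).norm ≤ (g (FreeGroup.of i)).norm ∧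
      ((g (FreeGroup.of i)).norm = (f (FreeGroup.of i)).norm →
        (f (FreeGroup.of i)).halves ≤ (g (FreeGroup.of i)).halves) := by
  have key : ∀ F : FreeGroup (Fin n) → ℕ,
      ∑ k, F (g (FreeGroup.of k)) + F (f (FreeGroup.of i)) =
        ∑ k, F (f (FreeGroup.of k)) + F (g (FreeGroup.of i)) := by
    intro F
    rw [← Finset.add_sum_erase _ _ (Finset.mem_univ i),
      ← Finset.add_sum_erase _ (fun k => F (f _)) (Finset.mem_univ i),
      Finset.sum_congr rfl (fun k hk => by rw [h k (Finset.ne_of_mem_erase hk)])]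
    ring
  have h1 := key FreeGroup.norm
  have h2 := key FreeGroup.halves
  rw [complexity, complexity, Prod.Lex.toLex_le_toLex] at hle
  dsimp only at hle
  omega

lemma exists_mul_eq_of_letters {f : FrAut n}
    (h : ∀ k, ∃ b, FreeGroup.letter (fun i => f (FreeGroup.of i)) b = FreeGroup.of k) :
    ∃ σ d, f * permAut n σ = signAut n d := by
  choose b hb using h
  have hpow : ∀ k, f (FreeGroup.of (b k).1) =
      FreeGroup.of k ^ (((if (b k).2 then 1 else -1 : ℤˣ)) : ℤ) := by
    intro k
    have := hb k
    rw [FreeGroup.letter] at this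
    cases h2 : (b k).2
    · rw [h2] at this
      simp [← this]
    · rw [h2] at this
      simpa using this
  have hinj : Function.Injective fun k => (b k).1 := by
    intro k l hkl
    have h1 := (hpow k).symm.trans ((congrArg (fun i => f (FreeGroup.of i)) hkl).trans (hpow l))
    have h2 := congrArg (fun w => (expSum l w).toAdd) h1
    by_contra hne
    simp [expSum, hne, toAdd_zpow] at h2
    split_ifs at h2 <;> simp at h2
  let σ := Equiv.ofBijective _ (Finite.injective_iff_bijective.1 hinj)
  refine ⟨σ, fun k => if (b k).2 then 1 else -1, FrAut.ext fun k => ?_⟩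
  rw [MulAut.mul_apply, permAut_apply, signAut_apply]
  exact hpow k

/-- Nielsen: the elementary, permutation and sign automorphisms generate `Aut(F_n)`. -/
theorem eq_top_of_generators_mem {A : Subgroup (FrAut n)}
    (hE : ∀ i j, i ≠ j → shear i j 0 1 ∈ A) (hP : ∀ σ, permAut n σ ∈ A)
    (hδ : ∀ d, signAut n d ∈ A) : A = ⊤ := by
  refine (Subgroup.eq_top_iff' _).2 fun g => ?_
  obtain ⟨f, hf, hmin⟩ := exists_minimalFor_of_wellFoundedLT (fun f => g⁻¹ * f ∈ A)
    complexity ⟨g, by simp⟩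
  have hmove : ∀ m ∈ A, complexity f ≤ complexity (f * m) := fun m hm =>
    (le_total _ _).elim id fun h => hmin (by simpa [← mul_assoc] using A.mul_mem hf hm) h
  set u : Fin n → FreeGroup (Fin n) := fun i => f (FreeGroup.of i)
  have hlift : ∀ w, FreeGroup.lift u w = f w := fun w =>
    DFunLike.congr_fun (FreeGroup.ext_hom (FreeGroup.lift u) f.toMonoidHom fun k => by simp [u]) w
  obtain ⟨σ, d, h⟩ := exists_mul_eq_of_letters (f := f) <| by
    refine FreeGroup.exists_letter_eq_of_minimal (u := u) ?_ ?_ ?_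
    · intro i
      simp [u]
    · intro w
      exact ⟨f.symm w, by rw [hlift]; exact f.apply_symm_apply w⟩
    · rintro ⟨i, ε⟩ ⟨j, η⟩ hij
      replace hij : j ≠ i := Ne.symm hij
      have hpow : FreeGroup.letter u (j, η) = u j ^ (if η then 1 else -1 : ℤ) := by
        cases η <;> simp [FreeGroup.letter]
      rw [hpow]
      set s : ℤ := if η then 1 else -1
      cases ε
      · have := le_of_complexity_le (i := i) (g := f * shear j i (-s) 0)
          (fun k hk => by rw [MulAut.mul_apply, shear_apply_of_ne hk])
          (hmove _ (shear_mem_of_forall hE hδ hij (-s)).2)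
        rw [MulAut.mul_apply, shear_apply_self hij] at this
        simp only [_root_.map_mul, map_zpow, _root_.zpow_zero, mul_one] at this
        change _ ≤ (u j ^ (-s) * u i).norm ∧ ((u j ^ (-s) * u i).norm = (u i).norm →
          _ ≤ (u j ^ (-s) * u i).halves) at this
        have e : FreeGroup.letter u (i, false) * u j ^ s = (u j ^ (-s) * u i)⁻¹ := by
          simp [FreeGroup.letter]
        rw [e, FreeGroup.norm_inv_eq, FreeGroup.halves_inv]
        simpa [FreeGroup.letter, FreeGroup.halves_inv, u] using this
      · have := le_of_complexity_le (i := i) (g := f * shear j i 0 s)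
          (fun k hk => by rw [MulAut.mul_apply, shear_apply_of_ne hk])
          (hmove _ (shear_mem_of_forall hE hδ hij s).1)
        rw [MulAut.mul_apply, shear_apply_self hij] at this
        simpa [FreeGroup.letter, u] using this
  have hfA : f ∈ A := by
    rw [← Subgroup.mul_mem_cancel_right A (hP σ), h]
    exact hδ d
  exact inv_mem_iff.1 ((Subgroup.mul_mem_cancel_right A hfA).1 hf)

/-- The kernel of `ρ` is normally generated by the conjugations of one generator by another. -/
theorem ker_le_conjClosure : (ρ n).ker ≤ conjClosure n := by
  intro g hg
  have hsub : (steinbergData n).sub Set.univ = ⊤ := by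
    have h := eq_top_of_generators_mem
      (A := ((steinbergData n).sub Set.univ).comap (QuotientGroup.mk' (conjClosure n)))
      (fun i j h => SteinbergData.x_mem_sub (D := steinbergData n) trivial trivial h)
      (fun σ => SteinbergData.P_mem_sub (D := steinbergData n) (by simp))
      (fun d => SteinbergData.δ_mem_sub (D := steinbergData n) (by simp))
    refine (Subgroup.eq_top_iff' _).2 fun q => ?_
    obtain ⟨g, rfl⟩ := QuotientGroup.mk'_surjective _ q
    exact Subgroup.mem_comap.1 (h ▸ Subgroup.mem_top g)
  refine (QuotientGroup.eq_one_iff g).1 ?_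
  refine (steinbergData n).eq_one_of_φ_eq_one Finset.univ (by simp [hsub]) ?_
  refine LinearMap.ext fun v => ?_
  have hm : mat g = 1 := congrArg Units.val (MonoidHom.mem_ker.1 hg)
  exact (quotAction_mk g v).trans (by rw [hm, one_mulVec]; rfl)

lemma mem_of_mat_eq {N : Subgroup (FrAut n)} (hker : (ρ n).ker ≤ N) {g h : FrAut n}
    (hgh : mat g = mat h) (hh : h ∈ N) : g ∈ N := by
  have : ρ n g = ρ n h := Units.ext hgh
  rw [← mul_inv_cancel_left h g]
  exact N.mul_mem hh (hker (by
    rw [MonoidHom.mem_ker, _root_.map_mul, map_inv, this, inv_mul_cancel]))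

lemma mat_inv_mul (g : FrAut n) : mat g⁻¹ * mat g = 1 := by
  rw [← mat_mul, inv_mul_cancel, mat_one]

lemma mat_mul_inv (g : FrAut n) : mat g * mat g⁻¹ = 1 := by
  rw [← mat_mul, mul_inv_cancel, mat_one]

lemma exists_perm_of_ne {α : Type*} [DecidableEq α] {i j k l : α} (hij : i ≠ j) (hkl : k ≠ l) :
    ∃ σ : Equiv.Perm α, σ i = k ∧ σ j = l := by
  refine ⟨Equiv.swap (Equiv.swap i k j) l * Equiv.swap i k, ?_, by simp⟩
  rw [Equiv.Perm.mul_apply, Equiv.swap_apply_left, Equiv.swap_apply_of_ne_of_ne _ hkl]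
  rw [Ne, eq_comm, Equiv.swap_apply_eq_iff, Equiv.swap_apply_right]
  exact hij.symm

lemma shear_mem_of_mem {N : Subgroup (FrAut n)} (hN : N.Normal) {i j k l : Fin n} (hij : i ≠ j)
    (hkl : k ≠ l) {s t : ℤ} (h : shear i j s t ∈ N) : shear k l s t ∈ N := by
  obtain ⟨σ, rfl, rfl⟩ := exists_perm_of_ne hij hkl
  rw [← mul_inv_eq_of_eq_mul (permAut_mul_shear σ hij s t)]
  exact hN.conj_mem _ h _

lemma mat_shear_conj {a b c : Fin n} (hab : a ≠ b) (hbc : b ≠ c) (s : ℤ) (g : FrAut n) (k : Fin n) :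
    mat (shear a b 0 s * g * (shear a b 0 s)⁻¹) k c =
      mat g k c + if k = a then s * mat g b c else 0 := by
  have hinv : (shear a b 0 s)⁻¹ = shear a b 0 (-s) := by
    simpa using shear_zpow hab 0 s (-1)
  rw [hinv, mat_mul, mat_mul, mat_shear hab, mat_shear hab, mul_add, mul_one, Matrix.add_apply,
    mul_single_apply_of_ne _ _ _ _ _ hbc.symm, add_mul, one_mul, Matrix.add_apply, add_zero,
    zero_add]
  split_ifs with hk
  · subst hk
    simp
  · simp [hk]

lemma exists_odd_and_eq_zero {N : Subgroup (FrAut n)} (hN : N.Normal) {c : Fin n} (m : ℕ) :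
    ∀ {a b : Fin n}, a ≠ b → a ≠ c → b ≠ c → ∀ g ∈ N,
      (mat g a c).natAbs + (mat g b c).natAbs < m → Odd (mat g a c) →
      ∃ p q, p ≠ q ∧ p ≠ c ∧ q ≠ c ∧ ∃ h ∈ N, Odd (mat h p c) ∧ mat h q c = 0 := by
  induction m with
  | zero => intros; omega
  | succ m ih =>
    intro a b hab hac hbc g hg hm hodd
    by_cases hb : mat g b c = 0
    · exact ⟨a, b, hab, hac, hbc, g, hg, hodd, hb⟩
    have ha : mat g a c ≠ 0 := by
      intro h
      simp [h] at hodd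
    obtain ⟨s, hs, hs'⟩ : ∃ s : ℤ, (s = 1 ∨ s = -1) ∧
        (mat g b c + s * mat g a c).natAbs < max (mat g a c).natAbs (mat g b c).natAbs ∧
        (mat g a c + s * mat g b c).natAbs < max (mat g a c).natAbs (mat g b c).natAbs := by
      by_cases h : 0 < mat g a c ↔ 0 < mat g b c
      · exact ⟨-1, by simp, by omega⟩
      · exact ⟨1, by simp, by omega⟩
    rcases le_or_gt (mat g a c).natAbs (mat g b c).natAbs with hle | hlt
    · have e := mat_shear_conj hab.symm hac s g
      refine ih hab hac hbc _ (hN.conj_mem g hg (shear b a 0 s)) ?_ ?_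
      · rw [e, e, if_neg hab, if_pos rfl]
        rcases hs with rfl | rfl <;> omega
      · rw [e, if_neg hab, add_zero]
        exact hodd
    · have e := mat_shear_conj hab hbc s g
      by_cases hb' : Odd (mat g b c)
      · refine ih hab.symm hbc hac _ (hN.conj_mem g hg (shear a b 0 s)) ?_ ?_
        · rw [e, e, if_neg hab.symm, if_pos rfl]
          rcases hs with rfl | rfl <;> omega
        · rw [e, if_neg hab.symm, add_zero]
          exact hb'
      · refine ih hab hac hbc _ (hN.conj_mem g hg (shear a b 0 s)) ?_ ?_
        · rw [e, e, if_neg hab.symm, if_pos rfl]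
          rcases hs with rfl | rfl <;> omega
        · rw [e, if_pos rfl]
          exact hodd.add_even ((Int.not_odd_iff_even.1 hb').mul_left s)

lemma exists_odd_entry {g : FrAut n}
    (h : (mat g).map (Int.cast : ℤ → ZMod 2) ≠ 1) : ∃ i j, i ≠ j ∧ Odd (mat g i j) := by
  by_contra! hcon
  apply h
  ext i j
  rw [map_apply, Matrix.one_apply]
  split_ifs with hij
  · subst hij
    rw [← Int.cast_one, ← Int.cast_one, ZMod.intCast_eq_intCast_iff_dvd_sub]
    have h1 : (mat g⁻¹ * mat g) i i = 1 := by rw [mat_inv_mul, one_apply_eq]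
    rw [mul_apply, ← Finset.add_sum_erase _ _ (Finset.mem_univ i)] at h1
    have h2 : Even (∑ k ∈ Finset.univ.erase i, mat g⁻¹ i k * mat g k i) :=
      Finset.even_sum _ fun k hk => (Int.not_odd_iff_even.1
        (hcon k i (Finset.ne_of_mem_erase hk))).mul_left _
    have h3 : Odd (mat g⁻¹ i i * mat g i i) := by
      rw [eq_sub_of_add_eq h1]
      exact odd_one.sub_even h2
    obtain ⟨k, hk⟩ := (Int.odd_mul.1 h3).2
    exact ⟨-k, by push_cast; omega⟩
  · exact (ZMod.intCast_zmod_eq_zero_iff_dvd _ 2).2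
      (even_iff_two_dvd.1 (Int.not_odd_iff_even.1 (hcon i j hij)))

lemma mat_commutator {q : Fin n} {y : Fin n → ℤ} {g k : FrAut n}
    (hg : mat g = 1 + vecMulVec y (Pi.single q 1)) (hy : y q = 0)
    (hk : Pi.single q 1 ᵥ* mat k = Pi.single q 1) :
    mat (k * g * k⁻¹ * g⁻¹) = 1 + vecMulVec (mat k *ᵥ y - y) (Pi.single q 1) := by
  have hk' : Pi.single q 1 ᵥ* mat k⁻¹ = Pi.single q 1 := by
    conv_lhs => rw [← hk]
    rw [vecMul_vecMul, mat_mul_inv, vecMul_one]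
  have hz : ∀ z : Fin n → ℤ, vecMulVec z (Pi.single q 1) * vecMulVec y (Pi.single q 1) = 0 := by
    intro z
    rw [vecMulVec_mul_vecMulVec]
    simp [hy]
  have hg' : mat g⁻¹ = 1 - vecMulVec y (Pi.single q 1) := by
    have : (1 - vecMulVec y (Pi.single q 1)) * mat g = 1 := by
      rw [hg, sub_mul, mul_add, mul_add, hz]; simp
    exact (left_inv_eq_right_inv this (mat_mul_inv g)).symm
  rw [mat_mul, mat_mul, mat_mul, hg', hg, mul_add, mul_one, add_mul, mat_mul_inv, mul_vecMulVec,
    vecMulVec_mul, hk', mul_sub, mul_one, add_mul, one_mul, hz, add_zero, sub_vecMulVec]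
  abel

lemma shear_one_mem_of_odd {N : Subgroup (FrAut n)} {i j : Fin n} (hij : i ≠ j) {m : ℤ}
    (hm : Odd m) (h4 : shear i j 0 4 ∈ N) (h : shear i j 0 m ∈ N) : shear i j 0 1 ∈ N := by
  obtain ⟨k, rfl⟩ := hm
  have e : shear i j 0 1 =
      shear i j 0 (2 * k + 1) ^ (2 * k + 1) * shear i j 0 4 ^ (-(k * (k + 1))) := by
    rw [shear_zpow hij, shear_zpow hij, shear_mul hij]
    congr 1 <;> ring
  rw [e]
  exact N.mul_mem (N.zpow_mem h _) (N.zpow_mem h4 _)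

lemma mat_shear_eq_vecMulVec {i j : Fin n} (hij : i ≠ j) (s : ℤ) :
    mat (shear i j 0 s) = 1 + vecMulVec (Pi.single i s) (Pi.single j 1) := by
  rw [mat_shear hij, zero_add]
  congr 1
  ext a b
  simp only [vecMulVec_apply, single_apply, Pi.single_apply]
  grind

lemma single_vecMul_shear {i j q : Fin n} (hij : i ≠ j) (hqi : q ≠ i) (s t : ℤ) :
    Pi.single q 1 ᵥ* mat (shear i j s t) = Pi.single q 1 := by
  rw [mat_shear hij, single_one_vecMul]
  ext k
  simp [single_apply_of_row_ne hqi.symm, Matrix.one_apply, Pi.single_apply, eq_comm]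

/-- A column vector with an odd entry produces an elementary automorphism. -/
lemma shear_mem_of_odd_column {N : Subgroup (FrAut n)} (hN : N.Normal) (hker : (ρ n).ker ≤ N)
    {c p q : Fin n} (hcp : c ≠ p) (hcq : c ≠ q) {y : Fin n → ℤ} (hy : y q = 0)
    {g : FrAut n} (hg : g ∈ N) (hgy : mat g = 1 + vecMulVec y (Pi.single q 1)) :
    shear c q 0 (y p) ∈ N := by
  refine mem_of_mat_eq hker ?_ (N.mul_mem (hN.conj_mem g hg (shear c p 0 1)) (N.inv_mem hg))
  rw [mat_commutator hgy hy (single_vecMul_shear hcp hcq.symm 0 1), mat_shear_eq_vecMulVec hcq,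
    mat_shear hcp, add_mulVec, one_mulVec, add_sub_cancel_left, zero_add, single_mulVec, one_mul]
  rfl

lemma exists_shear_odd_mem {N : Subgroup (FrAut n)} (hN : N.Normal) (hker : (ρ n).ker ≤ N)
    {c p q : Fin n} (hcp : c ≠ p) (hcq : c ≠ q) (hpq : p ≠ q) {f : FrAut n} (hf : f ∈ N)
    (hp : Odd (mat f p c)) (hq : mat f q c = 0) :
    ∃ i j m, i ≠ j ∧ Odd m ∧ shear i j 0 m ∈ N := by
  set u : Fin n → ℤ := fun k => mat f k c
  set w : Fin n → ℤ := mat f⁻¹ p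
  set h : FrAut n := f * (shear c p 0 1 * f⁻¹ * (shear c p 0 1)⁻¹)
  have hh : h ∈ N := N.mul_mem hf (hN.conj_mem _ (N.inv_mem hf) _)
  have hmat : mat h = (1 + vecMulVec u w) * mat (shear c p 0 (-1)) := by
    have hinv : (shear c p 0 1)⁻¹ = shear c p 0 (-1) := by simpa using shear_zpow hcp 0 1 (-1)
    rw [← hinv]
    change mat (f * (shear c p 0 1 * f⁻¹ * (shear c p 0 1)⁻¹)) = _
    rw [← mul_assoc, mat_mul, ← mul_assoc, mat_mul, mat_mul, mat_shear_eq_vecMulVec hcp, mul_add,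
      mul_one, add_mul, mat_mul_inv, mul_vecMulVec, vecMulVec_mul, mulVec_single_one,
      single_one_vecMul]
    rfl
  have hrow : Pi.single q 1 ᵥ* mat h = Pi.single q 1 := by
    rw [hmat, ← vecMul_vecMul, vecMul_add, vecMul_one, vecMul_vecMulVec]
    simp [u, hq, single_vecMul_shear hcp hcq.symm]
  have key : ∀ i, i ≠ q → ∀ y : Fin n → ℤ, mat h *ᵥ Pi.single i 1 - Pi.single i 1 = y →
      Odd (y p) ∨ Odd (y c) → ∃ i j m, i ≠ j ∧ Odd m ∧ shear i j 0 m ∈ N := by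
    rintro i hi y rfl hodd
    set y : Fin n → ℤ := mat h *ᵥ Pi.single i 1 - Pi.single i 1
    have hg : h * (shear i q 0 1 * h⁻¹ * (shear i q 0 1)⁻¹) ∈ N :=
      N.mul_mem hh (hN.conj_mem _ (N.inv_mem hh) _)
    rw [← mul_assoc, ← mul_assoc] at hg
    have hgy := mat_commutator (mat_shear_eq_vecMulVec hi 1) (by simp [hi.symm]) hrow
    have hy : y q = 0 := by
      have := congrArg (· ⬝ᵥ Pi.single i 1) hrow
      simp only [← dotProduct_mulVec, single_one_dotProduct] at this
      exact sub_eq_zero.2 this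
    rcases hodd with hodd | hodd
    · exact ⟨c, q, _, hcq, hodd, shear_mem_of_odd_column hN hker hcp hcq hy hg hgy⟩
    · exact ⟨p, q, _, hpq, hodd, shear_mem_of_odd_column hN hker hcp.symm hpq hy hg hgy⟩
  have hshear : ∀ x : Fin n → ℤ, mat (shear c p 0 (-1)) *ᵥ x = x - x p • Pi.single c 1 := by
    intro x
    rw [mat_shear hcp, add_mulVec, one_mulVec, single_mulVec, sub_eq_add_neg]
    congr 1
    ext k
    simp [Function.update_apply, Pi.single_apply, apply_ite Neg.neg]
  have hmul : ∀ x : Fin n → ℤ, (1 + vecMulVec u w) *ᵥ x = x + (w ⬝ᵥ x) • u := by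
    intro x
    rw [add_mulVec, one_mulVec, vecMulVec_mulVec]
    simp
  have hc : mat h *ᵥ Pi.single c 1 - Pi.single c 1 = w c • u := by
    rw [hmat, ← mulVec_mulVec, hshear, hmul]
    simp [hcp.symm]
  have hp' : mat h *ᵥ Pi.single p 1 - Pi.single p 1 = (w p - w c) • u - Pi.single c 1 := by
    rw [hmat, ← mulVec_mulVec, hshear, hmul]
    simp only [Pi.single_eq_same, one_smul, dotProduct_sub, dotProduct_single, mul_one]
    abel
  by_cases hwc : Odd (w c)
  · exact key c hcq _ hc (Or.inl (hwc.mul hp))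
  · refine key p hpq _ hp' ?_
    by_cases hw : Odd (w p - w c)
    · left
      simpa [hcp.symm] using hw.mul hp
    · right
      simpa using ((Int.not_odd_iff_even.1 hw).mul_right (u c)).sub_odd odd_one

theorem shear_mem_of_not_congruent (hn : 3 ≤ n) {N : Subgroup (FrAut n)} (hN : N.Normal)
    (hker : (ρ n).ker ≤ N) {k r : Fin n} (hkr : k ≠ r) (h4 : shear k r 0 4 ∈ N) {f : FrAut n}
    (hf : f ∈ N) (h2 : (mat f).map (Int.cast : ℤ → ZMod 2) ≠ 1) (i j : Fin n) (hij : i ≠ j) :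
    shear i j 0 1 ∈ N := by
  obtain ⟨a, c, hac, hodd⟩ := exists_odd_entry h2
  obtain ⟨b, hb⟩ : ∃ b, b ∉ ({a, c} : Finset (Fin n)) := by
    by_contra! hcon
    have := Finset.card_le_card (fun x _ => hcon x : (Finset.univ : Finset (Fin n)) ⊆ _)
    rw [Finset.card_univ, Fintype.card_fin] at this
    have := Finset.card_le_two (a := a) (b := c)
    omega
  simp only [Finset.mem_insert, Finset.mem_singleton, not_or] at hb
  obtain ⟨p, q, hpq, hpc, hqc, g, hg, hgp, hgq⟩ :=
    exists_odd_and_eq_zero hN _ (Ne.symm hb.1) hac hb.2 f hf (Nat.lt_succ_self _) hodd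
  obtain ⟨i', j', m, hij', hm, hmem⟩ :=
    exists_shear_odd_mem hN hker hpc.symm hqc.symm hpq hg hgp hgq
  exact shear_mem_of_mem hN hij' hij
    (shear_one_mem_of_odd hij' hm (shear_mem_of_mem hN hkr hij' h4) hmem)

lemma detρ_eq (g : FrAut n) : ((detρ n g : ℤˣ) : ℤ) = (mat g).det := rfl

lemma shear_mem_SAut {i j : Fin n} (hij : i ≠ j) (s t : ℤ) : shear i j s t ∈ SAut n := by
  rw [SAut, MonoidHom.mem_ker, Units.ext_iff, detρ_eq, mat_shear hij]
  exact det_transvection_of_ne i j hij _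

lemma detρ_signAut_mulSingle (i : Fin n) : detρ n (signAut n (Pi.mulSingle i (-1))) = -1 := by
  rw [Units.ext_iff, detρ_eq, mat_signAut, det_diagonal, ← Units.coe_prod]
  simp [Pi.mulSingle_apply]

lemma ker_ρ_le_SAut : (ρ n).ker ≤ SAut n := fun g hg => by
  rw [SAut, MonoidHom.mem_ker, detρ, MonoidHom.comp_apply, MonoidHom.mem_ker.1 hg, map_one]

lemma sup_zpowers_signAut_eq_top {N : Subgroup (FrAut n)} (hker : (ρ n).ker ≤ N)
    (hE : ∀ i j, i ≠ j → shear i j 0 1 ∈ N) (a : Fin n) :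
    N ⊔ Subgroup.zpowers (signAut n (Pi.mulSingle a (-1))) = ⊤ := by
  set A := N ⊔ Subgroup.zpowers (signAut n (Pi.mulSingle a (-1)))
  have hNA : N ≤ A := le_sup_left
  have hτ : ∀ i j, i ≠ j →
      permAut n (Equiv.swap i j) * signAut n (Pi.mulSingle j (-1)) ∈ N := by
    intro i j hij
    have h1 : shear i j 1 0 ∈ N :=
      mem_of_mat_eq hker (by rw [mat_shear hij, mat_shear hij, zero_add, add_zero]) (hE i j hij)
    have h := shear_swap hij ▸ hE j i hij.symm
    rwa [mul_assoc (shear i j 1 0), N.mul_mem_cancel_right (hE i j hij),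
      N.mul_mem_cancel_left h1] at h
  have hδ : ∀ j, signAut n (Pi.mulSingle j (-1)) ∈ A := by
    intro j
    have ha : signAut n (Pi.mulSingle a (-1)) ∈ A :=
      (le_sup_right : _ ≤ A) (Subgroup.mem_zpowers _)
    by_cases hj : a = j
    · exact hj ▸ ha
    have h := N.mul_mem (hτ a j hj) (hτ a j hj)
    have e : (Pi.mulSingle j (-1) : Fin n → ℤˣ) ∘ (Equiv.swap a j).symm = Pi.mulSingle a (-1) := by
      ext k
      simp [Pi.mulSingle_apply, Equiv.swap_apply_eq_iff]
    nth_rewrite 1 [permAut_mul_signAut] at h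
    rw [e, mul_assoc, ← mul_assoc (permAut n _), ← _root_.map_mul, Equiv.swap_mul_self, map_one,
      one_mul] at h
    exact (A.mul_mem_cancel_left ha).1 (hNA h)
  have hsign : ∀ d, signAut n d ∈ A := by
    intro d
    rw [← Finset.univ_prod_mulSingle d, ← Subgroup.mem_comap]
    refine Subgroup.prod_mem _ fun j _ => ?_
    rw [Subgroup.mem_comap]
    rcases Int.units_eq_one_or (d j) with h | h
    · rw [h, Pi.mulSingle_one, map_one]
      exact A.one_mem
    · rw [h]
      exact hδ j
  refine eq_top_of_generators_mem (fun i j hij => hNA (hE i j hij)) (fun σ => ?_) hsign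
  induction σ using Equiv.Perm.swap_induction_on with
  | one => rw [map_one]; exact A.one_mem
  | swap_mul σ i j hij ih =>
    rw [_root_.map_mul]
    exact A.mul_mem ((A.mul_mem_cancel_right (hδ j)).1 (hNA (hτ i j hij))) ih

lemma SAut_le_of_shear_mem {N : Subgroup (FrAut n)} (hN : N.Normal) (hker : (ρ n).ker ≤ N)
    (hE : ∀ i j, i ≠ j → shear i j 0 1 ∈ N) (a : Fin n) : SAut n ≤ N := by
  intro g hg
  have hnormal : (N ⊓ SAut n).Normal :=
    Subgroup.normal_inf_normal (hH := hN) (hK := (detρ n).normal_ker) _ _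
  have h : g ∈ (N ⊓ SAut n) ⊔ Subgroup.zpowers (signAut n (Pi.mulSingle a (-1))) := by
    rw [sup_zpowers_signAut_eq_top (le_inf hker ker_ρ_le_SAut)
      (fun i j hij => ⟨hE i j hij, shear_mem_SAut hij 0 1⟩) a]
    exact Subgroup.mem_top g
  obtain ⟨y, hy, z, ⟨m, rfl⟩, rfl⟩ := Subgroup.mem_sup_of_normal_left.1 h
  have hm := ((SAut n).mul_mem_cancel_left hy.2).1 hg
  have hdet : (-1 : ℤˣ) ^ m = 1 := by
    rw [← detρ_signAut_mulSingle a, ← map_zpow]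
    exact hm
  have hs : signAut n (Pi.mulSingle a (-1)) ^ m = 1 := by
    rw [← map_zpow, ← Pi.mulSingle_zpow, hdet, Pi.mulSingle_one, map_one]
  exact N.mul_mem hy.1 (hs.symm ▸ N.one_mem : _ ^ m ∈ N)

lemma eq_top_of_SAut_le {N : Subgroup (FrAut n)} (hN : SAut n ≤ N) {f : FrAut n} (hf : f ∈ N)
    (hdet : detρ n f = -1) : N = ⊤ := by
  refine (Subgroup.eq_top_iff' N).2 fun g => ?_
  rcases Int.units_eq_one_or (detρ n g) with h | h
  · exact hN h
  · exact (N.mul_mem_cancel_left (N.inv_mem hf)).1 (hN (MonoidHom.mem_ker.2 (by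
      rw [_root_.map_mul, map_inv, hdet, h, inv_mul_cancel])))

lemma shear_four_mem {N : Subgroup (FrAut n)} (hker : (ρ n).ker ≤ N) {k r : Fin n} (hkr : k ≠ r)
    {g : FrAut n} (hg : g ∈ N) (h : mat g = (1 + Matrix.single k r 1) ^ 4) :
    shear k r 0 4 ∈ N := by
  refine mem_of_mat_eq hker ?_ hg
  have e : shear k r 0 4 = shear k r 0 1 ^ 4 := by
    simpa using (shear_zpow hkr 0 1 4).symm
  rw [h, e, ← zero_add (1 : ℤ), ← mat_shear hkr]
  exact map_pow (matHom n) _ 4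

lemma ker_ρ_le_of_conj_mem {N : Subgroup (FrAut n)} (hN : N.Normal) {i j : Fin n} (hij : i ≠ j)
    {C : FrAut n} (hC : C ∈ N)
    (hCi : C (FreeGroup.of i) = FreeGroup.of j * FreeGroup.of i * (FreeGroup.of j)⁻¹)
    (hCk : ∀ k, k ≠ i → C (FreeGroup.of k) = FreeGroup.of k) : (ρ n).ker ≤ N := by
  have e : C = shear j i 1 (-1) := FrAut.ext fun k => by
    by_cases hk : k = i
    · rw [hk, hCi, shear_apply_self hij.symm, zpow_one, _root_.zpow_neg_one]
    · rw [hCk k hk, shear_apply_of_ne hk]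
  refine ker_le_conjClosure.trans (Subgroup.normalClosure_le_normal ?_)
  rintro _ ⟨k, l, hkl, rfl⟩
  exact shear_mem_of_mem hN hij.symm hkl (e ▸ hC)

/-- **Proposition 3.10.** For `n ≥ 3`, `n ≠ 4`, and `f ∈ Aut(F_n)`: if some conjugation
`C_{x_i x_j}` lies in `N(f)`, some `e_{k,r}⁴` lies in `ρ(N(f))`, and some `Φ ∈ ρ(N(f))`
is not congruent to the identity mod 2, then `N(f) = SAut(F_n)` if `det f̄ = 1` and
`N(f) = Aut(F_n)` if `det f̄ = -1`. -/
theorem normalClosure_level_four_criterion (n : ℕ) (hn : 3 ≤ n) (hn4 : n ≠ 4) (f : FrAut n)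
    (h1 : ∃ i j : Fin n, i ≠ j ∧ ∃ C : FrAut n,
      C (FreeGroup.of i) = FreeGroup.of j * FreeGroup.of i * (FreeGroup.of j)⁻¹ ∧
      (∀ k, k ≠ i → C (FreeGroup.of k) = FreeGroup.of k) ∧
      C ∈ Subgroup.normalClosure {f})
    (h2 : ∃ k r : Fin n, k ≠ r ∧ ∃ u ∈ (Subgroup.normalClosure {f}).map (ρ n),
      (u : Matrix (Fin n) (Fin n) ℤ) = (1 + Matrix.single k r 1) ^ 4)
    (h3 : ∃ Φ ∈ (Subgroup.normalClosure {f}).map (ρ n),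
      ((Φ : Matrix (Fin n) (Fin n) ℤ)).map (Int.cast : ℤ → ZMod 2) ≠ 1) :
    (detρ n f = 1 → Subgroup.normalClosure {f} = SAut n) ∧
    (detρ n f = -1 → Subgroup.normalClosure {f} = ⊤) := by
  have hN : (Subgroup.normalClosure {f}).Normal := Subgroup.normalClosure_normal
  obtain ⟨i, j, hij, C, hCi, hCk, hC⟩ := h1
  obtain ⟨k, r, hkr, _, ⟨g, hg, rfl⟩, hgmat⟩ := h2
  obtain ⟨_, ⟨φ, hφ, rfl⟩, hφ2⟩ := h3
  have hker := ker_ρ_le_of_conj_mem hN hij hC hCi hCk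
  have hle : SAut n ≤ Subgroup.normalClosure {f} :=
    SAut_le_of_shear_mem hN hker (shear_mem_of_not_congruent hn hN hker hkr
      (shear_four_mem hker hkr hg hgmat) hφ hφ2) i
  have hf : f ∈ Subgroup.normalClosure {f} := Subgroup.subset_normalClosure rfl
  refine ⟨fun hdet => le_antisymm ?_ hle, eq_top_of_SAut_le hle hf⟩
  have : (SAut n).Normal := (detρ n).normal_ker
  exact Subgroup.normalClosure_le_normal (Set.singleton_subset_iff.2 hdet)

end NormalClosurePaper
end

section
/- Let n ≥ 6 be an even integer, and let π : PSL_n(ℤ/4ℤ) → PSL_n(ℤ/2ℤ) be the homomorphism induced by entrywise reduction modulo 2. Then π does not split: there is no group homomorphism σ : PSL_n(ℤ/2ℤ) → PSL_n(ℤ/4ℤ) with π ∘ σ equal to the identity. -/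
open Matrix

namespace NormalClosurePaper

/-- The reduction homomorphism `SL_n(ℤ/4ℤ) → SL_n(ℤ/2ℤ)` induced by entrywise reduction mod 2. -/
def red42 (n : ℕ) : Matrix.SpecialLinearGroup (Fin n) (ZMod 4) →*
    Matrix.SpecialLinearGroup (Fin n) (ZMod 2) :=
  Matrix.SpecialLinearGroup.map (ZMod.castHom (show 2 ∣ 4 by norm_num) (ZMod 2))

lemma exists_smul_eq_of_projPSL_eq {n ℓ : ℕ} {A B : Matrix.SpecialLinearGroup (Fin n) (ZMod ℓ)}
    (h : projPSL n ℓ A = projPSL n ℓ B) :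
    ∃ r : ZMod ℓ, r ^ n = 1 ∧
      (B : Matrix (Fin n) (Fin n) (ZMod ℓ)) = r • (A : Matrix (Fin n) (Fin n) (ZMod ℓ)) := by
  obtain ⟨r, hr, hr'⟩ := Matrix.SpecialLinearGroup.mem_center_iff.1 (QuotientGroup.eq.1 h)
  refine ⟨r, by simpa using hr, ?_⟩
  rw [← mul_inv_cancel_left A B, Matrix.SpecialLinearGroup.coe_mul, ← hr', scalar_apply,
    ← smul_one_eq_diagonal, mul_smul_comm, mul_one]

lemma projPSL_two_injective {n : ℕ} (hn : n ≠ 0) : Function.Injective (projPSL n 2) := by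
  intro A B h
  obtain ⟨r, hr, hr'⟩ := exists_smul_eq_of_projPSL_eq h
  have key : ∀ r : ZMod 2, r = 0 ∨ r = 1 := by decide
  obtain rfl | rfl := key r
  · simp [hn] at hr
  · exact Subtype.ext (by simpa using hr'.symm)

/-- The elementary matrix `1 + E_{ij}` in `SL_n`. -/
def elem {n : ℕ} (R : Type*) [CommRing R] (i j : Fin n) (h : i ≠ j) :
    Matrix.SpecialLinearGroup (Fin n) R :=
  ⟨transvection i j 1, det_transvection_of_ne i j h 1⟩

@[simp]
lemma coe_elem {n : ℕ} (R : Type*) [CommRing R] (i j : Fin n) (h : i ≠ j) :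
    (elem R i j h : Matrix (Fin n) (Fin n) R) = transvection i j 1 := rfl

lemma elem_two_mul_self {n : ℕ} {i j : Fin n} (h : i ≠ j) :
    elem (ZMod 2) i j h * elem (ZMod 2) i j h = 1 := by
  have h1 : ((elem (ZMod 2) i j h * elem (ZMod 2) i j h : Matrix.SpecialLinearGroup _ _) :
      Matrix (Fin n) (Fin n) (ZMod 2)) = 1 := by
    rw [Matrix.SpecialLinearGroup.coe_mul, coe_elem, transvection_mul_transvection_same _ _ h,
      show (1 + 1 : ZMod 2) = 0 from rfl, transvection_zero]
  exact Subtype.ext h1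

lemma elem_commute {n : ℕ} {R : Type*} [CommRing R] {i j k l : Fin n} (hij : i ≠ j) (hkl : k ≠ l)
    (hil : i ≠ l) (hjk : j ≠ k) : elem R i j hij * elem R k l hkl =
      elem R k l hkl * elem R i j hij := by
  have h1 : (single k l 1 * single i j 1 : Matrix (Fin n) (Fin n) R) = 0 :=
    single_mul_single_of_ne _ _ _ _ hil.symm _
  have h2 : (single i j 1 * single k l 1 : Matrix (Fin n) (Fin n) R) = 0 :=
    single_mul_single_of_ne _ _ _ _ hjk _
  have h3 : ((elem R i j hij * elem R k l hkl : Matrix.SpecialLinearGroup _ _) :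
      Matrix (Fin n) (Fin n) R) =
      (elem R k l hkl * elem R i j hij : Matrix.SpecialLinearGroup _ _) := by
    simp only [Matrix.SpecialLinearGroup.coe_mul, coe_elem, transvection, mul_add, add_mul, h1, h2,
      one_mul, mul_one]
    abel
  exact Subtype.ext h3

/-- A matrix over `ℤ/4ℤ` reducing to `1 + E_{ij}` has the form `1 + E_{ij} + 2M`. -/
lemma exists_eq_transvection_add {n : ℕ} {i j : Fin n} {h : i ≠ j}
    {X : Matrix.SpecialLinearGroup (Fin n) (ZMod 4)} (hX : red42 n X = elem (ZMod 2) i j h) :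
    ∃ M : Matrix (Fin n) (Fin n) (ZMod 4),
      (X : Matrix (Fin n) (Fin n) (ZMod 4)) = transvection i j 1 + (2 : ZMod 4) • M := by
  have key : ∀ x : ZMod 4, ZMod.castHom (show 2 ∣ 4 by norm_num) (ZMod 2) x = 0 →
      ∃ m, x = 2 * m := by decide
  have h1 : ∀ a b, ∃ m,
      (X : Matrix (Fin n) (Fin n) (ZMod 4)) a b - transvection i j 1 a b = 2 * m := by
    intro a b
    apply key
    have h2 := congrFun (congrFun (congrArg Subtype.val hX) a) b
    simp only [red42, elem, Matrix.SpecialLinearGroup.map_apply_coe, RingHom.mapMatrix_apply,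
      map_apply] at h2
    rw [map_sub, h2, sub_eq_zero]
    simp only [transvection, Matrix.add_apply, one_apply, single_apply, map_add]
    split_ifs <;> simp only [map_one, map_zero]
  choose M hM using h1
  refine ⟨of M, ?_⟩
  ext a b
  simpa [sub_eq_iff_eq_add'] using hM a b

/-- If `1 + E_{ij} + 2M` has determinant one and its square is scalar over `ℤ/4ℤ`, then `M` has
even trace, while `M i i + M j j` is odd. -/
lemma trace_of_sq_scalar {n : ℕ} {i j k : Fin n} (hij : i ≠ j) (hki : k ≠ i) (hkj : k ≠ j)
    {X : Matrix.SpecialLinearGroup (Fin n) (ZMod 4)} {M : Matrix (Fin n) (Fin n) (ZMod 4)}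
    (hM : (X : Matrix (Fin n) (Fin n) (ZMod 4)) = transvection i j 1 + (2 : ZMod 4) • M) {r : ZMod 4}
    (hX : (X * X : Matrix (Fin n) (Fin n) (ZMod 4)) = r • (1 : Matrix (Fin n) (Fin n) (ZMod 4))) :
    2 * M.trace = 0 ∧ 2 * (M i i + M j j) = 2 := by
  have four : (4 : ZMod 4) = 0 := rfl
  have e : (X * X : Matrix (Fin n) (Fin n) (ZMod 4)) =
      1 + (2 : ZMod 4) • (single i j 1 + single i j 1 * M + M * single i j 1) := by
    have hs : (single i j 1 * single i j 1 : Matrix (Fin n) (Fin n) (ZMod 4)) = 0 :=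
      single_mul_single_of_ne _ _ _ _ hij.symm _
    have hz : (4 : ZMod 4) • (M + M * M) = 0 := by rw [four, zero_smul]
    rw [hM, transvection]
    have : ((1 + single i j 1 + (2 : ZMod 4) • M) * (1 + single i j 1 + (2 : ZMod 4) • M)) =
      1 + (2 : ZMod 4) • (single i j 1 + single i j 1 * M + M * single i j 1)
       + (4 : ZMod 4) • (M + M * M) + single i j 1 * single i j 1 := by
      simp only [mul_add, add_mul, smul_mul_assoc, mul_smul_comm, one_mul, mul_one]
      module
    rw [this, hz, hs, add_zero, add_zero]
  rw [e] at hX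
  have ekk := congrFun (congrFun hX k) k
  have eii := congrFun (congrFun hX i) i
  have eij := congrFun (congrFun hX i) j
  simp [hki, hkj, hki.symm, hkj.symm, hij, hij.symm] at ekk eii eij
  have hji : 2 * M j i = 0 := by
    rw [← ekk] at eii; simpa using eii
  refine ⟨?_, by linear_combination eij - four⟩
  have hd := X.det_coe
  have hf : (X : Matrix (Fin n) (Fin n) (ZMod 4)) =
      transvection i j 1 * (1 + (2 : ZMod 4) • (transvection i j (-1) * M)) := by
    rw [mul_add, mul_one, mul_smul_comm, ← mul_assoc, transvection_mul_transvection_same _ _ hij,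
      add_neg_cancel, transvection_zero, one_mul, hM]
  rw [hf, det_mul, det_transvection_of_ne _ _ hij, one_mul, det_one_add_smul] at hd
  have ht : (transvection i j (-1) * M).trace = M.trace - M j i := by
    simp [transvection, add_mul, trace_add, trace_single_mul, sub_eq_add_neg]
  rw [ht] at hd
  rw [show (2 : ZMod 4) ^ 2 = 0 from rfl, mul_zero, add_zero] at hd
  linear_combination hd + hji

/-- If `1 + E_{ij} + 2M` and `1 + E_{kl} + 2K` over `ℤ/4ℤ` commute up to a scalar, with `i, j, k, l`
distinct, then the diagonal entries of `M` at `k` and `l` have the same parity. -/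
lemma diag_eq_of_commute {n : ℕ} {i j k l m : Fin n} (hik : i ≠ k) (hil : i ≠ l) (hjk : j ≠ k)
    (hjl : j ≠ l) (hkl : k ≠ l) (hmi : m ≠ i) (hmj : m ≠ j) (hmk : m ≠ k) (hml : m ≠ l)
    {X Y M K : Matrix (Fin n) (Fin n) (ZMod 4)}
    (hX : X = transvection i j 1 + (2 : ZMod 4) • M)
    (hY : Y = transvection k l 1 + (2 : ZMod 4) • K) {r : ZMod 4}
    (h : X * Y = r • (Y * X)) : 2 * M k k = 2 * M l l := by
  have four : (4 : ZMod 4) = 0 := rfl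
  have expand : ∀ (S T A B : Matrix (Fin n) (Fin n) (ZMod 4)), S * T = 0 →
      (1 + S + (2 : ZMod 4) • A) * (1 + T + (2 : ZMod 4) • B) =
        1 + S + T + (2 : ZMod 4) • (A + B + S * B + A * T) := by
    intro S T A B hST
    have : (1 + S + (2 : ZMod 4) • A) * (1 + T + (2 : ZMod 4) • B) =
        1 + S + T + (2 : ZMod 4) • (A + B + S * B + A * T) + S * T + (4 : ZMod 4) • (A * B) := by
      simp only [mul_add, add_mul, smul_mul_assoc, mul_smul_comm, one_mul, mul_one]
      module
    rw [this, hST, four, zero_smul, add_zero, add_zero]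
  rw [hX, hY, transvection, transvection,
    expand _ _ _ _ (single_mul_single_of_ne _ _ _ _ hjk _),
    expand _ _ _ _ (single_mul_single_of_ne _ _ _ _ hil.symm _)] at h
  have emm := congrFun (congrFun h m) m
  have ekl := congrFun (congrFun h k) l
  simp [hik, hjl, hkl, hmi, hmi.symm, hmj, hmj.symm, hmk,
    hmk.symm, hml, hml.symm, hik.symm, hjl.symm] at emm ekl
  have key : ∀ r a b : ZMod 4, 1 + (2 * a + 2 * b) = r * (1 + (2 * b + 2 * a)) → r = 1 := by decide
  obtain rfl := key r _ _ emm
  linear_combination ekl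

/-- **Proposition 3.12.** For even `n ≥ 6`, the homomorphism
`PSL_n(ℤ/4ℤ) → PSL_n(ℤ/2ℤ)` induced by entrywise reduction mod 2 does not split. -/
theorem psl_four_to_psl_two_not_split (n : ℕ) (hn : 6 ≤ n) (he : Even n)
    (π : Matrix.ProjectiveSpecialLinearGroup (Fin n) (ZMod 4) →*
      Matrix.ProjectiveSpecialLinearGroup (Fin n) (ZMod 2))
    (hπ : ∀ g : Matrix.SpecialLinearGroup (Fin n) (ZMod 4),
      π (projPSL n 4 g) = projPSL n 2 (red42 n g)) :
    ¬ ∃ σ : Matrix.ProjectiveSpecialLinearGroup (Fin n) (ZMod 2) →*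
        Matrix.ProjectiveSpecialLinearGroup (Fin n) (ZMod 4),
      π.comp σ = MonoidHom.id (Matrix.ProjectiveSpecialLinearGroup (Fin n) (ZMod 2)) := by
  rintro ⟨σ, hσ⟩
  have lift : ∀ A : Matrix.SpecialLinearGroup (Fin n) (ZMod 2), ∃ X,
      projPSL n 4 X = σ (projPSL n 2 A) ∧ red42 n X = A := by
    intro A
    obtain ⟨X, hX⟩ := QuotientGroup.mk'_surjective _ (σ (projPSL n 2 A))
    refine ⟨X, hX, projPSL_two_injective (by omega) ?_⟩
    rw [← hπ, show projPSL n 4 X = _ from hX]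
    exact DFunLike.congr_fun hσ _
  obtain ⟨i, j, k, hij, hik, hjk⟩ : ∃ i j k : Fin n, i ≠ j ∧ i ≠ k ∧ j ≠ k :=
    ⟨⟨0, by omega⟩, ⟨1, by omega⟩, ⟨2, by omega⟩, by simp, by simp, by simp⟩
  obtain ⟨X, hX, hX'⟩ := lift (elem (ZMod 2) i j hij)
  obtain ⟨M, hM⟩ := exists_eq_transvection_add hX'
  have hsq : projPSL n 4 1 = projPSL n 4 (X * X) := by
    rw [map_mul, hX, ← map_mul, ← map_mul, map_one]
    rw [elem_two_mul_self, map_one, map_one]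
  obtain ⟨r, -, hr⟩ := exists_smul_eq_of_projPSL_eq hsq
  obtain ⟨htr, hodd⟩ := trace_of_sq_scalar hij hik.symm hjk.symm hM hr
  have hdiag : ∀ l, l ≠ i → l ≠ j → 2 * M l l = 2 * M k k := by
    intro l hli hlj
    by_cases hlk : l = k
    · rw [hlk]
    obtain ⟨m, hm⟩ : ∃ m, m ∉ ({i, j, k, l} : Finset (Fin n)) := by
      by_contra! hall
      have := Finset.card_le_four (a := i) (b := j) (c := k) (d := l)
      rw [Finset.eq_univ_iff_forall.2 hall, Finset.card_univ, Fintype.card_fin] at this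
      omega
    simp only [Finset.mem_insert, Finset.mem_singleton, not_or] at hm
    obtain ⟨Y, hY, hY'⟩ := lift (elem (ZMod 2) k l (Ne.symm hlk))
    obtain ⟨K, hK⟩ := exists_eq_transvection_add hY'
    have hcomm : projPSL n 4 (Y * X) = projPSL n 4 (X * Y) := by
      rw [map_mul, map_mul, hX, hY, ← map_mul, ← map_mul, ← map_mul, ← map_mul]
      rw [elem_commute _ _ hli.symm hjk]
    obtain ⟨s, -, hs⟩ := exists_smul_eq_of_projPSL_eq hcomm
    exact (diag_eq_of_commute hik (Ne.symm hli) hjk (Ne.symm hlj) (Ne.symm hlk) hm.1 hm.2.1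
      hm.2.2.1 hm.2.2.2 hM hK hs).symm
  rw [trace, Finset.mul_sum, ← Finset.add_sum_erase _ _ (Finset.mem_univ i),
    ← Finset.add_sum_erase _ _ (Finset.mem_erase.2 ⟨hij.symm, Finset.mem_univ j⟩),
    Finset.sum_congr rfl (g := fun _ => 2 * M k k) (by
      intro l hl
      simp only [Finset.mem_erase] at hl
      exact hdiag l hl.2.1 hl.1),
    Finset.sum_const, Finset.card_erase_of_mem (Finset.mem_erase.2 ⟨hij.symm, Finset.mem_univ j⟩),
    Finset.card_erase_of_mem (Finset.mem_univ i), Finset.card_univ, Fintype.card_fin] at htr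
  obtain ⟨p, hp⟩ := he
  rw [show n - 1 - 1 = 2 * (p - 1) by omega, nsmul_eq_mul] at htr
  simp only [diag_apply] at htr
  push_cast at htr
  have four : (4 : ZMod 4) = 0 := rfl
  have h20 : (2 : ZMod 4) = 0 := by
    linear_combination htr - hodd - four * ((p - 1 : ℕ) : ZMod 4) * M k k
  exact absurd h20 (by decide)

end NormalClosurePaper
end

section
/- Let n ≥ 3 and let f ∈ Aut(F_n). Assume: (1) IA_n ⊆ N(f); (2) Γ_n(2) ⊆ ρ(N(f)). If f̄ ≡ I (mod 2), then N(f) = ρ⁻¹(Γ_n(2)) when det(f̄) = 1, and N(f) = ρ⁻¹(GΓ_n(2)) when det(f̄) = −1 (equivalently, in each case there is a short exact sequence 1 → IA_n → N(f) → Γ_n(2) → 1, respectively 1 → IA_n → N(f) → GΓ_n(2) → 1). If f̄ ≢ I (mod 2), then N(f) = SAut(F_n) when det(f̄) = 1 and N(f) = Aut(F_n) when det(f̄) = −1. -/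
open Matrix

namespace NormalClosurePaper

section Transvections

open Module

variable {K V : Type*} [Field K] [AddCommGroup V] [Module K V]

lemma conj_transvection (g : V ≃ₗ[K] V) {φ : Dual K V} {v : V} (h : φ v = 0)
    {ψ : Dual K V} (hψ : ∀ x, ψ (g x) = φ x) {w : V} (hw : g v = w) (h' : ψ w = 0) :
    g * LinearEquiv.transvection h * g⁻¹ = LinearEquiv.transvection h' := by
  rw [mul_inv_eq_iff_eq_mul]
  ext x
  simp [LinearMap.transvection.apply, hψ, hw]

lemma transvection_mul_of_vec {φ : Dual K V} {v w u : V} (hv : φ v = 0) (hw : φ w = 0)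
    (hu : φ u = 0) (h : u = v + w) :
    LinearEquiv.transvection hv * LinearEquiv.transvection hw = LinearEquiv.transvection hu := by
  ext x
  simp [LinearMap.transvection.apply, h, hw]
  abel

lemma transvection_mul_of_dual {φ ψ χ : Dual K V} {v : V} (hφ : φ v = 0) (hψ : ψ v = 0)
    (hχ : χ v = 0) (h : χ = φ + ψ) :
    LinearEquiv.transvection hφ * LinearEquiv.transvection hψ = LinearEquiv.transvection hχ := by
  ext x
  simp [LinearMap.transvection.apply, h, hφ, add_smul]
  abel

/-- A nonzero functional vanishing on two given vectors. -/
lemma exists_dual_ne_zero_of_pair (hV : 3 ≤ finrank K V) (v w : V) :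
    ∃ ψ : Dual K V, ψ ≠ 0 ∧ ψ v = 0 ∧ ψ w = 0 := by
  have : FiniteDimensional K V := FiniteDimensional.of_finrank_pos (by omega)
  have hlt : Submodule.span K {v, w} < ⊤ := by
    rw [lt_top_iff_ne_top]
    intro h
    classical
    have h2 := finrank_span_finset_le_card (R := K) ({v, w} : Finset V)
    have h3 := Finset.card_le_two (a := v) (b := w)
    rw [Set.finrank, Finset.coe_pair, h, finrank_top] at h2
    omega
  obtain ⟨ψ, h0, hle⟩ := Submodule.exists_le_ker_of_lt_top _ hlt
  exact ⟨ψ, h0, hle (Submodule.subset_span (by simp)), hle (Submodule.subset_span (by simp))⟩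

end Transvections

section FieldWithTwoElements

open Module

variable {V : Type*} [AddCommGroup V] [Module (ZMod 2) V]

lemma zmod_two_eq_one {a : ZMod 2} (h : a ≠ 0) : a = 1 := by
  revert a; decide

lemma exists_dual_eq_one_eq_zero {v w : V} (hv : v ≠ 0) (hvw : v ≠ w) :
    ∃ ψ : Dual (ZMod 2) V, ψ v = 1 ∧ ψ w = 0 := by
  have hmem : v ∉ Submodule.span (ZMod 2) {w} := by
    rw [Submodule.mem_span_singleton]
    rintro ⟨a, ha⟩
    by_cases h0 : a = 0
    · exact hv (by rw [← ha, h0, zero_smul])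
    · exact hvw (by rw [← ha, zmod_two_eq_one h0, one_smul])
  obtain ⟨ψ, h1, h2⟩ := Submodule.exists_dual_map_eq_bot_of_notMem hmem inferInstance
  refine ⟨ψ, zmod_two_eq_one h1, ?_⟩
  rw [Submodule.map_span, Set.image_singleton, Submodule.span_singleton_eq_bot] at h2
  exact h2

lemma exists_vec_eq_one_eq_zero {φ ψ : Dual (ZMod 2) V} (hφ : φ ≠ 0) (hne : φ ≠ ψ) :
    ∃ u : V, φ u = 1 ∧ ψ u = 0 := by
  obtain ⟨a, ha⟩ := DFunLike.ne_iff.1 hφ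
  obtain ⟨b, hb⟩ := DFunLike.ne_iff.1 hne
  have key : ∀ p q r s : ZMod 2, p ≠ 0 → r ≠ s → (p = 1 ∧ q = 0) ∨ (r = 1 ∧ s = 0) ∨
      (p + r = 1 ∧ q + s = 0) := by decide
  rcases key (φ a) (ψ a) (φ b) (ψ b) ha hb with h | h | h
  · exact ⟨a, h⟩
  · exact ⟨b, h⟩
  · exact ⟨a + b, by simpa using h⟩

variable {H : Subgroup (V ≃ₗ[ZMod 2] V)} [H.Normal]

lemma transvection_mem_of_same_dual {φ : Dual (ZMod 2) V} {v w : V} (hv : φ v = 0)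
    (hw : φ w = 0) (hv0 : v ≠ 0) (hmem : LinearEquiv.transvection hv ∈ H) :
    LinearEquiv.transvection hw ∈ H := by
  by_cases hvw : v = w
  · subst hvw; exact hmem
  obtain ⟨ψ, h1, h2⟩ := exists_dual_eq_one_eq_zero hv0 hvw
  have hs : φ (w + v) = 0 := by simp [hv, hw]
  have hc := conj_transvection (LinearEquiv.transvection h2) hv (ψ := φ) (w := w + v)
    (by simp [LinearMap.transvection.apply, hw])
    (by simp [LinearMap.transvection.apply, h1, add_comm]) hs
  have hm := ‹H.Normal›.conj_mem _ hmem (LinearEquiv.transvection h2)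
  rw [hc, ← transvection_mul_of_vec hw hv hs rfl] at hm
  exact (H.mul_mem_cancel_right hmem).1 hm

lemma transvection_mem_of_same_vec {φ ψ : Dual (ZMod 2) V} {v : V} (hφ : φ v = 0)
    (hψ : ψ v = 0) (hφ0 : φ ≠ 0) (hmem : LinearEquiv.transvection hφ ∈ H) :
    LinearEquiv.transvection hψ ∈ H := by
  by_cases hne : φ = ψ
  · subst hne; exact hmem
  obtain ⟨u, h1, h2⟩ := exists_vec_eq_one_eq_zero hφ0 hne
  have hs : (ψ + φ) v = 0 := by simp [hφ, hψ]
  have hc := conj_transvection (LinearEquiv.transvection h2) hφ (ψ := ψ + φ) (w := v)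
    (fun x => by
      have : ψ x + ψ x = 0 := CharTwo.add_self_eq_zero _
      simp [LinearMap.transvection.apply, h1, h2]
      linear_combination this)
    (by simp [LinearMap.transvection.apply, hψ]) hs
  have hm := ‹H.Normal›.conj_mem _ hmem (LinearEquiv.transvection h2)
  rw [hc, ← transvection_mul_of_dual hψ hφ hs rfl] at hm
  exact (H.mul_mem_cancel_right hmem).1 hm

lemma transvection_mem_of_transvection_mem (hV : 3 ≤ finrank (ZMod 2) V)
    {φ : Dual (ZMod 2) V} {v : V} (hφ : φ v = 0) (hφ0 : φ ≠ 0) (hv0 : v ≠ 0)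
    (hmem : LinearEquiv.transvection hφ ∈ H)
    {ψ : Dual (ZMod 2) V} {w : V} (hψ : ψ w = 0) :
    LinearEquiv.transvection hψ ∈ H := by
  by_cases hw0 : w = 0
  · subst hw0
    rw [LinearEquiv.transvection.of_right_eq_zero]
    exact H.one_mem
  obtain ⟨χ, hχ0, hχv, hχw⟩ := exists_dual_ne_zero_of_pair hV v w
  exact transvection_mem_of_same_vec hχw hψ hχ0
    (transvection_mem_of_same_dual hχv hχw hv0
      (transvection_mem_of_same_vec hφ hχv hφ0 hmem))

/-- A normal subgroup of `GL(V)` over the field with two elements contains every transvection as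
soon as it contains all commutators with some nontrivial element. -/
lemma transvection_mem_of_commutator_mem (hV : 3 ≤ finrank (ZMod 2) V) (A : V ≃ₗ[ZMod 2] V)
    (hA : A ≠ 1) (hcomm : ∀ g : V ≃ₗ[ZMod 2] V, A * g * A⁻¹ * g⁻¹ ∈ H)
    {ψ : Dual (ZMod 2) V} {w : V} (hψ : ψ w = 0) :
    LinearEquiv.transvection hψ ∈ H := by
  obtain ⟨v, hv⟩ : ∃ v, A v ≠ v := by
    by_contra! h
    exact hA (LinearEquiv.ext h)
  have hv0 : v ≠ 0 := fun h => hv (by simp [h])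
  obtain ⟨φ, hφ0, hφv, -⟩ := exists_dual_ne_zero_of_pair (K := ZMod 2) hV v v
  set φ' : Dual (ZMod 2) V := φ.comp (A⁻¹ : V ≃ₗ[ZMod 2] V).toLinearMap
  have hφ'A : ∀ x, φ' (A x) = φ x := fun x => congrArg φ (A.symm_apply_apply x)
  have hφ'v : φ' (A v) = 0 := by rw [hφ'A, hφv]
  have hφnv : φ (-v) = 0 := by simp [hφv]
  set B : V ≃ₗ[ZMod 2] V := LinearEquiv.transvection hφ'v * LinearEquiv.transvection hφnv with hB
  have hBmem : B ∈ H := by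
    have := hcomm (LinearEquiv.transvection hφv)
    rwa [conj_transvection A hφv hφ'A rfl hφ'v, LinearEquiv.transvection.inv_eq hφv hφnv] at this
  obtain ⟨χ, hχ0, hχv, hχAv⟩ := exists_dual_ne_zero_of_pair (K := ZMod 2) hV v (A v)
  have hχB : ∀ x, χ (B x) = χ x := fun x => by
    simp [hB, LinearMap.transvection.apply, hχv, hχAv]
  have hB1 : B ≠ 1 := by
    intro h
    obtain ⟨x, hx⟩ := DFunLike.ne_iff.1 hφ0
    have h2 : LinearEquiv.transvection hφ'v = LinearEquiv.transvection hφv := by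
      rw [← mul_inv_eq_one, LinearEquiv.transvection.inv_eq hφv hφnv]
      exact h
    have h4 := LinearEquiv.congr_fun h2 (A x)
    simp only [LinearEquiv.transvection.apply, hφ'A, zmod_two_eq_one hx, one_smul,
      add_right_inj] at h4
    by_cases h5 : φ (A x) = 0
    · rw [h5, zero_smul] at h4
      exact hv0 (by simpa using h4)
    · rw [zmod_two_eq_one h5, one_smul] at h4
      exact hv h4
  by_cases hfix : ∃ u, χ u = 0 ∧ B u ≠ u
  · obtain ⟨u, hu, hBu⟩ := hfix
    have hχBu : χ (B u) = 0 := by rw [hχB, hu]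
    have hχnu : χ (-u) = 0 := by simp [hu]
    have hχd : χ (B u - u) = 0 := by simp [hχBu, hu]
    refine transvection_mem_of_transvection_mem hV hχd hχ0 (sub_ne_zero.2 hBu) ?_ hψ
    rw [← transvection_mul_of_vec hχBu hχnu hχd (sub_eq_add_neg _ _),
      ← LinearEquiv.transvection.inv_eq hu hχnu, ← conj_transvection B hu hχB rfl hχBu, mul_assoc,
      mul_assoc]
    refine H.mul_mem hBmem ?_
    rw [← mul_assoc]
    exact ‹H.Normal›.conj_mem _ (H.inv_mem hBmem) _
  · push Not at hfix
    obtain ⟨y, hy⟩ := DFunLike.ne_iff.1 hχ0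
    have hy1 : χ y = 1 := zmod_two_eq_one hy
    have hχd : χ (B y - y) = 0 := by simp [hχB]
    have hBt : B = LinearEquiv.transvection hχd := by
      ext x
      have h := hfix (x - χ x • y) (by simp [hy1])
      rw [map_sub, map_smul] at h
      rw [LinearEquiv.transvection.apply, smul_sub, ← add_sub_assoc, eq_sub_iff_add_eq,
        ← sub_eq_iff_eq_add, add_sub_right_comm, ← eq_sub_iff_add_eq, h]
    refine transvection_mem_of_transvection_mem hV hχd hχ0 ?_ (hBt ▸ hBmem) hψ
    intro h0
    refine hB1 (hBt.trans ?_)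
    ext x
    simp [h0]

end FieldWithTwoElements

lemma subgroup_eq_top_of_transvection_mem {n : ℕ} {K : Subgroup (GL (Fin n) (ZMod 2))}
    (h : ∀ i j : Fin n, i ≠ j →
      ∃ g ∈ K, (g : Matrix (Fin n) (Fin n) (ZMod 2)) = Matrix.transvection i j 1) :
    K = ⊤ := by
  refine eq_top_iff.2 fun g _ => ?_
  obtain ⟨g', hg', he⟩ : ∃ g' ∈ K, (g' : Matrix (Fin n) (Fin n) (ZMod 2)) = g := by
    refine Matrix.diagonal_transvection_induction_of_det_ne_zero
      (fun M => ∃ g' ∈ K, (g' : Matrix (Fin n) (Fin n) (ZMod 2)) = M) _ ?_ ?_ ?_ ?_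
    · exact ((Matrix.isUnit_iff_isUnit_det _).1 g.isUnit).ne_zero
    · intro D hD
      rw [Matrix.det_diagonal, Finset.prod_ne_zero_iff] at hD
      refine ⟨1, K.one_mem, ?_⟩
      rw [Units.val_one, ← Matrix.diagonal_one]
      exact congrArg _ (funext fun i => (zmod_two_eq_one (hD i (Finset.mem_univ i))).symm)
    · rintro ⟨i, j, hij, c⟩
      by_cases hc : c = 0
      · exact ⟨1, K.one_mem, by simp [Matrix.TransvectionStruct.toMatrix, hc]⟩
      · obtain ⟨g', hg', he⟩ := h i j hij
        exact ⟨g', hg', by simp [Matrix.TransvectionStruct.toMatrix, zmod_two_eq_one hc, he]⟩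
    · rintro _ _ - - ⟨a, ha, rfl⟩ ⟨b, hb, rfl⟩
      exact ⟨a * b, K.mul_mem ha hb, rfl⟩
  rwa [← Units.ext he]

/-- `GL_n(𝔽₂)` as the group of linear automorphisms of `𝔽₂ⁿ`. -/
def glEquiv (n : ℕ) :
    GL (Fin n) (ZMod 2) ≃* ((Fin n → ZMod 2) ≃ₗ[ZMod 2] (Fin n → ZMod 2)) :=
  Matrix.GeneralLinearGroup.toLin.trans
    (LinearMap.GeneralLinearGroup.generalLinearEquiv (ZMod 2) (Fin n → ZMod 2))

lemma glEquiv_apply {n : ℕ} (g : GL (Fin n) (ZMod 2)) (x : Fin n → ZMod 2) :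
    glEquiv n g x = (g : Matrix (Fin n) (Fin n) (ZMod 2)) *ᵥ x := rfl

/-- A normal subgroup of `GL_n(𝔽₂)`, `n ≥ 3`, containing all commutators with some nontrivial
element is the whole group. -/
lemma eq_top_of_commutator_mem {n : ℕ} (hn : 3 ≤ n) (K : Subgroup (GL (Fin n) (ZMod 2)))
    [hK : K.Normal] (A : GL (Fin n) (ZMod 2)) (hA : A ≠ 1)
    (hcomm : ∀ g, A * g * A⁻¹ * g⁻¹ ∈ K) : K = ⊤ := by
  refine subgroup_eq_top_of_transvection_mem fun i j hij => ?_
  have : (K.map (glEquiv n).toMonoidHom).Normal := hK.map _ (glEquiv n).surjective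
  have hproj : (LinearMap.proj j : Module.Dual (ZMod 2) (Fin n → ZMod 2)) (Pi.single i 1) = 0 := by
    simp [hij.symm]
  obtain ⟨g, hg, he⟩ := transvection_mem_of_commutator_mem
    (H := K.map (glEquiv n).toMonoidHom) (by simpa using hn) (glEquiv n A)
    (by simpa using hA)
    (fun g => by
      obtain ⟨g, rfl⟩ := (glEquiv n).surjective g
      exact ⟨_, hcomm g, by simp⟩) hproj
  refine ⟨g, hg, ?_⟩
  refine Matrix.ext_of_mulVec_single fun k => ?_
  have h := LinearEquiv.congr_fun he (Pi.single k 1)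
  change (g : Matrix (Fin n) (Fin n) (ZMod 2)) *ᵥ Pi.single k 1 = _ at h
  rw [h, LinearEquiv.transvection.apply]
  ext l
  simp [Matrix.transvection, Matrix.single_apply, Pi.single_apply,
    Matrix.one_apply]
  by_cases hk : j = k <;> by_cases hl : i = l <;> simp [hk, hl, eq_comm]

/-- The endomorphism of the free group sending `x_j` to `x_j y` and fixing the other generators. -/
def mulRightHom {n : ℕ} (j : Fin n) (y : FreeGroup (Fin n)) :
    FreeGroup (Fin n) →* FreeGroup (Fin n) :=
  FreeGroup.lift fun k => if k = j then FreeGroup.of k * y else FreeGroup.of k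

lemma mulRightHom_of {n : ℕ} (j k : Fin n) (y : FreeGroup (Fin n)) :
    mulRightHom j y (FreeGroup.of k) = if k = j then FreeGroup.of k * y else FreeGroup.of k := by
  simp [mulRightHom]

lemma exists_mat_eq_transvection {n : ℕ} {i j : Fin n} (hij : i ≠ j) :
    ∃ g : FrAut n, mat g = Matrix.transvection i j 1 := by
  refine ⟨MonoidHom.toMulEquiv (mulRightHom j (FreeGroup.of i))
    (mulRightHom j (FreeGroup.of i)⁻¹) ?_ ?_, ?_⟩
  · ext k
    by_cases hk : k = j <;> simp [mulRightHom_of, hk, hij]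
  · ext k
    by_cases hk : k = j <;> simp [mulRightHom_of, hk, hij]
  · ext k l
    simp only [mat, Matrix.of_apply, MonoidHom.toMulEquiv_apply, mulRightHom_of,
      Matrix.transvection, Matrix.add_apply, Matrix.one_apply, Matrix.single_apply]
    by_cases hl : l = j
    · simp [hl, expSum, eq_comm]
    · simp [hl, Ne.symm hl, expSum, eq_comm]

lemma coe_redGL_ρ {n ℓ : ℕ} (g : FrAut n) :
    (redGL n ℓ (ρ n g) : Matrix (Fin n) (Fin n) (ZMod ℓ)) = (mat g).map Int.cast := rfl

/-- Reduction modulo two of the action on the abelianization is surjective. -/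
lemma redGL_comp_ρ_surjective (n : ℕ) : Function.Surjective ((redGL n 2).comp (ρ n)) := by
  rw [← MonoidHom.range_eq_top]
  refine subgroup_eq_top_of_transvection_mem fun i j hij => ?_
  obtain ⟨g, hg⟩ := exists_mat_eq_transvection hij
  refine ⟨_, ⟨g, rfl⟩, ?_⟩
  rw [MonoidHom.comp_apply, coe_redGL_ρ, hg]
  ext k l
  simp [Matrix.transvection, Matrix.one_apply, Matrix.single_apply]

instance SAut_normal (n : ℕ) : (SAut n).Normal := MonoidHom.normal_ker _

section NormalSubgroup

variable {n : ℕ} {N : Subgroup (FrAut n)}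

lemma mem_of_ρ_mem_map (h1 : IA n ≤ N) {g : FrAut n} (hg : ρ n g ∈ N.map (ρ n)) : g ∈ N := by
  obtain ⟨k, hk, he⟩ := hg
  refine (N.mul_mem_cancel_left (N.inv_mem hk)).1 (h1 ?_)
  change ρ n (k⁻¹ * g) = 1
  rw [map_mul, map_inv, he, inv_mul_cancel]

lemma comap_GammaGL_le (h1 : IA n ≤ N) (h2 : GammaGL n 2 ≤ N.map (ρ n)) :
    Subgroup.comap (ρ n) (GammaGL n 2) ≤ N :=
  fun _ hg => mem_of_ρ_mem_map h1 (h2 hg)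

/-- If `S` contains an element of `N` with determinant `-1`, and `N` contains all elements of `S`
with determinant `1`, then `S ≤ N`. -/
lemma le_of_inf_SAut_le {S : Subgroup (FrAut n)} {f : FrAut n} (hfS : f ∈ S) (hfN : f ∈ N)
    (hf : detρ n f = -1) (hS : S ⊓ SAut n ≤ N) : S ≤ N := by
  intro g hg
  rcases Int.units_eq_one_or (detρ n g) with h | h
  · exact hS ⟨hg, h⟩
  · refine (N.mul_mem_cancel_left hfN).1 (hS ⟨S.mul_mem hfS hg, ?_⟩)
    change detρ n (f * g) = 1
    rw [map_mul, hf, h]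
    rfl

lemma SAut_le_of_redGL_ne_one (hn : 3 ≤ n) [N.Normal] (h1 : IA n ≤ N)
    (h2 : GammaGL n 2 ≤ N.map (ρ n)) {f : FrAut n} (hfN : f ∈ N) (hf : ρ n f ∉ GGamma n 2) :
    SAut n ≤ N := by
  set q := (redGL n 2).comp (ρ n)
  have hqs : Function.Surjective q := redGL_comp_ρ_surjective n
  have hnormal : ((N ⊓ SAut n).map q).Normal := Subgroup.Normal.map inferInstance q hqs
  have htop : (N ⊓ SAut n).map q = ⊤ := by
    refine eq_top_of_commutator_mem hn _ (q f) hf fun g => ?_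
    obtain ⟨g, rfl⟩ := hqs g
    refine ⟨f * g * f⁻¹ * g⁻¹, ⟨?_, ?_⟩, by simp⟩
    · rw [mul_assoc, mul_assoc, ← mul_assoc g]
      exact N.mul_mem hfN (‹N.Normal›.conj_mem _ (N.inv_mem hfN) g)
    · change detρ n (f * g * f⁻¹ * g⁻¹) = 1
      rw [map_mul, map_mul, map_mul, map_inv, map_inv, mul_right_comm (detρ n f), mul_inv_cancel,
        one_mul, mul_inv_cancel]
  intro g hg
  obtain ⟨m, ⟨hmN, hmS⟩, hm⟩ : q g ∈ (N ⊓ SAut n).map q := htop ▸ Subgroup.mem_top _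
  refine (N.mul_mem_cancel_left (N.inv_mem hmN)).1 (comap_GammaGL_le h1 h2 ⟨?_, ?_⟩)
  · change q (m⁻¹ * g) = 1
    rw [map_mul, map_inv, hm, inv_mul_cancel]
  · exact (SAut n).mul_mem ((SAut n).inv_mem hmS) hg

end NormalSubgroup

/-- **Lemma 5.1 (level 2).** For `n ≥ 3` and `f ∈ Aut(F_n)` with `IA_n ⊆ N(f)` and
`Γ_n(2) ⊆ ρ(N(f))`: if `f̄ ≡ I (mod 2)` then `N(f) = ρ⁻¹(Γ_n(2))` when `det f̄ = 1` and
`N(f) = ρ⁻¹(GΓ_n(2))` when `det f̄ = -1`; if `f̄ ≢ I (mod 2)` then `N(f) = SAut(F_n)`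
when `det f̄ = 1` and `N(f) = Aut(F_n)` when `det f̄ = -1`. -/
theorem normalClosure_of_level_two (n : ℕ) (hn : 3 ≤ n) (f : FrAut n)
    (h1 : IA n ≤ Subgroup.normalClosure {f})
    (h2 : GammaGL n 2 ≤ (Subgroup.normalClosure {f}).map (ρ n)) :
    (ρ n f ∈ GGamma n 2 →
      (detρ n f = 1 →
        Subgroup.normalClosure {f} = Subgroup.comap (ρ n) (GammaGL n 2)) ∧
      (detρ n f = -1 →
        Subgroup.normalClosure {f} = Subgroup.comap (ρ n) (GGamma n 2))) ∧
    (ρ n f ∉ GGamma n 2 →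
      (detρ n f = 1 → Subgroup.normalClosure {f} = SAut n) ∧
      (detρ n f = -1 → Subgroup.normalClosure {f} = ⊤)) := by
  set N := Subgroup.normalClosure {f}
  have hfN : f ∈ N := Subgroup.subset_normalClosure rfl
  have hle : ∀ S : Subgroup (FrAut n), S.Normal → f ∈ S → N ≤ S := fun S _ hf =>
    Subgroup.normalClosure_le_normal (Set.singleton_subset_iff.2 hf)
  have hG : (Subgroup.comap (ρ n) (GGamma n 2)).Normal :=
    (MonoidHom.normal_ker (redGL n 2)).comap _
  refine ⟨fun hf => ⟨fun hd => ?_, fun hd => ?_⟩, fun hf => ⟨fun hd => ?_, fun hd => ?_⟩⟩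
  · refine le_antisymm (fun g hg => ⟨hle _ hG hf hg, hle _ (SAut_normal n) hd hg⟩) ?_
    exact comap_GammaGL_le h1 h2
  · exact le_antisymm (hle _ hG hf) (le_of_inf_SAut_le hf hfN hd (comap_GammaGL_le h1 h2))
  · exact le_antisymm (hle _ (SAut_normal n) hd) (SAut_le_of_redGL_ne_one hn h1 h2 hfN hf)
  · exact top_le_iff.1 (le_of_inf_SAut_le trivial hfN hd
      (inf_le_right.trans (SAut_le_of_redGL_ne_one hn h1 h2 hfN hf)))

end NormalClosurePaper
end

section
/- Let M ∈ SL_2(ℤ) have finite order and let G be the normal closure of M in SL_2(ℤ). Then: if M has order 2, SL_2(ℤ)/G ≅ PSL_2(ℤ); if M has order 3, SL_2(ℤ)/G ≅ ℤ/4ℤ; if M has order 4, SL_2(ℤ)/G ≅ ℤ/3ℤ; and if M has order 6, SL_2(ℤ)/G ≅ ℤ/2ℤ. -/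
open Matrix

namespace NormalClosurePaper

section Helpers

open ModularGroup UpperHalfPlane
open scoped MatrixGroups

/-- The polynomial expressing the abelianization `SL(2, ℤ) → ℤ/12ℤ` in terms of matrix entries. -/
def abelianizationPoly {R : Type*} [CommRing R] (a b c d : R) : R :=
  (1 - c ^ 2) * (b * d + 3 * (c - 1) * d + c + 3) + c * (a + d - 3)

/-- If `abelianizationPoly` over `ℤ/nℤ` is compatible with left multiplication by `S` and `T`,
then it defines a character of `SL(2, ℤ)`. -/
lemma exists_character (n : ℕ)
    (hS : ∀ a b c d : ZMod n, a * d - b * c = 1 →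
      abelianizationPoly (-c) (-d) a b = -3 + abelianizationPoly a b c d)
    (hT : ∀ a b c d : ZMod n, a * d - b * c = 1 →
      abelianizationPoly (a + c) (b + d) c d = 1 + abelianizationPoly a b c d) :
    ∃ φ : SL(2, ℤ) →* Multiplicative (ZMod n),
      φ S = Multiplicative.ofAdd (-3) ∧ φ T = Multiplicative.ofAdd 1 := by
  let f (g : SL(2, ℤ)) : ZMod n := abelianizationPoly (g 0 0 : ZMod n) (g 0 1) (g 1 0) (g 1 1)
  have hdet (g : SL(2, ℤ)) : (g 0 0 * g 1 1 - g 0 1 * g 1 0 : ZMod n) = 1 := by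
    have h := g.det_coe
    rw [Matrix.det_fin_two] at h
    exact_mod_cast congrArg (Int.cast : ℤ → ZMod n) h
  have hfS (g : SL(2, ℤ)) : f (S * g) = -3 + f g := by
    rw [← hS _ _ _ _ (hdet g)]
    simp [f, Matrix.mul_apply, Fin.sum_univ_two]
  have hfT (g : SL(2, ℤ)) : f (T * g) = 1 + f g := by
    rw [← hT _ _ _ _ (hdet g)]
    simp [f, Matrix.mul_apply, Fin.sum_univ_two]
  have hf1 : f 1 = 0 := by simp [f, abelianizationPoly]
  have hS1 : f S = -3 := by simpa [hf1] using hfS 1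
  have hT1 : f T = 1 := by simpa [hf1] using hfT 1
  have hmul (x y : SL(2, ℤ)) : f (x * y) = f x + f y := by
    have hx : x ∈ Subgroup.closure {S, T} := by simp [SpecialLinearGroup.SL2Z_generators]
    induction hx using Subgroup.closure_induction generalizing y with
    | mem x hx =>
      rcases hx with rfl | rfl
      · rw [hfS, hS1]
      · rw [hfT, hT1]
    | one => simp [hf1]
    | mul x x' _ _ hx hx' => rw [mul_assoc, hx, hx', hx, add_assoc]
    | inv x _ hx =>
      have h₁ := hx (x⁻¹ * y)
      have h₂ := hx x⁻¹
      rw [mul_inv_cancel_left] at h₁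
      rw [mul_inv_cancel, hf1] at h₂
      linear_combination h₂ - h₁
  refine ⟨MonoidHom.mk' (fun g => Multiplicative.ofAdd (f g)) fun x y => ?_, ?_, ?_⟩
  · rw [hmul, ofAdd_add]
  · simp [hS1]
  · simp [hT1]

/-- A normal subgroup of `SL(2, ℤ)` modulo which `S` is a power of `T` and `T` has order `n`
has quotient `ℤ/nℤ`. -/
lemma nonempty_quotient_mulEquiv_zmod {N : Subgroup SL(2, ℤ)} [N.Normal] {n : ℕ}
    (φ : SL(2, ℤ) →* Multiplicative (ZMod n)) (hN : N ≤ φ.ker)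
    (hφ : φ T = Multiplicative.ofAdd 1) (hT : T ^ n ∈ N)
    (hS : (QuotientGroup.mk' N) S ∈ Subgroup.zpowers ((QuotientGroup.mk' N) T)) :
    Nonempty ((SL(2, ℤ) ⧸ N) ≃* Multiplicative (ZMod n)) := by
  have hgen (g : SL(2, ℤ)) : ∃ k : ℤ, (QuotientGroup.mk' N T) ^ k = QuotientGroup.mk' N g := by
    have h : Subgroup.closure {S, T} ≤
        (Subgroup.zpowers (QuotientGroup.mk' N T)).comap (QuotientGroup.mk' N) := by
      rw [Subgroup.closure_le]
      rintro x (rfl | rfl)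
      · exact hS
      · exact Subgroup.mem_zpowers (QuotientGroup.mk' N T)
    rw [SpecialLinearGroup.SL2Z_generators] at h
    exact h (Subgroup.mem_top g)
  have hpow (k : ℤ) : φ (T ^ k) = Multiplicative.ofAdd (k : ZMod n) := by
    rw [map_zpow, hφ, ← ofAdd_zsmul, zsmul_one]
  refine ⟨MulEquiv.ofBijective (QuotientGroup.lift N φ hN) ⟨?_, ?_⟩⟩
  · rw [injective_iff_map_eq_one]
    intro q hq
    obtain ⟨g, rfl⟩ := QuotientGroup.mk'_surjective N q
    obtain ⟨k, hk⟩ := hgen g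
    rw [← hk, ← map_zpow] at hq ⊢
    have hk0 : (k : ZMod n) = 0 := by
      have h := hq
      rw [QuotientGroup.mk'_apply, QuotientGroup.lift_mk, hpow] at h
      exact h
    obtain ⟨m, rfl⟩ := (ZMod.intCast_zmod_eq_zero_iff_dvd k n).mp hk0
    rw [← MonoidHom.mem_ker, QuotientGroup.ker_mk', _root_.zpow_mul, zpow_natCast]
    exact N.zpow_mem hT m
  · intro z
    obtain ⟨k, hk⟩ := ZMod.intCast_surjective z.toAdd
    exact ⟨QuotientGroup.mk' N (T ^ k), by
      rw [QuotientGroup.mk'_apply, QuotientGroup.lift_mk, hpow, hk]; rfl⟩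

lemma nonempty_quotient_normalClosure_S :
    Nonempty ((SL(2, ℤ) ⧸ Subgroup.normalClosure {S}) ≃* Multiplicative (ZMod 3)) := by
  obtain ⟨φ, hS, hT⟩ := exists_character 3 (by unfold abelianizationPoly; decide)
    (by unfold abelianizationPoly; decide)
  have hmem : S ∈ Subgroup.normalClosure {S} := Subgroup.subset_normalClosure rfl
  have hq : QuotientGroup.mk' (Subgroup.normalClosure {S}) S = 1 := by
    rwa [← MonoidHom.mem_ker, QuotientGroup.ker_mk']
  refine nonempty_quotient_mulEquiv_zmod φ (Subgroup.normalClosure_le_normal ?_) hT ?_ ?_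
  · rw [Set.singleton_subset_iff, SetLike.mem_coe, MonoidHom.mem_ker, hS]
    decide
  · have hrel : (S * T) ^ 3 = S ^ 2 := by decide
    have h := congrArg (QuotientGroup.mk' (Subgroup.normalClosure {S})) hrel
    rw [← QuotientGroup.ker_mk' (Subgroup.normalClosure {S}), MonoidHom.mem_ker]
    simpa only [map_pow, map_mul, hq, one_mul, one_pow] using h
  · rw [hq]
    exact one_mem _

lemma nonempty_quotient_normalClosure_T_inv_mul_S :
    Nonempty ((SL(2, ℤ) ⧸ Subgroup.normalClosure {T⁻¹ * S}) ≃* Multiplicative (ZMod 4)) := by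
  obtain ⟨φ, hS, hT⟩ := exists_character 4 (by unfold abelianizationPoly; decide)
    (by unfold abelianizationPoly; decide)
  have hmem : T⁻¹ * S ∈ Subgroup.normalClosure {T⁻¹ * S} := Subgroup.subset_normalClosure rfl
  have hq : QuotientGroup.mk' (Subgroup.normalClosure {T⁻¹ * S}) S =
      QuotientGroup.mk' (Subgroup.normalClosure {T⁻¹ * S}) T := by
    rwa [← QuotientGroup.ker_mk' (Subgroup.normalClosure {T⁻¹ * S}), MonoidHom.mem_ker, map_mul,
      map_inv, inv_mul_eq_one, eq_comm] at hmem
  refine nonempty_quotient_mulEquiv_zmod φ (Subgroup.normalClosure_le_normal ?_) hT ?_ ?_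
  · rw [Set.singleton_subset_iff, SetLike.mem_coe, MonoidHom.mem_ker, map_mul, map_inv, hS, hT]
    decide
  · have hrel : S ^ 4 = 1 := by decide
    rw [← QuotientGroup.ker_mk' (Subgroup.normalClosure {T⁻¹ * S}), MonoidHom.mem_ker, map_pow,
      ← hq, ← map_pow, hrel, map_one]
  · rw [hq]
    exact Subgroup.mem_zpowers _

lemma nonempty_quotient_normalClosure_S_mul_T :
    Nonempty ((SL(2, ℤ) ⧸ Subgroup.normalClosure {S * T}) ≃* Multiplicative (ZMod 2)) := by
  obtain ⟨φ, hS, hT⟩ := exists_character 2 (by unfold abelianizationPoly; decide)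
    (by unfold abelianizationPoly; decide)
  have hmem : S * T ∈ Subgroup.normalClosure {S * T} := Subgroup.subset_normalClosure rfl
  have hq : QuotientGroup.mk' (Subgroup.normalClosure {S * T}) S *
      QuotientGroup.mk' (Subgroup.normalClosure {S * T}) T = 1 := by
    rwa [← map_mul, ← MonoidHom.mem_ker, QuotientGroup.ker_mk']
  refine nonempty_quotient_mulEquiv_zmod φ (Subgroup.normalClosure_le_normal ?_) hT ?_ ?_
  · rw [Set.singleton_subset_iff, SetLike.mem_coe, MonoidHom.mem_ker, map_mul, hS, hT]
    decide
  · have hrel : (S * T) ^ 3 = S ^ 2 := by decide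
    have h := congrArg (QuotientGroup.mk' (Subgroup.normalClosure {S * T})) hrel
    rw [map_pow, map_mul, hq, one_pow, map_pow, mul_eq_one_iff_eq_inv.mp hq, inv_pow, eq_comm,
      inv_eq_one] at h
    rwa [← QuotientGroup.ker_mk' (Subgroup.normalClosure {S * T}), MonoidHom.mem_ker, map_pow]
  · rw [mul_eq_one_iff_eq_inv.mp hq]
    exact inv_mem (Subgroup.mem_zpowers _)

lemma det_entries (M : SL(2, ℤ)) : M 0 0 * M 1 1 - M 0 1 * M 1 0 = 1 := by
  rw [← Matrix.det_fin_two, M.det_coe]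

/-- An integral matrix of determinant one and trace of absolute value less than two is conjugate
into the stabilizer of `I` or of `ρ`. -/
lemma exists_isConj_mem_of_trace_sq_lt_four {M : SL(2, ℤ)}
    (hM : (M 0 0 + M 1 1) ^ 2 < 4) :
    ∃ w ∈ ({1, -1, S, -S, S * T, -(S * T), T⁻¹ * S, -(T⁻¹ * S)} : Finset SL(2, ℤ)),
      IsConj M w := by
  obtain ⟨z, hz⟩ : ∃ z : ℍ, M • z = z := by
    have hdet := det_entries M
    have hpos : 0 < (SpecialLinearGroup.mapGL ℝ M).val.det := by
      rw [← Matrix.GeneralLinearGroup.val_det_apply, SpecialLinearGroup.det_mapGL, Units.val_one]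
      exact one_pos
    have hell : (SpecialLinearGroup.mapGL ℝ M).IsElliptic := by
      have h : ((M 0 0 + M 1 1) ^ 2 - 4 * (M 0 0 * M 1 1 - M 0 1 * M 1 0) : ℝ) < 0 := by
        exact_mod_cast (by rw [hdet]; linarith :
          (M 0 0 + M 1 1) ^ 2 - 4 * (M 0 0 * M 1 1 - M 0 1 * M 1 0) < 0)
      simpa [Matrix.GeneralLinearGroup.IsElliptic, Matrix.IsElliptic, Matrix.discr_fin_two,
        Matrix.trace_fin_two, Matrix.det_fin_two] using h
    exact ⟨fixedPt _ hell, (gl_smul_eq_self_iff_eq_fixedPt hpos hell).mpr rfl⟩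
  obtain ⟨g, hg⟩ := exists_smul_mem_fd z
  have hfix : (g * M * g⁻¹) • g • z = g • z := by simp [mul_smul, hz]
  have hconj : IsConj M (g * M * g⁻¹) := isConj_iff.mpr ⟨g, rfl⟩
  by_cases hI : g • z = UpperHalfPlane.I
  · rw [hI, stabilizer_I] at hfix
    exact ⟨_, Finset.mem_of_subset (by decide) hfix, hconj⟩
  by_cases hρ : g • z = UpperHalfPlane.ρ
  · rw [hρ, stabilizer_ρ] at hfix
    exact ⟨_, Finset.mem_of_subset (by decide) hfix, hconj⟩
  by_cases hρ' : g • z = (1 : ℝ) +ᵥ UpperHalfPlane.ρ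
  · rw [hρ', ← modular_T_smul, ← inv_smul_eq_iff, ← mul_smul, ← mul_smul, stabilizer_ρ] at hfix
    refine ⟨_, Finset.mem_of_subset ?_ hfix, hconj.trans (isConj_iff.mpr ⟨T⁻¹, by group⟩)⟩
    decide
  · rcases stabilizer_of_ne hg hfix hI hρ hρ' with h | h
    · exact ⟨1, by decide, h ▸ hconj⟩
    · exact ⟨-1, by decide, h ▸ hconj⟩

lemma normalClosure_singleton_eq_of_isConj {G : Type*} [Group G] {x y : G} (h : IsConj x y) :
    Subgroup.normalClosure {x} = Subgroup.normalClosure {y} := by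
  simp only [Subgroup.normalClosure, Group.conjugatesOfSet, Set.biUnion_singleton,
    isConj_iff_conjugatesOf_eq.mp h]

lemma normalClosure_singleton_inv {G : Type*} [Group G] (x : G) :
    Subgroup.normalClosure {x⁻¹} = Subgroup.normalClosure {x} := by
  have h (y : G) : Subgroup.normalClosure {y⁻¹} ≤ Subgroup.normalClosure {y} :=
    Subgroup.normalClosure_le_normal <| by
      simpa using Subgroup.subset_normalClosure (Set.mem_singleton y)
  exact (h x).antisymm (by simpa using h x⁻¹)

lemma inv_entries (M : SL(2, ℤ)) :
    M⁻¹ 0 0 = M 1 1 ∧ M⁻¹ 0 1 = -M 0 1 ∧ M⁻¹ 1 0 = -M 1 0 ∧ M⁻¹ 1 1 = M 0 0 := by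
  simp [Matrix.SpecialLinearGroup.coe_inv, Matrix.adjugate_fin_two]

/-- A diagonal element of `SL(2, ℤ)` is `1` or `-1`. -/
lemma eq_one_or_eq_neg_one_of_diagonal {M : SL(2, ℤ)} (hb : M 0 1 = 0) (hc : M 1 0 = 0) :
    M = 1 ∨ M = -1 := by
  have hdet := det_entries M
  rw [hb, zero_mul, sub_zero] at hdet
  rcases Int.mul_eq_one_iff_eq_one_or_neg_one.mp hdet with ⟨ha, hd⟩ | ⟨ha, hd⟩
  · left
    ext i j
    fin_cases i <;> fin_cases j <;> simp [ha, hb, hc, hd]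
  · right
    ext i j
    fin_cases i <;> fin_cases j <;> simp [ha, hb, hc, hd]

lemma eq_one_or_eq_neg_one_of_sq_eq_one {M : SL(2, ℤ)} (h : M ^ 2 = 1) : M = 1 ∨ M = -1 := by
  have hinv : M = M⁻¹ := by rw [eq_inv_iff_mul_eq_one, ← sq, h]
  obtain ⟨-, hb, hc, -⟩ := inv_entries M
  rw [← hinv] at hb hc
  exact eq_one_or_eq_neg_one_of_diagonal (by omega) (by omega)

lemma trace_sq_lt_four_of_sq_eq_neg_one {M : SL(2, ℤ)} (h : M ^ 2 = -1) :
    (M 0 0 + M 1 1) ^ 2 < 4 := by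
  have hinv : M = -M⁻¹ := by
    rw [← mul_left_inj M, neg_mul, inv_mul_cancel, ← sq, h]
  have ha : M 0 0 = -M⁻¹ 0 0 := congrArg (fun g : SL(2, ℤ) => g 0 0) hinv
  rw [(inv_entries M).1] at ha
  rw [ha, neg_add_cancel]
  norm_num

lemma trace_sq_lt_four_of_cube {M : SL(2, ℤ)} (h2 : M ^ 2 ≠ 1) (h3 : M ^ 3 = 1 ∨ M ^ 3 = -1) :
    (M 0 0 + M 1 1) ^ 2 < 4 := by
  have hsq : M ^ 2 = M⁻¹ ∨ M ^ 2 = -M⁻¹ := by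
    refine h3.imp (fun h => ?_) (fun h => ?_)
    · rw [← mul_left_inj M, inv_mul_cancel, ← pow_succ, h]
    · rw [← mul_left_inj M, neg_mul, inv_mul_cancel, ← pow_succ, h]
  obtain ⟨-, hb, hc, -⟩ := inv_entries M
  have hb2 : (M ^ 2) 0 1 = M 0 1 * (M 0 0 + M 1 1) := by
    simp [sq, Matrix.mul_apply, Fin.sum_univ_two]
    ring
  have hc2 : (M ^ 2) 1 0 = M 1 0 * (M 0 0 + M 1 1) := by
    simp [sq, Matrix.mul_apply, Fin.sum_univ_two]
    ring
  have key (x : ℤ) (hx : x ≠ 0) (h : x * (M 0 0 + M 1 1) = -x ∨ x * (M 0 0 + M 1 1) = x) :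
      (M 0 0 + M 1 1) ^ 2 < 4 := by
    have ht : M 0 0 + M 1 1 = -1 ∨ M 0 0 + M 1 1 = 1 :=
      h.imp (fun h => mul_left_cancel₀ hx (by rw [h, mul_neg_one]))
        (fun h => mul_left_cancel₀ hx (by rw [h, mul_one]))
    rcases ht with ht | ht <;> rw [ht] <;> norm_num
  by_cases hb0 : M 0 1 = 0
  · by_cases hc0 : M 1 0 = 0
    · rcases eq_one_or_eq_neg_one_of_diagonal hb0 hc0 with rfl | rfl <;> simp at h2
    · refine key _ hc0 (hsq.imp (fun h => ?_) (fun h => ?_))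
      · rw [← hc2, h, hc]
      · rw [← hc2, h, Matrix.SpecialLinearGroup.coe_neg, Matrix.neg_apply, hc, neg_neg]
  · refine key _ hb0 (hsq.imp (fun h => ?_) (fun h => ?_))
    · rw [← hb2, h, hb]
    · rw [← hb2, h, Matrix.SpecialLinearGroup.coe_neg, Matrix.neg_apply, hb, neg_neg]

lemma normalClosure_neg_one_eq_center :
    Subgroup.normalClosure {(-1 : SL(2, ℤ))} = Subgroup.center SL(2, ℤ) := by
  apply le_antisymm
  · refine Subgroup.normalClosure_le_normal ?_
    simp [Subgroup.mem_center_iff]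
  · intro M hM
    have h := Subgroup.mem_center_iff.mp hM
    have hT := congrArg (fun g : SL(2, ℤ) => g 0 0) (h T)
    have hS := congrArg (fun g : SL(2, ℤ) => g 0 0) (h S)
    simp [Matrix.mul_apply, Fin.sum_univ_two] at hT hS
    have hneg : (-1 : SL(2, ℤ)) ∈ Subgroup.normalClosure {(-1 : SL(2, ℤ))} :=
      Subgroup.subset_normalClosure rfl
    rcases eq_one_or_eq_neg_one_of_diagonal (by omega) hT with rfl | rfl
    · exact one_mem _
    · exact hneg

lemma eq_neg_one_of_orderOf_eq_two {M : SL(2, ℤ)} (h : orderOf M = 2) : M = -1 := by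
  obtain ⟨h2, h1⟩ := orderOf_eq_prime_iff.mp h
  exact (eq_one_or_eq_neg_one_of_sq_eq_one h2).resolve_left h1

lemma normalClosure_eq_of_orderOf_eq_three {M : SL(2, ℤ)} (h : orderOf M = 3) :
    Subgroup.normalClosure {M} = Subgroup.normalClosure {T⁻¹ * S} := by
  have h2 : M ^ 2 ≠ 1 := pow_ne_one_of_lt_orderOf two_ne_zero (by omega)
  have h3 : M ^ 3 = 1 := h ▸ pow_orderOf_eq_one M
  obtain ⟨w, hw, hMw⟩ :=
    exists_isConj_mem_of_trace_sq_lt_four (trace_sq_lt_four_of_cube h2 (.inl h3))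
  have hw' : w ^ 3 = 1 ∧ w ^ 2 ≠ 1 := by
    obtain ⟨g, rfl⟩ := isConj_iff.mp hMw
    simp [conj_pow, h2, h3]
  have hcases : w = T⁻¹ * S ∨ w = (T⁻¹ * S)⁻¹ := by
    clear hMw
    revert w
    decide
  rw [normalClosure_singleton_eq_of_isConj hMw]
  rcases hcases with rfl | rfl
  · rfl
  · exact normalClosure_singleton_inv _

lemma normalClosure_eq_of_orderOf_eq_four {M : SL(2, ℤ)} (h : orderOf M = 4) :
    Subgroup.normalClosure {M} = Subgroup.normalClosure {S} := by
  have h2 : M ^ 2 = -1 :=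
    eq_neg_one_of_orderOf_eq_two (by rw [orderOf_pow_of_dvd (by norm_num) (by norm_num [h]), h])
  obtain ⟨w, hw, hMw⟩ :=
    exists_isConj_mem_of_trace_sq_lt_four (trace_sq_lt_four_of_sq_eq_neg_one h2)
  have hw' : w ^ 2 = -1 := by
    obtain ⟨g, rfl⟩ := isConj_iff.mp hMw
    simp [conj_pow, h2]
  have hcases : w = S ∨ w = S⁻¹ := by
    clear hMw
    revert w
    decide
  rw [normalClosure_singleton_eq_of_isConj hMw]
  rcases hcases with rfl | rfl
  · rfl
  · exact normalClosure_singleton_inv _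

lemma normalClosure_eq_of_orderOf_eq_six {M : SL(2, ℤ)} (h : orderOf M = 6) :
    Subgroup.normalClosure {M} = Subgroup.normalClosure {S * T} := by
  have h2 : M ^ 2 ≠ 1 := pow_ne_one_of_lt_orderOf two_ne_zero (by omega)
  have h3 : M ^ 3 = -1 :=
    eq_neg_one_of_orderOf_eq_two (by rw [orderOf_pow_of_dvd (by norm_num) (by norm_num [h]), h])
  obtain ⟨w, hw, hMw⟩ :=
    exists_isConj_mem_of_trace_sq_lt_four (trace_sq_lt_four_of_cube h2 (.inr h3))
  have hw' : w ^ 3 = -1 ∧ w ^ 2 ≠ 1 := by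
    obtain ⟨g, rfl⟩ := isConj_iff.mp hMw
    simp [conj_pow, h2, h3]
  have hcases : w = S * T ∨ w = (S * T)⁻¹ := by
    clear hMw
    revert w
    decide
  rw [normalClosure_singleton_eq_of_isConj hMw]
  rcases hcases with rfl | rfl
  · rfl
  · exact normalClosure_singleton_inv _

end Helpers

/-- For a finite order `M ∈ SL_2(ℤ)` with normal closure `G`, the quotient `SL_2(ℤ)/G` is
`PSL_2(ℤ)`, `ℤ/4ℤ`, `ℤ/3ℤ`, `ℤ/2ℤ` according as `M` has order `2`, `3`, `4`, `6`. -/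
theorem quotient_by_normalClosure_of_finite_order_SL2
    (M : Matrix.SpecialLinearGroup (Fin 2) ℤ) (hM : IsOfFinOrder M) :
    (orderOf M = 2 → Nonempty
      ((Matrix.SpecialLinearGroup (Fin 2) ℤ ⧸ Subgroup.normalClosure {M}) ≃*
        Matrix.ProjectiveSpecialLinearGroup (Fin 2) ℤ)) ∧
    (orderOf M = 3 → Nonempty
      ((Matrix.SpecialLinearGroup (Fin 2) ℤ ⧸ Subgroup.normalClosure {M}) ≃*
        Multiplicative (ZMod 4))) ∧
    (orderOf M = 4 → Nonempty
      ((Matrix.SpecialLinearGroup (Fin 2) ℤ ⧸ Subgroup.normalClosure {M}) ≃*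
        Multiplicative (ZMod 3))) ∧
    (orderOf M = 6 → Nonempty
      ((Matrix.SpecialLinearGroup (Fin 2) ℤ ⧸ Subgroup.normalClosure {M}) ≃*
        Multiplicative (ZMod 2))) := by
  refine ⟨fun h => ?_, fun h => ?_, fun h => ?_, fun h => ?_⟩
  · rw [eq_neg_one_of_orderOf_eq_two h]
    exact ⟨QuotientGroup.quotientMulEquivOfEq normalClosure_neg_one_eq_center⟩
  · exact nonempty_quotient_normalClosure_T_inv_mul_S.map
      (QuotientGroup.quotientMulEquivOfEq (normalClosure_eq_of_orderOf_eq_three h)).trans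
  · exact nonempty_quotient_normalClosure_S.map
      (QuotientGroup.quotientMulEquivOfEq (normalClosure_eq_of_orderOf_eq_four h)).trans
  · exact nonempty_quotient_normalClosure_S_mul_T.map
      (QuotientGroup.quotientMulEquivOfEq (normalClosure_eq_of_orderOf_eq_six h)).trans

end NormalClosurePaper
end

section
/- The normal closure in GL_2(ℤ) of the diagonal matrix diag(−1, 1) equals the level 2 subgroup of GL_2(ℤ), i.e., the kernel of the reduction homomorphism GL_2(ℤ) → GL_2(ℤ/2ℤ). -/
open Matrix

namespace NormalClosurePaper

/-- The matrix `diag(-1, 1)` as an element of `GL_2(ℤ)`. -/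
def diagNegOne : GL (Fin 2) ℤ where
  val := Matrix.diagonal ![-1, 1]
  inv := Matrix.diagonal ![-1, 1]
  val_inv := by
    ext i j
    fin_cases i <;> fin_cases j <;>
      simp [Matrix.mul_apply, Fin.sum_univ_two, Matrix.diagonal, Matrix.one_apply]
  inv_val := by
    ext i j
    fin_cases i <;> fin_cases j <;>
      simp [Matrix.mul_apply, Fin.sum_univ_two, Matrix.diagonal, Matrix.one_apply]

/-- The elementary matrix `!![1, k; 0, 1]` as an element of `GL_2(ℤ)`. -/
def upper (k : ℤ) : GL (Fin 2) ℤ where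
  val := !![1, k; 0, 1]
  inv := !![1, -k; 0, 1]
  val_inv := by simp [Matrix.one_fin_two]
  inv_val := by simp [Matrix.one_fin_two]

/-- The elementary matrix `!![1, 0; k, 1]` as an element of `GL_2(ℤ)`. -/
def lower (k : ℤ) : GL (Fin 2) ℤ where
  val := !![1, 0; k, 1]
  inv := !![1, 0; -k, 1]
  val_inv := by simp [Matrix.one_fin_two]
  inv_val := by simp [Matrix.one_fin_two]

/-- The permutation matrix `!![0, 1; 1, 0]` as an element of `GL_2(ℤ)`. -/
def swapGL : GL (Fin 2) ℤ where
  val := !![0, 1; 1, 0]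
  inv := !![0, 1; 1, 0]
  val_inv := by simp [Matrix.one_fin_two]
  inv_val := by simp [Matrix.one_fin_two]

lemma val_upper (k : ℤ) : (upper k).val = !![1, k; 0, 1] := rfl

lemma val_lower (k : ℤ) : (lower k).val = !![1, 0; k, 1] := rfl

lemma val_diagNegOne : diagNegOne.val = !![-1, 0; 0, 1] := by
  ext i j
  fin_cases i <;> fin_cases j <;> rfl

lemma val_swapGL_conj : (swapGL * diagNegOne * swapGL⁻¹).val = !![1, 0; 0, -1] := by
  change !![0, 1; 1, 0] * diagNegOne.val * !![0, 1; 1, 0] = _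
  simp [val_diagNegOne]

lemma diagNegOne_mem : diagNegOne ∈ Subgroup.normalClosure {diagNegOne} :=
  Subgroup.subset_normalClosure rfl

lemma conj_diagNegOne_mem (g : GL (Fin 2) ℤ) :
    g * diagNegOne * g⁻¹ ∈ Subgroup.normalClosure {diagNegOne} :=
  Subgroup.normalClosure_normal.conj_mem _ diagNegOne_mem g

lemma upper_two_mul_mem (k : ℤ) : upper (2 * k) ∈ Subgroup.normalClosure {diagNegOne} := by
  have h : upper (2 * k) = upper k * diagNegOne * (upper k)⁻¹ * diagNegOne := by
    apply Units.ext
    change !![1, 2 * k; 0, 1] = !![1, k; 0, 1] * diagNegOne.val * !![1, -k; 0, 1] * diagNegOne.val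
    simp [val_diagNegOne, two_mul]
  exact h ▸ mul_mem (conj_diagNegOne_mem _) diagNegOne_mem

lemma lower_two_mul_mem (k : ℤ) : lower (2 * k) ∈ Subgroup.normalClosure {diagNegOne} := by
  have h : lower (2 * k) = lower k * diagNegOne * (lower k)⁻¹ * diagNegOne := by
    apply Units.ext
    change !![1, 0; 2 * k, 1] = !![1, 0; k, 1] * diagNegOne.val * !![1, 0; -k, 1] * diagNegOne.val
    simp [val_diagNegOne, two_mul]
  exact h ▸ mul_mem (conj_diagNegOne_mem _) diagNegOne_mem

lemma mem_GGamma_two_two_iff (g : GL (Fin 2) ℤ) :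
    g ∈ GGamma 2 2 ↔
      g.val 0 0 % 2 = 1 ∧ g.val 0 1 % 2 = 0 ∧ g.val 1 0 % 2 = 0 ∧ g.val 1 1 % 2 = 1 := by
  have key : ∀ a b : ℤ, ((a : ZMod 2) = (b : ZMod 2)) ↔ a % 2 = b % 2 := fun a b =>
    ZMod.intCast_eq_intCast_iff' a b 2
  have h1 := fun a => key a 1
  have h0 := fun a => key a 0
  norm_num at h1 h0
  rw [GGamma, MonoidHom.mem_ker, Units.ext_iff, ← Matrix.ext_iff]
  simp [redGL, Fin.forall_fin_two, h1, h0, and_assoc]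

lemma normalClosure_diagNegOne_le : Subgroup.normalClosure {diagNegOne} ≤ GGamma 2 2 := by
  have : (GGamma 2 2).Normal := MonoidHom.normal_ker _
  apply Subgroup.normalClosure_le_normal
  simp [mem_GGamma_two_two_iff, val_diagNegOne]

lemma mem_normalClosure_of_lower_left_eq_zero {g : GL (Fin 2) ℤ} (hg : g ∈ GGamma 2 2)
    (hc : g.val 1 0 = 0) : g ∈ Subgroup.normalClosure {diagNegOne} := by
  obtain ⟨-, hb, -, -⟩ := (mem_GGamma_two_two_iff g).1 hg
  have hdet : IsUnit (g.val 0 0 * g.val 1 1) := by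
    have h := (Matrix.isUnit_iff_isUnit_det g.val).1 g.isUnit
    rwa [Matrix.det_fin_two, hc, mul_zero, sub_zero] at h
  obtain ⟨ha, hd⟩ := IsUnit.mul_iff.1 hdet
  rw [Int.isUnit_iff] at ha hd
  obtain ⟨k, hk⟩ := Int.dvd_of_emod_eq_zero hb
  have hval : g.val = !![g.val 0 0, 2 * k; 0, g.val 1 1] := by
    rw [← hk, ← hc]; exact Matrix.eta_fin_two _
  have hA := diagNegOne_mem
  have hB := conj_diagNegOne_mem swapGL
  have hmem : ∀ u v : GL (Fin 2) ℤ, u ∈ Subgroup.normalClosure {diagNegOne} →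
      v ∈ Subgroup.normalClosure {diagNegOne} →
      ∀ l : ℤ, g.val = u.val * (upper (2 * l)).val * v.val →
      g ∈ Subgroup.normalClosure {diagNegOne} := by
    intro u v hu hv l h
    have : g = u * upper (2 * l) * v := Units.ext h
    exact this ▸ mul_mem (mul_mem hu (upper_two_mul_mem l)) hv
  rcases ha with ha | ha <;> rcases hd with hd | hd <;> rw [ha, hd] at hval
  · exact hmem 1 1 (one_mem _) (one_mem _) k (by simp [hval, val_upper])
  · exact hmem 1 _ (one_mem _) hB (-k) (by
      rw [hval, val_swapGL_conj]; simp [val_upper])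
  · exact hmem _ 1 hA (one_mem _) (-k) (by simp [hval, val_upper, val_diagNegOne])
  · exact hmem _ _ hA hB k (by
      rw [hval, val_swapGL_conj]; simp [val_upper, val_diagNegOne])

lemma GGamma_two_two_le : GGamma 2 2 ≤ Subgroup.normalClosure {diagNegOne} := by
  intro g hg
  induction hn : (g.val 0 0).natAbs + (g.val 1 0).natAbs using Nat.strong_induction_on
    generalizing g with
  | _ n ih =>
    by_cases hc : g.val 1 0 = 0
    · exact mem_normalClosure_of_lower_left_eq_zero hg hc
    obtain ⟨ha, -, hc', -⟩ := (mem_GGamma_two_two_iff g).1 hg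
    have step : ∀ u ∈ Subgroup.normalClosure {diagNegOne},
        ((u * g).val 0 0).natAbs + ((u * g).val 1 0).natAbs < n →
        g ∈ Subgroup.normalClosure {diagNegOne} := fun u hu hlt =>
      (Subgroup.mul_mem_cancel_left _ hu).1
        (ih _ hlt (mul_mem (normalClosure_diagNegOne_le hu) hg) rfl)
    have hU := fun k : ℤ => step _ (upper_two_mul_mem k)
    have hL := fun k : ℤ => step _ (lower_two_mul_mem k)
    simp only [Units.val_mul, val_upper, val_lower, Matrix.mul_apply, Fin.sum_univ_two,
      Matrix.of_apply, Matrix.cons_val_zero, Matrix.cons_val_one, one_mul, zero_mul, zero_add,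
      add_zero] at hU hL
    have hU1 := hU 1
    have hU2 := hU (-1)
    have hL1 := hL 1
    have hL2 := hL (-1)
    by_contra hmem
    simp only [hmem, imp_false] at hU1 hU2 hL1 hL2
    omega

/-- The normal closure in `GL_2(ℤ)` of `diag(-1, 1)` is the level 2 subgroup of `GL_2(ℤ)`,
the kernel of the reduction `GL_2(ℤ) → GL_2(ℤ/2ℤ)`. -/
theorem normalClosure_diagNegOne_eq_level_two :
    Subgroup.normalClosure {diagNegOne} = GGamma 2 2 := by
  exact le_antisymm normalClosure_diagNegOne_le GGamma_two_two_le

end NormalClosurePaper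
end
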